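/- Let A be a finite alphabet, let (Σ_A, σ) be a subshift of finite type, let ρ: Σ_A → (0,∞) be a continuous function, and let φ be the suspension flow of (σ, ρ) on the suspension space Λ. Then for every real number c with 0 ≤ c < h_top(φ) there exists a compact φ-invariant subset Γ_c ⊆ Λ such that: (1) the flow φ restricted to Γ_c is strictly ergodic, and (2) h_top(φ|_{Γ_c}) = c. Moreover, denoting by μ_c the unique invariant measure of φ|_{Γ_c}, one has h_{μ_c}(φ) = c; in particular φ has entropy flexibility. -/

import Mathlib

/-!
The flow is rewritten as a suspension of a vertex shift with roof `r` bounded below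
(`EFP.exists_susp`), and a closed set of base points is built by hand with the wanted entropy.

*Levels.* Counting words by the time they take bounds the entropy of the flow from above
(`EFP.Susp.entropy_le`). Hence below the entropy some vertex `a` carries exponentially many loops
(`EFP.Susp.many_loops`), and one obtains a family `W` of loops at `a` of a common length, each of
duration at most `T`, with `exp (c₀ T) < #W` for some `c₀ > c` (`EFP.Susp.exists_lev`).

*Tower.* Among the concatenations of many words of `W`, only polynomially many types (multisets of
blocks) occur, so one type carries almost all of the exponential growth. Keeping a single type,
which contains every word of `W`, and thinning out gives a longer family whose cardinality is just
above `exp (c' T')`, for any prescribed smaller rate `c' < c₀` (`EFP.Lev.exists_step`). Iterating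
with rates decreasing to `c` gives a tower (`EFP.exists_tower`), and the base set is the set of
points that are concatenations of words of every level (`EFP.limSet`).

*Unique ergodicity and upper bound.* Words of one level are rearrangements of the same blocks, so
Birkhoff sums of a continuous function over them almost agree; Birkhoff averages are therefore
uniform on the limit set (`EFP.ub_limSet`), and so are the time averages of the flow over it
(`EFP.Susp.ueOn`). The limit set has at most `exp (c'' t)` words of duration `t`, up to a constant,
for every `c'' > c` (`EFP.tower_count`), so the topological entropy is at most `c`.

*Lower bound.* Every point of the limit set contains all words of every level, so an invariant set
over it contains at least `exp (c_k T_k)` orbit segments of duration `T_k`, and these are separated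
at a scale independent of `k` (`EFP.Susp.separates`). As time averages are uniform, the unique
invariant measure sees this growth, and its entropy is at least `c` (`EFP.le_measEntropy`).
Goodwyn's inequality (`EFP.measEntropy_le_topEntropyOn`) closes the chain
`c ≤ h_μ ≤ h_top ≤ c`. All of this holds on a minimal subset, which exists by Zorn's lemma
(`EFP.exists_minimal_set`), and which is then strictly ergodic.
-/

open Filter MeasureTheory Set Topology
open scoped ENNReal NNReal

attribute [local instance] PiCountable.metricSpace

namespace EF

/-! ### Topological entropy via separated sets -/

section Entropy

variable {M : Type*} [MetricSpace M]

/-- `Q` is an `(n,ε)`-separated set for `f`. -/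
def IsDynSep (f : M → M) (n : ℕ) (ε : ℝ) (Q : Set M) : Prop :=
  Q.Pairwise fun x y => ∃ j : ℕ, j ≤ n ∧ ε < dist (f^[j] x) (f^[j] y)

/-- Maximal cardinality of an `(n,ε)`-separated subset of `K`. -/
noncomputable def sepCount (f : M → M) (K : Set M) (n : ℕ) (ε : ℝ) : ℕ :=
  sSup {k : ℕ | ∃ Q : Finset M, ↑Q ⊆ K ∧ IsDynSep f n ε ↑Q ∧ Q.card = k}

/-- Topological entropy of `f` on the (not necessarily invariant) set `K`. -/
noncomputable def topEntropyOn (f : M → M) (K : Set M) : EReal :=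
  ⨆ (ε : ℝ) (_ : 0 < ε),
    Filter.atTop.limsup fun n : ℕ => ((Real.log (sepCount f K n ε) / n : ℝ) : EReal)

/-- Topological entropy of `f`. -/
noncomputable def topEntropy (f : M → M) : EReal :=
  topEntropyOn f Set.univ

end Entropy

/-! ### Measure-theoretic (Kolmogorov–Sinai) entropy -/

section MeasEntropy

variable {α : Type*} [MeasurableSpace α]

/-- A finite measurable partition of the whole space. -/
def IsMeasPartition (P : Finset (Set α)) : Prop :=
  (∀ p ∈ P, MeasurableSet p) ∧ ⋃₀ (↑P : Set (Set α)) = Set.univ ∧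
    (↑P : Set (Set α)).Pairwise Disjoint

/-- The function `x ↦ - x log x`. -/
noncomputable def negMulLog (x : ℝ) : ℝ := -(x * Real.log x)

/-- Information of the refinement `P ∨ f⁻¹ P ∨ ⋯ ∨ f⁻⁽ⁿ⁻¹⁾ P` with respect to `μ`. -/
noncomputable def refinedInfo (f : α → α) (μ : Measure α) (P : Finset (Set α)) (n : ℕ) : ℝ :=
  ∑ a : Fin n → {p // p ∈ P},
    negMulLog (μ (⋂ i : Fin n, f^[(i : ℕ)] ⁻¹' ((a i : Set α)))).toReal

/-- Entropy of `f` w.r.t. `μ` and the partition `P`. -/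
noncomputable def partEntropy (f : α → α) (μ : Measure α) (P : Finset (Set α)) : ℝ :=
  Filter.atTop.limsup fun n : ℕ => refinedInfo f μ P n / n

/-- Kolmogorov–Sinai entropy of `f` with respect to `μ`. -/
noncomputable def measEntropy (f : α → α) (μ : Measure α) : EReal :=
  ⨆ (P : Finset (Set α)) (_ : IsMeasPartition P), ((partEntropy f μ P : ℝ) : EReal)

end MeasEntropy

/-! ### Discrete-time dynamics -/

section Discrete

variable {M : Type*} [MetricSpace M]

/-- A set invariant under `f`. -/
def InvSet (f : M → M) (Λ : Set M) : Prop := f '' Λ = Λ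

/-- `f` is minimal on the invariant set `Λ`. -/
def MinimalOn (f : M → M) (Λ : Set M) : Prop :=
  ∀ K : Set M, K ⊆ Λ → K.Nonempty → IsClosed K → f '' K = K → K = Λ

variable [MeasurableSpace M]

/-- `f` is uniquely ergodic on `Λ`: there is exactly one invariant Borel probability
measure supported in `Λ`. -/
def UniquelyErgodicOn (f : M → M) (Λ : Set M) : Prop :=
  ∃! μ : Measure M, IsProbabilityMeasure μ ∧ MeasurePreserving f μ μ ∧ μ Λᶜ = 0

/-- `f` is strictly ergodic on `Λ`: minimal and uniquely ergodic. -/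
def StrictlyErgodicOn (f : M → M) (Λ : Set M) : Prop :=
  MinimalOn f Λ ∧ UniquelyErgodicOn f Λ

/-- Entropy flexibility of `f` on an invariant set `S`. -/
def EntropyFlexibleOn (f : M → M) (S : Set M) : Prop :=
  ∀ c : ℝ, 0 ≤ c → (c : EReal) < topEntropyOn f S →
    ∃ (μ : Measure M) (Λ : Set M), IsProbabilityMeasure μ ∧ Ergodic f μ ∧ μ Sᶜ = 0 ∧
      Λ ⊆ S ∧ IsCompact Λ ∧ f '' Λ = Λ ∧
      topEntropyOn f Λ = (c : EReal) ∧ measEntropy f μ = (c : EReal)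

/-- Entropy flexibility of `f` (on the whole space). -/
def EntropyFlexible (f : M → M) : Prop :=
  ∀ c : ℝ, 0 ≤ c → (c : EReal) < topEntropy f →
    ∃ (μ : Measure M) (Λ : Set M), IsProbabilityMeasure μ ∧ Ergodic f μ ∧
      IsCompact Λ ∧ f '' Λ = Λ ∧
      topEntropyOn f Λ = (c : EReal) ∧ measEntropy f μ = (c : EReal)

end Discrete

/-! ### Shadowing and expansiveness (discrete time) -/

section Shadowing

variable {M : Type*} [MetricSpace M]

/-- The shadowing property for a homeomorphism `f` (full orbits indexed by `ℤ`,
encoded via orbit functions `z` with `z (n+1) = f (z n)`). -/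
def ShadowingProperty (f : M → M) : Prop :=
  ∀ ε : ℝ, 0 < ε → ∃ δ : ℝ, 0 < δ ∧ ∀ x : ℤ → M,
    (∀ n : ℤ, dist (f (x n)) (x (n + 1)) ≤ δ) →
    ∃ z : ℤ → M, (∀ n : ℤ, z (n + 1) = f (z n)) ∧ ∀ n : ℤ, dist (z n) (x n) ≤ ε

/-- The shadowing property relative to an invariant set `Λ`. -/
def ShadowingOn (f : M → M) (Λ : Set M) : Prop :=
  ∀ ε : ℝ, 0 < ε → ∃ δ : ℝ, 0 < δ ∧ ∀ x : ℤ → M, (∀ n : ℤ, x n ∈ Λ) →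
    (∀ n : ℤ, dist (f (x n)) (x (n + 1)) ≤ δ) →
    ∃ z : ℤ → M, (∀ n : ℤ, z n ∈ Λ) ∧ (∀ n : ℤ, z (n + 1) = f (z n)) ∧
      ∀ n : ℤ, dist (z n) (x n) ≤ ε

/-- Expansiveness of a homeomorphism, phrased via full orbit functions. -/
def Expansive (f : M → M) : Prop :=
  ∃ e : ℝ, 0 < e ∧ ∀ z w : ℤ → M,
    (∀ n : ℤ, z (n + 1) = f (z n)) → (∀ n : ℤ, w (n + 1) = f (w n)) →
    (∀ n : ℤ, dist (z n) (w n) ≤ e) → z 0 = w 0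

/-- Topological transitivity of `f` on `Λ`. -/
def TransitiveOn (f : M → M) (Λ : Set M) : Prop :=
  ∀ U V : Set M, IsOpen U → IsOpen V → (U ∩ Λ).Nonempty → (V ∩ Λ).Nonempty →
    ∃ n : ℕ, 0 < n ∧ ((f^[n] '' (U ∩ Λ)) ∩ V).Nonempty

end Shadowing

/-! ### Continuous-time dynamics -/

section Flows

variable {M : Type*} [MetricSpace M]

/-- A set invariant under all time-`t` maps of the flow. -/
def FlowInvSet (φ : Flow ℝ M) (Λ : Set M) : Prop := ∀ t : ℝ, φ.toFun t '' Λ = Λ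

/-- Topological entropy of a flow on a set: entropy of its time-one map. -/
noncomputable def flowTopEntropyOn (φ : Flow ℝ M) (K : Set M) : EReal :=
  topEntropyOn (φ.toFun 1) K

/-- Topological entropy of a flow: the entropy of its time-one map. -/
noncomputable def flowTopEntropy (φ : Flow ℝ M) : EReal := topEntropy (φ.toFun 1)

/-- Minimality of a flow on `Λ`. -/
def FlowMinimalOn (φ : Flow ℝ M) (Λ : Set M) : Prop :=
  ∀ K : Set M, K ⊆ Λ → K.Nonempty → IsClosed K → (∀ t : ℝ, φ.toFun t '' K = K) → K = Λ

variable [MeasurableSpace M]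

/-- An invariant measure for a flow. -/
def FlowInvariant (φ : Flow ℝ M) (μ : Measure M) : Prop :=
  ∀ t : ℝ, MeasurePreserving (φ.toFun t) μ μ

/-- An ergodic measure for a flow. -/
def FlowErgodic (φ : Flow ℝ M) (μ : Measure M) : Prop :=
  FlowInvariant φ μ ∧
    ∀ s : Set M, MeasurableSet s → (∀ t : ℝ, φ.toFun t ⁻¹' s = s) → μ s = 0 ∨ μ s = 1

/-- Measure-theoretic entropy of a flow: entropy of the time-one map. -/
noncomputable def flowMeasEntropy (φ : Flow ℝ M) (μ : Measure M) : EReal :=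
  measEntropy (φ.toFun 1) μ

/-- Unique ergodicity of a flow on `Λ`. -/
def FlowUniquelyErgodicOn (φ : Flow ℝ M) (Λ : Set M) : Prop :=
  ∃! μ : Measure M, IsProbabilityMeasure μ ∧ FlowInvariant φ μ ∧ μ Λᶜ = 0

/-- Strict ergodicity of a flow on `Λ`. -/
def FlowStrictlyErgodicOn (φ : Flow ℝ M) (Λ : Set M) : Prop :=
  FlowMinimalOn φ Λ ∧ FlowUniquelyErgodicOn φ Λ

/-- Entropy flexibility for flows. -/
def FlowEntropyFlexible (φ : Flow ℝ M) : Prop :=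
  ∀ c : ℝ, 0 ≤ c → (c : EReal) < flowTopEntropy φ →
    ∃ (μ : Measure M) (Λ : Set M), IsProbabilityMeasure μ ∧ FlowErgodic φ μ ∧
      IsCompact Λ ∧ FlowInvSet φ Λ ∧
      flowTopEntropyOn φ Λ = (c : EReal) ∧ flowMeasEntropy φ μ = (c : EReal)

end Flows

/-! ### Suspension flows -/

section Suspension

variable {X : Type*} [MetricSpace X] {Λ : Type*} [MetricSpace Λ]

/-- `φ` (a flow on `Λ`) is, on the subset `Γ ⊆ Λ`, the suspension flow of the base
map `f` restricted to `S ⊆ X` under the roof function `ρ`, witnessed by the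
embedding `e : X → Λ` of the base. This characterizes the quotient of `S × ℝ` by
`(x, ρ x) ∼ (f x, 0)` with the unit-speed vertical flow. -/
def IsSuspensionOn (f : X → X) (S : Set X) (ρ : X → ℝ) (φ : Flow ℝ Λ) (Γ : Set Λ) : Prop :=
  ∃ e : X → Λ, ContinuousOn e S ∧ (∀ x ∈ S, e x ∈ Γ) ∧
    (∀ x ∈ S, φ.toFun (ρ x) (e x) = e (f x)) ∧
    (∀ z ∈ Γ, ∃ x ∈ S, ∃ s : ℝ, 0 ≤ s ∧ s < ρ x ∧ φ.toFun s (e x) = z) ∧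
    (∀ x ∈ S, ∀ y ∈ S, ∀ s u : ℝ, 0 ≤ s → s < ρ x → 0 ≤ u → u < ρ y →
      φ.toFun s (e x) = φ.toFun u (e y) → x = y ∧ s = u)

end Suspension

/-! ### Symbolic dynamics -/

section Symbolic

/-- The full shift map on `ℤ → A`. -/
def fullShift (A : Type*) : (ℤ → A) → (ℤ → A) := fun x i => x (i + 1)

variable {A : Type*} [MetricSpace A]

/-- A subshift: a closed shift-invariant subset of the full shift. -/
def IsSubshift (S : Set (ℤ → A)) : Prop :=
  IsClosed S ∧ fullShift A '' S = S

/-- The vertex shift determined by a transition relation `Adj`. -/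
def vertexShift {B : Type*} (Adj : B → B → Prop) : Set (ℤ → B) :=
  {x | ∀ i : ℤ, Adj (x i) (x (i + 1))}

/-- A topological conjugacy between two shift spaces (over possibly different
alphabets): a homeomorphism of the subspaces intertwining the shift maps. -/
def ShiftConj {B : Type*} [mB : MetricSpace B] (S : Set (ℤ → A)) (T : Set (ℤ → B)) : Prop :=
  ∃ h : ↥S ≃ₜ ↥T, ∀ x y : ↥S, (y : ℤ → A) = fullShift A (x : ℤ → A) →
    ((h y : ℤ → B)) = fullShift B ((h x : ℤ → B))

/-- A subshift of finite type: a subshift topologically conjugate to a vertex shift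
over some finite alphabet. -/
def IsSFT [Fintype A] (S : Set (ℤ → A)) : Prop :=
  IsSubshift S ∧ ∃ (B : Type) (_ : Fintype B) (mB : MetricSpace B) (Adj : B → B → Prop),
    @ShiftConj A _ B mB S (vertexShift Adj)

/-- The word `w` occurs in some point of `S`. -/
def occursIn (w : List A) (S : Set (ℤ → A)) : Prop :=
  ∃ x ∈ S, ∃ a : ℤ, ∀ i : Fin w.length, x (a + (i : ℕ)) = w.get i

/-- The words of length `s` in the language of `S`. -/
def langOf (s : ℕ) (S : Set (ℤ → A)) : Set (List A) :=
  {w | w.length = s ∧ occursIn w S}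

/-- `r` is a parsing of `x` into words from `𝒲`. -/
def ParsesAt (x : ℤ → A) (𝒲 : Finset (List A)) (r : ℤ → ℤ) : Prop :=
  ∀ j : ℤ, ∃ w ∈ 𝒲, r (j + 1) = r j + w.length ∧
    ∀ i : Fin w.length, x (r j + (i : ℕ)) = w.get i

/-- The renewal system over a finite set of words `𝒲`: all bi-infinite free
concatenations of words from `𝒲`. -/
def renewalSet (𝒲 : Finset (List A)) : Set (ℤ → A) :=
  {x | ∃ r : ℤ → ℤ, ParsesAt x 𝒲 r}

end Symbolic

/-! ### Horseshoes for flows -/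

section Horseshoe

variable {M : Type*} [MetricSpace M]

/-- Auxiliary: `Λ` is a horseshoe of `φ` with symbol space `B`. -/
def HorseshoeWitness (φ : Flow ℝ M) (Λ : Set M) (B : Type) [Fintype B] [MetricSpace B] : Prop :=
  2 ≤ Fintype.card B ∧ ∃ ρ : (ℤ → B) → ℝ, Continuous ρ ∧ (∀ x, 0 < ρ x) ∧
    IsSuspensionOn (fullShift B) Set.univ ρ φ Λ

/-- A horseshoe of a flow: a compact invariant set on which the flow is conjugate to
a suspension flow over a full shift on at least two symbols. -/
def IsHorseshoe (φ : Flow ℝ M) (Λ : Set M) : Prop :=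
  ∃ (B : Type) (iB : Fintype B) (mB : MetricSpace B), @HorseshoeWitness M _ φ Λ B iB mB

end Horseshoe

/-! ### The metric on measures and empirical measures -/

section MeasMetric

variable {M : Type*} [MetricSpace M] [MeasurableSpace M]

/-- The metric `𝔡` on Borel (probability) measures determined by a sequence of test
functions `Φ`. -/
noncomputable def measDist (Φ : ℕ → M → ℝ) (μ ν : Measure M) : ℝ :=
  ∑' n : ℕ, (1 / 2 : ℝ) ^ (n + 1) * |(∫ x, Φ n x ∂μ) - ∫ x, Φ n x ∂ν|

/-- A sequence of test functions with `‖Φ n‖_∞ + Lip (Φ n) ≤ 1`, dense in `C(M,ℝ)`. -/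
def GoodTestSeq (Φ : ℕ → M → ℝ) : Prop :=
  (∀ n : ℕ, ∃ C K : ℝ, 0 ≤ C ∧ 0 ≤ K ∧ C + K ≤ 1 ∧ (∀ x, |Φ n x| ≤ C) ∧
    ∀ x y, |Φ n x - Φ n y| ≤ K * dist x y) ∧
  ∀ g : M → ℝ, Continuous g → ∀ ε : ℝ, 0 < ε → ∃ n : ℕ, ∀ x, |g x - Φ n x| < ε

/-- The `n`-th empirical measure of the point `x` for the map `f`. -/
noncomputable def empMeasure (f : M → M) (n : ℕ) (x : M) : Measure M :=
  (n : ℝ≥0∞)⁻¹ • ∑ j ∈ Finset.range n, Measure.dirac (f^[j] x)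

/-- The topological support of a measure. -/
def measSupport (μ : Measure M) : Set M :=
  {x | ∀ U : Set M, IsOpen U → x ∈ U → 0 < μ U}

/-- A measure of maximal entropy of `f` on `Λ`. -/
def IsMaxEntropyMeasureOn (f : M → M) (Λ : Set M) (μ : Measure M) : Prop :=
  IsProbabilityMeasure μ ∧ MeasurePreserving f μ μ ∧ μ Λᶜ = 0 ∧
    measEntropy f μ = topEntropyOn f Λ

end MeasMetric

/-! ### Flow shadowing and expansiveness -/

section FlowShadow

variable {M : Type*} [MetricSpace M]

/-- Bowen–Walters expansiveness for flows. -/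
def FlowExpansive (φ : Flow ℝ M) : Prop :=
  ∀ ε : ℝ, 0 < ε → ∃ δ : ℝ, 0 < δ ∧ ∀ x y : M, ∀ s : ℝ → ℝ, Continuous s → s 0 = 0 →
    (∀ t : ℝ, dist (φ.toFun t x) (φ.toFun (s t) y) ≤ δ) →
    ∃ τ : ℝ, |τ| ≤ ε ∧ y = φ.toFun τ x

/-- The shadowing property for flows: every `(δ,1)`-pseudo-orbit is `ε`-traced,
up to an orientation preserving reparametrization of time, by a true orbit. -/
def FlowShadowing (φ : Flow ℝ M) : Prop :=
  ∀ ε : ℝ, 0 < ε → ∃ δ : ℝ, 0 < δ ∧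
    ∀ (x : ℤ → M) (T S : ℤ → ℝ), (∀ i : ℤ, 1 ≤ T i) →
      (∀ i : ℤ, dist (φ.toFun (T i) (x i)) (x (i + 1)) ≤ δ) →
      S 0 = 0 → (∀ i : ℤ, S (i + 1) = S i + T i) →
      ∃ (z : M) (h : ℝ → ℝ), StrictMono h ∧ Continuous h ∧ Function.Surjective h ∧
        ∀ i : ℤ, ∀ t : ℝ, S i ≤ t → t < S (i + 1) →
          dist (φ.toFun (h t) z) (φ.toFun (t - S i) (x i)) ≤ ε

end FlowShadow


/-! ### Lift of a measure to a suspension flow -/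

section Lift

variable {X : Type*} [MeasurableSpace X] {Y : Type*} [TopologicalSpace Y] [MeasurableSpace Y]

/-- The lift of a base measure `ν` to the suspension flow `φ` with roof `ρ`,
via the base embedding `e`: the normalized image of `ν ⊗ Leb` on the region
below the roof. -/
noncomputable def suspLift (φ : Flow ℝ Y) (e : X → Y) (ρ : X → ℝ) (ν : Measure X) :
    Measure Y :=
  (ENNReal.ofReal (∫ x, ρ x ∂ν))⁻¹ •
    Measure.map (fun p : X × ℝ => φ.toFun p.2 (e p.1))
      ((ν.prod (volume : Measure ℝ)).restrict {p : X × ℝ | 0 ≤ p.2 ∧ p.2 < ρ p.1})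

end Lift


end EF
open EF

set_option linter.unusedSectionVars false

namespace EFP

/-! ### Unique ergodicity of flows from uniform time averages -/

section UE

variable {Λ : Type*} [MetricSpace Λ] [CompactSpace Λ]

/-- Time averages of every continuous function converge uniformly on `Γ` to a constant. -/
def UEOn (φ : Flow ℝ Λ) (Γ : Set Λ) : Prop :=
  ∀ g : C(Λ, ℝ), ∃ J : ℝ, ∀ ε > 0, ∃ T₀ > 0, ∀ T ≥ T₀, ∀ z ∈ Γ,
    |(∫ t in (0:ℝ)..T, g (φ t z)) - J * T| ≤ ε * T

lemma continuous_orbit (φ : Flow ℝ Λ) (z : Λ) : Continuous fun t => φ t z :=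
  φ.continuous continuous_id continuous_const

lemma continuous_test (φ : Flow ℝ Λ) (g : C(Λ, ℝ)) (z : Λ) : Continuous fun t => g (φ t z) :=
  g.continuous.comp (continuous_orbit φ z)

lemma exists_bound (g : C(Λ, ℝ)) : ∃ C > 0, ∀ z, |g z| ≤ C :=
  ⟨‖g‖ + 1, by positivity, fun z => (g.norm_coe_le_norm z).trans (by linarith)⟩

variable [MeasurableSpace Λ] [BorelSpace Λ]

lemma integrable_cont (μ : Measure Λ) [IsFiniteMeasure μ] (g : Λ → ℝ) (hg : Continuous g) :
    Integrable g μ :=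
  hg.integrable_of_hasCompactSupport (HasCompactSupport.of_compactSpace g)

lemma measure_ext_cont {μ ν : Measure Λ} [IsFiniteMeasure μ] [IsFiniteMeasure ν]
    (h : ∀ g : C(Λ, ℝ), ∫ z, g z ∂μ = ∫ z, g z ∂ν) : μ = ν :=
  ext_of_forall_integral_eq_of_IsFiniteMeasure fun f => h f.toContinuousMap

lemma eq_of_forall_le_mul {a b : ℝ} (h : ∀ ε > 0, |a - b| ≤ ε) : a = b := by
  by_contra hne
  have : 0 < |a - b| := abs_pos.2 (sub_ne_zero.2 hne)
  have := h (|a - b| / 2) (by linarith)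
  linarith

/-- The space average of a continuous function is its uniform time average. -/
lemma ue_integral {φ : Flow ℝ Λ} {Γ : Set Λ} (μ : Measure Λ) [IsProbabilityMeasure μ]
    (hμ : FlowInvariant φ μ) (hΓ : μ Γᶜ = 0) (g : C(Λ, ℝ)) {J : ℝ}
    (hJ : ∀ ε > 0, ∃ T₀ > 0, ∀ T ≥ T₀, ∀ z ∈ Γ,
      |(∫ t in (0:ℝ)..T, g (φ t z)) - J * T| ≤ ε * T) : ∫ z, g z ∂μ = J := by
  apply eq_of_forall_le_mul
  intro ε hε
  obtain ⟨T, hT, h⟩ := hJ ε hε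
  have hcont : Continuous (Function.uncurry fun (z : Λ) (t : ℝ) => g (φ t z)) :=
    g.continuous.comp (φ.continuous continuous_snd continuous_fst)
  obtain ⟨C, _, hC⟩ := exists_bound g
  have hswap : ∫ z, (∫ t in (0:ℝ)..T, g (φ t z)) ∂μ = T * ∫ z, g z ∂μ := by
    simp_rw [intervalIntegral.integral_of_le hT.le]
    rw [integral_integral_swap]
    · have : ∀ t : ℝ, ∫ z, g (φ t z) ∂μ = ∫ z, g z ∂μ := fun t => by
        have := integral_map (μ := μ) (φ.continuous_toFun t).measurable.aemeasurable
          (f := g) (by rw [(hμ t).map_eq]; exact g.continuous.aestronglyMeasurable)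
        rw [(hμ t).map_eq] at this
        exact this.symm
      simp [this, hT.le]
    · refine Integrable.of_bound hcont.measurable.aestronglyMeasurable C ?_
      exact Eventually.of_forall fun p => hC _
  have hb : |(∫ z, ((∫ t in (0:ℝ)..T, g (φ t z)) - J * T) ∂μ)| ≤ ε * T := by
    have := norm_integral_le_of_norm_le_const (μ := μ)
      (f := fun z => (∫ t in (0:ℝ)..T, g (φ t z)) - J * T) (C := ε * T) (by
        have : ∀ᵐ z ∂μ, z ∈ Γ := hΓ
        filter_upwards [this] with z hz using h T le_rfl z hz)
    simpa using this
  rw [integral_sub _ (integrable_const _), hswap] at hb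
  · simp only [integral_const, probReal_univ, smul_eq_mul, one_mul] at hb
    have : T * (∫ z, g z ∂μ) - J * T = T * ((∫ z, g z ∂μ) - J) := by ring
    rw [this, abs_mul, abs_of_pos hT] at hb
    exact le_of_mul_le_mul_left (by linarith) hT
  · exact integrable_cont μ _
      (intervalIntegral.continuous_parametric_intervalIntegral_of_continuous' hcont 0 T)

lemma ue_unique {φ : Flow ℝ Λ} {Γ : Set Λ} (hUE : UEOn φ Γ) {μ ν : Measure Λ}
    [IsProbabilityMeasure μ] [IsProbabilityMeasure ν]
    (hμ : FlowInvariant φ μ) (hμΓ : μ Γᶜ = 0) (hν : FlowInvariant φ ν) (hνΓ : ν Γᶜ = 0) :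
    μ = ν := by
  apply measure_ext_cont
  intro g
  obtain ⟨J, hJ⟩ := hUE g
  rw [ue_integral μ hμ hμΓ g hJ, ue_integral ν hν hνΓ g hJ]

/-- Krylov–Bogoliubov: an invariant measure is a limit, along an ultrafilter, of the
empirical measures of a single orbit. -/
lemma ue_exists {φ : Flow ℝ Λ} {Γ : Set Λ} (hUE : UEOn φ Γ) (hcl : IsClosed Γ)
    (hinv : ∀ t : ℝ, ∀ z ∈ Γ, φ t z ∈ Γ) (hne : Γ.Nonempty) :
    ∃ μ : Measure Λ, IsProbabilityMeasure μ ∧ FlowInvariant φ μ ∧ μ Γᶜ = 0 := by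
  obtain ⟨z, hz⟩ := hne
  let m : ℕ → Measure Λ := fun n =>
    (ENNReal.ofReal (n + 1))⁻¹ • ((volume.restrict (Ioc (0:ℝ) (n + 1))).map fun t => φ t z)
  have hmeas : Measurable fun t => φ t z := (continuous_orbit φ z).measurable
  have hm : ∀ n, IsProbabilityMeasure (m n) := fun n => by
    constructor
    simp only [m, Measure.smul_apply, smul_eq_mul]
    rw [Measure.map_apply hmeas MeasurableSet.univ]
    simp only [preimage_univ, Measure.restrict_apply MeasurableSet.univ, univ_inter,
      Real.volume_Ioc, sub_zero]
    exact ENNReal.inv_mul_cancel (by simp; positivity) (by simp)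
  have hint : ∀ (g : C(Λ, ℝ)) n, ∫ y, g y ∂(m n) =
      ((n : ℝ) + 1)⁻¹ * ∫ t in (0:ℝ)..(n + 1), g (φ t z) := fun g n => by
    simp only [m]
    rw [integral_smul_measure, integral_map hmeas.aemeasurable
      g.continuous.aestronglyMeasurable, intervalIntegral.integral_of_le (by positivity),
      ENNReal.toReal_inv, ENNReal.toReal_ofReal (by positivity), smul_eq_mul]
  let ms : ℕ → ProbabilityMeasure Λ := fun n => ⟨m n, hm n⟩
  obtain ⟨μ, -, hμ⟩ := isCompact_univ.ultrafilter_le_nhds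
    ((hyperfilter ℕ).map ms) (by simp)
  have hlim : Tendsto ms (hyperfilter ℕ) (𝓝 μ) := hμ
  rw [ProbabilityMeasure.tendsto_iff_forall_integral_tendsto] at hlim
  have hJ : ∀ (g : C(Λ, ℝ)) (J : ℝ), (∀ ε > 0, ∃ T₀ > 0, ∀ T ≥ T₀, ∀ z ∈ Γ,
      |(∫ t in (0:ℝ)..T, g (φ t z)) - J * T| ≤ ε * T) → ∫ y, g y ∂(μ : Measure Λ) = J := by
    intro g J hgJ
    refine tendsto_nhds_unique (hlim (BoundedContinuousFunction.mkOfCompact g)) ?_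
    refine Tendsto.mono_left ?_ (Nat.hyperfilter_le_atTop)
    change Tendsto (fun n => ∫ y, g y ∂(m n)) atTop (𝓝 J)
    simp_rw [hint]
    rw [Metric.tendsto_atTop]
    intro ε hε
    obtain ⟨T, hT, h⟩ := hgJ (ε / 2) (by positivity)
    refine ⟨⌈T⌉₊, fun n hn => ?_⟩
    have h1 : T ≤ (n : ℝ) + 1 := (Nat.le_ceil T).trans (by exact_mod_cast hn.trans (Nat.le_succ n))
    have h2 := h _ h1 z hz
    have h3 : (0:ℝ) < n + 1 := by positivity
    rw [Real.dist_eq]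
    have : ((n : ℝ) + 1)⁻¹ * (∫ t in (0:ℝ)..(n + 1), g (φ t z)) - J =
        ((n : ℝ) + 1)⁻¹ * ((∫ t in (0:ℝ)..(n + 1), g (φ t z)) - J * (n + 1)) := by
      field_simp
    rw [this, abs_mul, abs_of_pos (by positivity)]
    calc _ ≤ ((n : ℝ) + 1)⁻¹ * (ε / 2 * (n + 1)) := by gcongr
      _ = ε / 2 := by field_simp
      _ < ε := by linarith
  refine ⟨μ, inferInstance, fun s => ⟨(φ.continuous_toFun s).measurable, ?_⟩, ?_⟩
  · have : IsProbabilityMeasure (Measure.map (φ.toFun s) (μ : Measure Λ)) :=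
      Measure.isProbabilityMeasure_map (φ.continuous_toFun s).measurable.aemeasurable
    apply measure_ext_cont
    intro g
    rw [integral_map (φ.continuous_toFun s).measurable.aemeasurable
      g.continuous.aestronglyMeasurable]
    obtain ⟨J, hgJ⟩ := hUE g
    rw [hJ g J hgJ]
    obtain ⟨J', hgJ'⟩ := hUE (g.comp ⟨φ.toFun s, φ.continuous_toFun s⟩)
    rw [show ∫ x, g (φ.toFun s x) ∂(μ : Measure Λ) =
      ∫ x, (g.comp ⟨φ.toFun s, φ.continuous_toFun s⟩) x ∂(μ : Measure Λ) from rfl,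
      hJ _ J' hgJ']
    apply eq_of_forall_le_mul
    intro ε hε
    obtain ⟨T₁, hT₁, h1⟩ := hgJ (ε / 4) (by positivity)
    obtain ⟨T₂, hT₂, h2⟩ := hgJ' (ε / 4) (by positivity)
    obtain ⟨C, hC, hgC⟩ := exists_bound g
    let T := T₁ + T₂ + 4 * (C * |s|) / ε
    have hTnn : 0 ≤ 4 * (C * |s|) / ε := by positivity
    have hTpos : 0 < T := by positivity
    have h1 := h1 T (by simp only [T, ge_iff_le]; linarith) z hz
    have h2 := h2 T (by simp only [T, ge_iff_le]; linarith) z hz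
    have e1 : ∫ t in (0:ℝ)..T, (g.comp ⟨φ.toFun s, φ.continuous_toFun s⟩) (φ t z) =
        ∫ t in s..(T + s), g (φ t z) := by
      have := intervalIntegral.integral_comp_add_right (a := 0) (b := T)
        (fun t => g (φ t z)) s
      rw [zero_add] at this
      rw [← this]
      congr 1
      ext t
      simp [add_comm t s, φ.map_add]
    rw [e1] at h2
    have hii : ∀ a b : ℝ, IntervalIntegrable (fun t => g (φ t z)) volume a b :=
      fun a b => (continuous_test φ g z).intervalIntegrable a b
    have e2 : (∫ t in s..(T + s), g (φ t z)) - ∫ t in (0:ℝ)..T, g (φ t z) =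
        (∫ t in T..(T + s), g (φ t z)) - ∫ t in (0:ℝ)..s, g (φ t z) := by
      have a1 := intervalIntegral.integral_add_adjacent_intervals (hii 0 s) (hii s (T + s))
      have a2 := intervalIntegral.integral_add_adjacent_intervals (hii 0 T) (hii T (T + s))
      linarith
    have b1 : |∫ t in T..(T + s), g (φ t z)| ≤ C * |s| := by
      simpa using intervalIntegral.norm_integral_le_of_norm_le_const
        (a := T) (b := T + s) (f := fun t => g (φ t z)) (C := C) fun t _ => hgC _
    have b2 : |∫ t in (0:ℝ)..s, g (φ t z)| ≤ C * |s| := by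
      simpa using intervalIntegral.norm_integral_le_of_norm_le_const
        (a := 0) (b := s) (f := fun t => g (φ t z)) (C := C) fun t _ => hgC _
    have hCs : 2 * (C * |s|) ≤ ε / 2 * T := by
      have : ε / 2 * T = ε / 2 * (T₁ + T₂) + 2 * (C * |s|) := by
        simp only [T]; field_simp; ring
      rw [this]
      have : 0 ≤ ε / 2 * (T₁ + T₂) := by positivity
      linarith
    have key : |(J' - J) * T| ≤ ε * T := by
      rw [abs_le] at *
      constructor <;> nlinarith
    rw [abs_mul, abs_of_pos hTpos] at key
    exact le_of_mul_le_mul_right key hTpos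
  · -- the distance to `Γ` has zero time averages on `Γ`, hence vanishes almost everywhere
    let g : C(Λ, ℝ) := ⟨fun y => Metric.infDist y Γ, Metric.continuous_infDist_pt Γ⟩
    have h0 : ∫ y, g y ∂(μ : Measure Λ) = 0 := by
      refine hJ g 0 fun ε hε => ⟨1, one_pos, fun T hT y hy => ?_⟩
      have : ∀ t, g (φ t y) = 0 := fun t => Metric.infDist_zero_of_mem (hinv t y hy)
      simp only [this, intervalIntegral.integral_zero, zero_mul, sub_zero, abs_zero]
      have : (0:ℝ) ≤ T := by linarith [hT.le]
      positivity
    have h1 := (integral_eq_zero_iff_of_nonneg (f := fun y => g y)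
      (fun y => (Metric.infDist_nonneg : 0 ≤ Metric.infDist y Γ))
      (integrable_cont _ _ g.continuous)).1 h0
    change ∀ᵐ y ∂(μ : Measure Λ), y ∈ Γ
    filter_upwards [h1] with y hy
    exact (hcl.mem_iff_infDist_zero ⟨z, hz⟩).2 hy

/-- A unique invariant measure is ergodic. -/
lemma ue_ergodic {φ : Flow ℝ Λ} {Γ : Set Λ} (hUE : UEOn φ Γ) {μ : Measure Λ}
    [IsProbabilityMeasure μ] (hμ : FlowInvariant φ μ) (hμΓ : μ Γᶜ = 0) : FlowErgodic φ μ := by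
  refine ⟨hμ, fun s hs hinv => ?_⟩
  by_contra hcon
  push Not at hcon
  -- the normalised restriction to `s` is again invariant, hence equal to `μ`
  have hne : μ s ≠ 0 := hcon.1
  have hp : IsProbabilityMeasure (ProbabilityTheory.cond μ s) :=
    ProbabilityTheory.cond_isProbabilityMeasure hne
  have hci : FlowInvariant φ (ProbabilityTheory.cond μ s) := fun t => by
    refine ⟨(hμ t).measurable, ?_⟩
    rw [ProbabilityTheory.cond, Measure.map_smul]
    congr 1
    have := (hμ t).restrict_preimage hs
    rw [hinv t] at this
    exact this.map_eq
  have hc0 : (ProbabilityTheory.cond μ s) Γᶜ = 0 :=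
    ProbabilityTheory.cond_absolutelyContinuous hμΓ
  have := ue_unique hUE hμ hμΓ hci hc0
  apply hcon.2
  rw [this]
  exact ProbabilityTheory.cond_apply_self hne (measure_ne_top _ _)

end UE


/-! ### Separated sets and the inequality between metric and topological entropy -/

section Goodwyn

variable {M : Type*} [MetricSpace M] [CompactSpace M]

lemma sep_card_bdd {f : M → M} (K : Set M) (n : ℕ) {ε : ℝ} (hε : 0 < ε) :
    BddAbove {k : ℕ | ∃ Q : Finset M, ↑Q ⊆ K ∧ IsDynSep f n ε ↑Q ∧ Q.card = k} := by
  classical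
  let F : M → (Fin (n + 1) → M) := fun z j => f^[(j : ℕ)] z
  obtain ⟨t, -, htf, ht⟩ :=
    (isCompact_univ (X := Fin (n + 1) → M)).finite_cover_balls (half_pos hε)
  have hc : ∀ z : M, ∃ y ∈ t, dist (F z) y < ε / 2 := fun z => by
    simpa using ht (mem_univ (F z))
  choose c hct hcd using hc
  refine ⟨htf.toFinset.card, ?_⟩
  rintro k ⟨Q, -, hQ, rfl⟩
  refine Finset.card_le_card_of_injOn c (fun z _ => by simpa using hct z) ?_
  intro x hx y hy hxy
  by_contra hne
  obtain ⟨j, hj, hd⟩ := hQ hx hy hne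
  have h1 : dist (F x) (F y) < ε := by
    calc dist (F x) (F y) ≤ dist (F x) (c x) + dist (F y) (c x) := dist_triangle_right _ _ _
      _ < ε / 2 + ε / 2 := add_lt_add (hcd x) (by rw [hxy]; exact hcd y)
      _ = ε := by ring
  have h2 := dist_le_pi_dist (F x) (F y) ⟨j, by omega⟩
  exact absurd hd (not_lt.2 (h2.trans h1.le))

lemma card_le_sepCount {f : M → M} {K : Set M} {n : ℕ} {ε : ℝ} (hε : 0 < ε)
    {Q : Finset M} (hQK : ↑Q ⊆ K) (hQ : IsDynSep f n ε ↑Q) : Q.card ≤ sepCount f K n ε :=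
  le_csSup (sep_card_bdd K n hε) ⟨Q, hQK, hQ, rfl⟩

lemma exists_max_sep {f : M → M} (K : Set M) (n : ℕ) {ε : ℝ} (hε : 0 < ε) :
    ∃ Q : Finset M, ↑Q ⊆ K ∧ IsDynSep f n ε ↑Q ∧ Q.card = sepCount f K n ε := by
  have := Nat.sSup_mem (s := {k : ℕ | ∃ Q : Finset M, ↑Q ⊆ K ∧ IsDynSep f n ε ↑Q ∧ Q.card = k})
    ⟨0, ∅, by simp, by simp [IsDynSep], rfl⟩ (sep_card_bdd K n hε)
  exact this

/-- A maximal separated subset is also spanning. -/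
lemma exists_sep_span {f : M → M} (K : Set M) (n : ℕ) {ε : ℝ} (hε : 0 < ε) :
    ∃ Q : Finset M, ↑Q ⊆ K ∧ Q.card = sepCount f K n ε ∧
      ∀ z ∈ K, ∃ y ∈ Q, ∀ j ≤ n, dist (f^[j] z) (f^[j] y) ≤ ε := by
  classical
  obtain ⟨Q, hQK, hQ, hcard⟩ := exists_max_sep K n hε
  refine ⟨Q, hQK, hcard, fun z hz => ?_⟩
  by_contra hcon
  push Not at hcon
  have hzQ : z ∉ Q := fun h => by
    obtain ⟨j, _, hj⟩ := hcon z h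
    rw [dist_self] at hj
    exact absurd hj (not_lt.2 hε.le)
  have hins : IsDynSep f n ε ↑(insert z Q) := by
    intro x hx y hy hxy
    simp only [Finset.coe_insert, mem_insert_iff, Finset.mem_coe] at hx hy
    rcases hx with rfl | hx <;> rcases hy with rfl | hy
    · exact absurd rfl hxy
    · exact hcon y hy
    · obtain ⟨j, hj, hd⟩ := hcon x hx
      exact ⟨j, hj, by rwa [dist_comm]⟩
    · exact hQ hx hy hxy
  have := card_le_sepCount hε (Q := insert z Q) (K := K)
    (by
      intro x hx
      simp only [Finset.coe_insert, mem_insert_iff, Finset.mem_coe] at hx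
      rcases hx with rfl | hx
      exacts [hz, hQK hx]) hins
  rw [Finset.card_insert_of_notMem hzQ, hcard] at this
  omega

/-- Pointwise Gibbs inequality. -/
lemma gibbs {p q : ℝ} (hp : 0 ≤ p) (hq : 0 < q) :
    negMulLog p ≤ p * (-Real.log q) + q - p := by
  unfold negMulLog
  rcases hp.eq_or_lt with rfl | hp
  · simp [hq.le]
  have h := Real.log_le_sub_one_of_pos (div_pos hq hp)
  rw [Real.log_div hq.ne' hp.ne'] at h
  have h2 := mul_le_mul_of_nonneg_left h hp.le
  have h3 : p * (q / p - 1) = q - p := by field_simp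
  rw [h3] at h2
  linarith

lemma negMulLog_nonneg {p : ℝ} (h0 : 0 ≤ p) (h1 : p ≤ 1) : 0 ≤ negMulLog p := by
  have := Real.negMulLog_nonneg h0 h1
  unfold negMulLog
  rw [Real.negMulLog] at this
  linarith

variable [MeasurableSpace M] [BorelSpace M]

/-- The cylinder sets of a partition. -/
def cyl (f : M → M) (P : Finset (Set M)) (n : ℕ) (a : Fin n → {p // p ∈ P}) : Set M :=
  ⋂ i : Fin n, f^[(i : ℕ)] ⁻¹' ((a i : Set M))

lemma cyl_measurable {f : M → M} (hf : Continuous f) {P : Finset (Set M)}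
    (hP : IsMeasPartition P) (n : ℕ) (a : Fin n → {p // p ∈ P}) : MeasurableSet (cyl f P n a) :=
  MeasurableSet.iInter fun i => (hf.iterate i).measurable (hP.1 _ (a i).2)

lemma cyl_disjoint {f : M → M} {P : Finset (Set M)} (hP : IsMeasPartition P) (n : ℕ) :
    Pairwise (Function.onFun Disjoint (cyl f P n)) := by
  intro a b hab
  obtain ⟨i, hi⟩ := Function.ne_iff.1 hab
  refine Set.disjoint_left.2 fun z hza hzb => ?_
  simp only [cyl, mem_iInter, mem_preimage] at hza hzb
  exact Set.disjoint_left.1 (hP.2.2 (a i).2 (b i).2 fun h => hi (Subtype.ext h)) (hza i) (hzb i)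

lemma cyl_cover {f : M → M} {P : Finset (Set M)} (hP : IsMeasPartition P) (n : ℕ) :
    ⋃ a, cyl f P n a = univ := by
  refine eq_univ_of_forall fun z => ?_
  have : ∀ y : M, ∃ p : {p // p ∈ P}, y ∈ (p : Set M) := fun y => by
    have : y ∈ ⋃₀ (↑P : Set (Set M)) := by rw [hP.2.1]; trivial
    obtain ⟨p, hp, hy⟩ := this
    exact ⟨⟨p, hp⟩, hy⟩
  choose g hg using this
  exact mem_iUnion.2 ⟨fun i => g (f^[(i : ℕ)] z), by simp [cyl, hg]⟩

lemma sum_cyl {f : M → M} (hf : Continuous f) {P : Finset (Set M)}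
    (hP : IsMeasPartition P) (n : ℕ) (μ : Measure M) [IsProbabilityMeasure μ] (g : M → ℝ)
    (hg : Integrable g μ) : ∑ a, ∫ z in cyl f P n a, g z ∂μ = ∫ z, g z ∂μ := by
  rw [← integral_iUnion_fintype (cyl_measurable hf hP n) (cyl_disjoint hP n)
    (fun i => hg.integrableOn), cyl_cover hP n, setIntegral_univ]

lemma sum_cyl_measure {f : M → M} (hf : Continuous f) {P : Finset (Set M)}
    (hP : IsMeasPartition P) (n : ℕ) (μ : Measure M) [IsProbabilityMeasure μ] :
    ∑ a, μ.real (cyl f P n a) = 1 := by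
  have := sum_cyl hf hP n μ (fun _ => (1:ℝ)) (integrable_const _)
  simpa using this

lemma refinedInfo_eq (f : M → M) (μ : Measure M) (P : Finset (Set M)) (n : ℕ) :
    refinedInfo f μ P n = ∑ a, negMulLog (μ.real (cyl f P n a)) := rfl

lemma refinedInfo_nonneg (f : M → M) (μ : Measure M) [IsProbabilityMeasure μ]
    (P : Finset (Set M)) (n : ℕ) : 0 ≤ refinedInfo f μ P n := by
  rw [refinedInfo_eq]
  exact Finset.sum_nonneg fun a _ => negMulLog_nonneg measureReal_nonneg measureReal_le_one

/-- Closed cores of the partition elements: almost everything is covered by sets `K p ⊆ p` at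
positive mutual distance. -/
lemma exists_cores {P : Finset (Set M)} (hP : IsMeasPartition P) (μ : Measure M)
    [IsProbabilityMeasure μ] {δ : ℝ} (hδ : 0 < δ) :
    ∃ K : {p // p ∈ P} → Set M, (∀ p, IsClosed (K p) ∧ K p ⊆ p) ∧ μ.real (⋃ p, K p)ᶜ ≤ δ ∧
      ∃ ε > 0, ∀ p p', ∀ u ∈ K p, ∀ u' ∈ K p', ∀ y, dist y u ≤ ε → dist y u' ≤ ε → p = p' := by
  classical
  have hk : (0:ℝ) < P.card + 1 := by positivity
  have : ∀ p : {p // p ∈ P}, ∃ F ⊆ (p : Set M), IsClosed F ∧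
      μ ((p : Set M) \ F) < ENNReal.ofReal (δ / (P.card + 1)) := fun p =>
    (hP.1 _ p.2).exists_isClosed_sdiff_lt (measure_ne_top _ _) (by
      simp only [ne_eq, ENNReal.ofReal_eq_zero, not_le]; positivity)
  choose K hKs hKc hKμ using this
  refine ⟨K, fun p => ⟨hKc p, hKs p⟩, ?_, ?_⟩
  · have hsub : (⋃ p, K p)ᶜ ⊆ ⋃ p : {p // p ∈ P}, (p : Set M) \ K p := by
      intro z hz
      have : z ∈ ⋃₀ (↑P : Set (Set M)) := by rw [hP.2.1]; trivial
      obtain ⟨p, hp, hy⟩ := this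
      refine mem_iUnion.2 ⟨⟨p, hp⟩, hy, fun h => hz (mem_iUnion.2 ⟨_, h⟩)⟩
    calc μ.real (⋃ p, K p)ᶜ ≤ μ.real (⋃ p : {p // p ∈ P}, (p : Set M) \ K p) :=
          measureReal_mono hsub
      _ ≤ ∑ p : {p // p ∈ P}, μ.real ((p : Set M) \ K p) := measureReal_iUnion_fintype_le _
      _ ≤ ∑ p : {p // p ∈ P}, δ / (P.card + 1) := by
          refine Finset.sum_le_sum fun p _ => ?_
          exact ENNReal.toReal_le_of_le_ofReal (by positivity) (hKμ p).le
      _ ≤ δ := by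
          simp only [Finset.sum_const, Finset.card_univ, Fintype.card_coe, nsmul_eq_mul]
          rw [mul_div_assoc', div_le_iff₀ hk]
          nlinarith
  · have hdis : ∀ p p', p ≠ p' → Disjoint (K p) (K p') := fun p p' h =>
      (hP.2.2 p.2 p'.2 fun h' => h (Subtype.ext h')).mono (hKs p) (hKs p')
    have : ∀ pp : {p // p ∈ P} × {p // p ∈ P}, ∃ ε > 0, pp.1 ≠ pp.2 →
        Disjoint (Metric.thickening ε (K pp.1)) (Metric.thickening ε (K pp.2)) := by
      intro pp
      by_cases h : pp.1 = pp.2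
      · exact ⟨1, one_pos, fun h' => absurd h h'⟩
      · obtain ⟨ε, h1, h2⟩ := (hdis _ _ h).exists_thickenings (hKc pp.1).isCompact (hKc pp.2)
        exact ⟨ε, h1, fun _ => h2⟩
    choose e he hed using this
    obtain ⟨ε, hε, hle⟩ : ∃ ε > 0, ∀ pp, ε < e pp := by
      rcases isEmpty_or_nonempty ({p // p ∈ P} × {p // p ∈ P}) with h | h
      · exact ⟨1, one_pos, fun pp => (h.false pp).elim⟩
      · obtain ⟨pp, hpp⟩ := Finite.exists_min e
        exact ⟨e pp / 2, half_pos (he pp), fun pp' => lt_of_lt_of_le (half_lt_self (he pp)) (hpp _)⟩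
    refine ⟨ε, hε, fun p p' u hu u' hu' y hy hy' => ?_⟩
    by_contra hne
    refine Set.disjoint_left.1 (hed (p, p') hne) (?_ : y ∈ _) ?_
    · exact Metric.mem_thickening_iff.2 ⟨u, hu, hy.trans_lt (hle _)⟩
    · exact Metric.mem_thickening_iff.2 ⟨u', hu', hy'.trans_lt (hle _)⟩

set_option maxHeartbeats 1000000 in
/-- Entropy of a partition against the number of separated points. The reference distribution on
itineraries follows the itinerary of a spanning point with probability `1 - θ` per step. -/
lemma refinedInfo_le_sep {f : M → M} (hf : Continuous f) {Γ : Set M} {μ : Measure M}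
    [IsProbabilityMeasure μ] (hμ : MeasurePreserving f μ μ) (hΓ : μ Γᶜ = 0)
    {P : Finset (Set M)} (hP : IsMeasPartition P) {η : ℝ} (hη : 0 < η) :
    ∃ ε > 0, ∀ n : ℕ, refinedInfo f μ P n ≤ Real.log (sepCount f Γ n ε) + n * η := by
  classical
  obtain ⟨z₀, hz₀⟩ : Γ.Nonempty := by
    by_contra h
    rw [not_nonempty_iff_eq_empty.1 h, compl_empty, measure_univ] at hΓ
    exact one_ne_zero hΓ
  have hPne : Nonempty {p // p ∈ P} := by
    have : z₀ ∈ ⋃₀ (↑P : Set (Set M)) := by rw [hP.2.1]; trivial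
    obtain ⟨p, hp, -⟩ := this
    exact ⟨⟨p, hp⟩⟩
  set k : ℝ := (Fintype.card {p // p ∈ P} : ℝ) with hkdef
  have hk1 : 1 ≤ k := by
    rw [hkdef]; exact_mod_cast Fintype.card_pos
  have hk : 0 < k := by linarith
  -- `θ` makes the loss per good step at most `η / 2`
  set θ : ℝ := 1 - Real.exp (-(η / 2)) with hθdef
  have hθ1 : 1 - θ = Real.exp (-(η / 2)) := by rw [hθdef]; ring
  have hθ0 : 0 < θ := by
    have : Real.exp (-(η / 2)) < 1 := by
      simpa using Real.exp_lt_exp.2 (show -(η / 2) < 0 by linarith)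
    linarith
  have hθlt : 0 < 1 - θ := by rw [hθ1]; exact Real.exp_pos _
  set B : ℝ := Real.log (k / θ) with hBdef
  have hB : 0 ≤ B := Real.log_nonneg (by rw [le_div_iff₀ hθ0]; linarith)
  obtain ⟨K, hK, hKμ, ε, hε, hsep⟩ := exists_cores hP μ (δ := η / 2 / (B + 1)) (by positivity)
  refine ⟨ε, hε, fun n => ?_⟩
  obtain ⟨Q, -, hcard, hspan⟩ := exists_sep_span Γ n hε
  have hQ0 : 0 < (Q.card : ℝ) := by
    obtain ⟨y, hy, -⟩ := hspan z₀ hz₀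
    exact_mod_cast Finset.card_pos.2 ⟨y, hy⟩
  let near : M → {p // p ∈ P} → Prop := fun y p => ∃ u ∈ K p, dist y u ≤ ε
  let κ : M → {p // p ∈ P} → ℝ := fun y p => (1 - θ) * (if near y p then 1 else 0) + θ / k
  have hθk : 0 < θ / k := by positivity
  have hκpos : ∀ y p, 0 < κ y p := fun y p => by
    simp only [κ]; split_ifs <;> nlinarith
  have hκsum : ∀ y, ∑ p, κ y p ≤ 1 := fun y => by
    simp only [κ, Finset.sum_add_distrib, ← Finset.mul_sum, Finset.sum_const, Finset.card_univ,
      nsmul_eq_mul, ← hkdef]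
    have h1 : ∑ p, (if near y p then (1:ℝ) else 0) ≤ 1 := by
      rw [← Finset.sum_filter, Finset.sum_const, nsmul_eq_mul, mul_one]
      have : (Finset.univ.filter fun p => near y p).card ≤ 1 := by
        refine Finset.card_le_one.2 fun p hp p' hp' => ?_
        obtain ⟨u, hu, hd⟩ := (Finset.mem_filter.1 hp).2
        obtain ⟨u', hu', hd'⟩ := (Finset.mem_filter.1 hp').2
        exact hsep p p' u hu u' hu' y hd hd'
      exact_mod_cast this
    have h2 : k * (θ / k) = θ := by field_simp
    rw [h2]
    nlinarith
  let q : (Fin n → {p // p ∈ P}) → ℝ := fun a =>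
    ∑ y ∈ Q, (Q.card : ℝ)⁻¹ * ∏ i : Fin n, κ (f^[(i : ℕ)] y) (a i)
  have hprodpos : ∀ (a : Fin n → {p // p ∈ P}) y, 0 < ∏ i : Fin n, κ (f^[(i : ℕ)] y) (a i) :=
    fun a y => Finset.prod_pos fun i _ => hκpos _ _
  have hqsum : ∑ a, q a ≤ 1 := by
    simp only [q]
    rw [Finset.sum_comm]
    simp_rw [← Finset.mul_sum]
    have : ∀ y, ∑ a : Fin n → {p // p ∈ P}, ∏ i : Fin n, κ (f^[(i : ℕ)] y) (a i) ≤ 1 := fun y => by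
      have h := Finset.prod_univ_sum (fun _ : Fin n => (Finset.univ : Finset {p // p ∈ P}))
        (fun i p => κ (f^[(i : ℕ)] y) p)
      rw [Fintype.piFinset_univ] at h
      rw [← h]
      exact Finset.prod_le_one (fun i _ => Finset.sum_nonneg fun p _ => (hκpos _ _).le)
        fun i _ => hκsum _
    calc (Q.card : ℝ)⁻¹ * ∑ y ∈ Q, ∑ a : Fin n → {p // p ∈ P}, ∏ i : Fin n, κ (f^[(i : ℕ)] y) (a i)
        ≤ (Q.card : ℝ)⁻¹ * ∑ y ∈ Q, 1 :=
          mul_le_mul_of_nonneg_left (Finset.sum_le_sum fun y _ => this y) (inv_nonneg.2 hQ0.le)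
      _ = 1 := by rw [Finset.sum_const, nsmul_eq_mul, mul_one, inv_mul_cancel₀ hQ0.ne']
  let Bd : Set M := (⋃ p, K p)ᶜ
  have hBd : MeasurableSet Bd := (MeasurableSet.iUnion fun p => (hK p).1.measurableSet).compl
  let bad : M → ℝ := fun z => ∑ i : Fin n, (f^[(i : ℕ)] ⁻¹' Bd).indicator (fun _ => (1:ℝ)) z
  have hbadm : ∀ i : Fin n, MeasurableSet (f^[(i : ℕ)] ⁻¹' Bd) := fun i =>
    (hf.iterate i).measurable hBd
  have hbadint : ∀ i : Fin n, Integrable ((f^[(i : ℕ)] ⁻¹' Bd).indicator (fun _ => (1:ℝ))) μ :=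
    fun i => (integrable_const _).indicator (hbadm i)
  have hbadI : Integrable bad μ := integrable_finsetSum _ fun i _ => hbadint i
  have hbad : ∫ z, bad z ∂μ = n * μ.real Bd := by
    simp only [bad]
    rw [integral_finsetSum _ fun i _ => hbadint i]
    have : ∀ i : Fin n, ∫ z, (f^[(i : ℕ)] ⁻¹' Bd).indicator (fun _ => (1:ℝ)) z ∂μ = μ.real Bd := by
      intro i
      rw [integral_indicator_const _ (hbadm i), smul_eq_mul, mul_one]
      exact congrArg ENNReal.toReal ((hμ.iterate i).measure_preimage hBd.nullMeasurableSet)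
    simp [this]
  have hqlow : ∀ (a : Fin n → {p // p ∈ P}), ∀ z ∈ cyl f P n a, z ∈ Γ →
      -Real.log (q a) ≤ Real.log Q.card + n * (η / 2) + B * bad z := by
    intro a z hz hzΓ
    obtain ⟨y, hyQ, hy⟩ := hspan z hzΓ
    have h1 : (Q.card : ℝ)⁻¹ * ∏ i : Fin n, κ (f^[(i : ℕ)] y) (a i) ≤ q a :=
      Finset.single_le_sum (f := fun y => (Q.card : ℝ)⁻¹ * ∏ i : Fin n, κ (f^[(i : ℕ)] y) (a i))
        (fun y _ => mul_nonneg (inv_nonneg.2 hQ0.le) (hprodpos a y).le) hyQ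
    have h2 := Real.log_le_log (mul_pos (inv_pos.2 hQ0) (hprodpos a y)) h1
    rw [Real.log_mul (inv_pos.2 hQ0).ne' (hprodpos a y).ne', Real.log_inv,
      Real.log_prod (fun i _ => (hκpos _ _).ne')] at h2
    have h3 : ∀ i : Fin n, -(η / 2) - B * (f^[(i : ℕ)] ⁻¹' Bd).indicator (fun _ => (1:ℝ)) z ≤
        Real.log (κ (f^[(i : ℕ)] y) (a i)) := by
      intro i
      have hzi : f^[(i : ℕ)] z ∈ (a i : Set M) := by
        simp only [cyl, mem_iInter, mem_preimage] at hz
        exact hz i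
      by_cases hb : f^[(i : ℕ)] z ∈ Bd
      · rw [indicator_of_mem (by exact hb)]
        have h4 : θ / k ≤ κ (f^[(i : ℕ)] y) (a i) := by
          simp only [κ]; split_ifs <;> nlinarith
        have h5 := Real.log_le_log hθk h4
        have h6 : Real.log (θ / k) = -B := by
          rw [hBdef, ← Real.log_inv, inv_div]
        rw [h6] at h5
        linarith
      · rw [indicator_of_notMem (by exact hb)]
        simp only [Bd, mem_compl_iff, not_not, mem_iUnion] at hb
        obtain ⟨p, hp⟩ := hb
        have hpa : p = a i := by
          by_contra hne
          exact Set.disjoint_left.1 (hP.2.2 p.2 (a i).2 fun h => hne (Subtype.ext h))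
            ((hK p).2 hp) hzi
        have hnear : near (f^[(i : ℕ)] y) (a i) :=
          ⟨_, hpa ▸ hp, by rw [dist_comm]; exact hy i i.2.le⟩
        have h4 : 1 - θ ≤ κ (f^[(i : ℕ)] y) (a i) := by
          simp only [κ, if_pos hnear]; linarith
        have h5 := Real.log_le_log hθlt h4
        rw [hθ1, Real.log_exp] at h5
        linarith
    have h4 := Finset.sum_le_sum fun (i : Fin n) (_ : i ∈ Finset.univ) => h3 i
    rw [Finset.sum_sub_distrib, ← Finset.mul_sum] at h4
    simp only [Finset.sum_const, Finset.card_univ, Fintype.card_fin, nsmul_eq_mul] at h4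
    have : bad z = ∑ i : Fin n, (f^[(i : ℕ)] ⁻¹' Bd).indicator (fun _ => (1:ℝ)) z := rfl
    rw [this]
    linarith
  have hqpos : ∀ a, 0 < q a := fun a =>
    Finset.sum_pos (fun y _ => mul_pos (inv_pos.2 hQ0) (hprodpos a y))
      (Finset.card_pos.1 (by exact_mod_cast hQ0))
  have hcell : ∀ a, μ.real (cyl f P n a) * (-Real.log (q a)) ≤
      ∫ z in cyl f P n a, (Real.log Q.card + n * (η / 2) + B * bad z) ∂μ := by
    intro a
    have : μ.real (cyl f P n a) * (-Real.log (q a)) =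
        ∫ z in cyl f P n a, (-Real.log (q a)) ∂μ := by
      rw [setIntegral_const, smul_eq_mul]
    rw [this]
    refine setIntegral_mono_ae_restrict (integrableOn_const (measure_ne_top _ _))
      ((integrable_const _).add (hbadI.const_mul B)).integrableOn ?_
    have hae : ∀ᵐ z ∂μ, z ∈ Γ := hΓ
    filter_upwards [ae_restrict_mem (cyl_measurable hf hP n a), ae_restrict_of_ae hae] with z h1 h2
    exact hqlow a z h1 h2
  have hfin : refinedInfo f μ P n ≤ Real.log Q.card + n * (η / 2) + B * (n * μ.real Bd) := by
    rw [refinedInfo_eq]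
    calc ∑ a, negMulLog (μ.real (cyl f P n a))
        ≤ ∑ a, (μ.real (cyl f P n a) * (-Real.log (q a)) + q a - μ.real (cyl f P n a)) :=
          Finset.sum_le_sum fun a _ => gibbs measureReal_nonneg (hqpos a)
      _ = ∑ a, μ.real (cyl f P n a) * (-Real.log (q a)) + ∑ a, q a - 1 := by
          rw [Finset.sum_sub_distrib, Finset.sum_add_distrib, sum_cyl_measure hf hP]
      _ ≤ ∑ a, ∫ z in cyl f P n a, (Real.log Q.card + n * (η / 2) + B * bad z) ∂μ := by
          have := Finset.sum_le_sum fun a (_ : a ∈ Finset.univ) => hcell a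
          linarith
      _ = Real.log Q.card + n * (η / 2) + B * (n * μ.real Bd) := by
          rw [sum_cyl hf hP n μ (fun z => Real.log Q.card + n * (η / 2) + B * bad z)
            ((integrable_const _).add (hbadI.const_mul B)),
            integral_add (integrable_const _) (hbadI.const_mul B), integral_const_mul, hbad]
          simp
  rw [← hcard]
  have h7 : B * (η / 2 / (B + 1)) ≤ η / 2 := by
    rw [mul_div_assoc', div_le_iff₀ (by linarith)]
    nlinarith
  have h8 : B * (n * μ.real Bd) ≤ n * (η / 2) := by
    have : μ.real Bd ≤ η / 2 / (B + 1) := hKμ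
    calc B * (n * μ.real Bd) ≤ B * (n * (η / 2 / (B + 1))) := by gcongr
      _ = n * (B * (η / 2 / (B + 1))) := by ring
      _ ≤ n * (η / 2) := by gcongr
  linarith

/-- Goodwyn's inequality: `h_μ(f) ≤ h_top(f|Γ)` for invariant `μ` carried by `Γ`. -/
theorem measEntropy_le_topEntropyOn {f : M → M} (hf : Continuous f) {Γ : Set M} {μ : Measure M}
    [IsProbabilityMeasure μ] (hμ : MeasurePreserving f μ μ) (hΓ : μ Γᶜ = 0) :
    measEntropy f μ ≤ topEntropyOn f Γ := by
  refine EReal.le_of_forall_lt_iff_le.1 fun c hc => ?_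
  refine iSup₂_le fun P hP => EReal.coe_le_coe_iff.2 ?_
  refine le_of_forall_pos_le_add fun η hη => ?_
  obtain ⟨ε, hε, h⟩ := refinedInfo_le_sep hf hμ hΓ hP hη
  have h1 : Filter.atTop.limsup (fun n : ℕ => ((Real.log (sepCount f Γ n ε) / n : ℝ) : EReal)) < c :=
    lt_of_le_of_lt (le_iSup₂ (f := fun (ε : ℝ) (_ : 0 < ε) => Filter.atTop.limsup
      fun n : ℕ => ((Real.log (sepCount f Γ n ε) / n : ℝ) : EReal)) ε hε) hc
  have h2 := eventually_lt_of_limsup_lt h1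
  refine limsup_le_of_le ?_ ?_
  · exact isCoboundedUnder_le_of_le _ (x := 0) fun n =>
      div_nonneg (refinedInfo_nonneg f μ P n) (Nat.cast_nonneg n)
  · filter_upwards [h2, eventually_gt_atTop 0] with n hn hn0
    have hn0' : (0:ℝ) < n := by exact_mod_cast hn0
    have h3 : Real.log (sepCount f Γ n ε) / n < c := EReal.coe_lt_coe_iff.1 hn
    rw [div_lt_iff₀ hn0'] at h3
    rw [div_le_iff₀ hn0']
    nlinarith [h n]

end Goodwyn


/-! ### Lower bound for the entropy of the measure from separated sets -/

section LowerBound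

variable {Λ : Type*} [MetricSpace Λ] [CompactSpace Λ]

/-- Jensen's inequality for words coded injectively by `J` independent blocks and a remainder. -/
lemma count_blocks {α β γ : Type*} [Fintype β] [Fintype γ] (E : Finset α) (hE : E.Nonempty)
    (J : ℕ) (F : α → Fin J → β) (l : α → γ)
    (hinj : ∀ x ∈ E, ∀ y ∈ E, F x = F y → l x = l y → x = y) (ν : β → ℝ) (hν : ∀ b, 0 < ν b)
    (hsum : ∑ b, ν b ≤ 1) :
    E.card * Real.log E.card ≤ E.card * Real.log (Fintype.card γ) +
      ∑ x ∈ E, ∑ j, -Real.log (ν (F x j)) := by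
  classical
  obtain ⟨x₀, hx₀⟩ := hE
  have hγ : 0 < (Fintype.card γ : ℝ) := by
    have : 0 < Fintype.card γ := Fintype.card_pos_iff.2 ⟨l x₀⟩
    exact_mod_cast this
  have hc : 0 < (E.card : ℝ) := by exact_mod_cast Finset.card_pos.2 ⟨x₀, hx₀⟩
  let q : α → ℝ := fun x => (Fintype.card γ : ℝ)⁻¹ * ∏ j, ν (F x j)
  have hq : ∀ x, 0 < q x := fun x => mul_pos (inv_pos.2 hγ) (Finset.prod_pos fun j _ => hν _)
  have hqs : ∑ x ∈ E, q x ≤ 1 := by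
    have h1 : ∑ x ∈ E, ∏ j, ν (F x j) ≤ Fintype.card γ := by
      calc ∑ x ∈ E, ∏ j, ν (F x j)
          = ∑ p ∈ E.image fun x => (F x, l x), ∏ j, ν (p.1 j) := by
            rw [Finset.sum_image]
            intro x hx y hy hxy
            exact hinj x hx y hy (congrArg Prod.fst hxy) (congrArg Prod.snd hxy)
        _ ≤ ∑ p : (Fin J → β) × γ, ∏ j, ν (p.1 j) :=
            Finset.sum_le_sum_of_subset_of_nonneg (Finset.subset_univ _)
              fun p _ _ => Finset.prod_nonneg fun j _ => (hν _).le
        _ = Fintype.card γ * ∑ B : Fin J → β, ∏ j, ν (B j) := by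
            rw [Fintype.sum_prod_type, Finset.mul_sum]
            simp
        _ = Fintype.card γ * (∑ b, ν b) ^ J := by rw [Fintype.sum_pow]
        _ ≤ Fintype.card γ * 1 := by
            have := pow_le_one₀ (n := J) (Finset.sum_nonneg fun b _ => (hν b).le) hsum
            exact mul_le_mul_of_nonneg_left this hγ.le
        _ = Fintype.card γ := mul_one _
    simp only [q]
    rw [← Finset.mul_sum, inv_mul_le_iff₀ hγ, mul_one]
    exact h1
  have h := Finset.sum_le_sum fun x (_ : x ∈ E) =>
    gibbs (inv_nonneg.2 hc.le) (hq x)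
  rw [Finset.sum_sub_distrib, Finset.sum_add_distrib, Finset.sum_const, Finset.sum_const,
    nsmul_eq_mul, nsmul_eq_mul, mul_inv_cancel₀ hc.ne', ← Finset.mul_sum] at h
  have h2 : negMulLog (E.card : ℝ)⁻¹ = (E.card : ℝ)⁻¹ * Real.log E.card := by
    rw [negMulLog, Real.log_inv]; ring
  rw [h2, ← mul_assoc, mul_inv_cancel₀ hc.ne', one_mul] at h
  have h3 : ∑ x ∈ E, -Real.log (q x) = E.card * Real.log (Fintype.card γ) +
      ∑ x ∈ E, ∑ j, -Real.log (ν (F x j)) := by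
    rw [← nsmul_eq_mul, ← Finset.sum_const, ← Finset.sum_add_distrib]
    refine Finset.sum_congr rfl fun x _ => ?_
    simp only [q]
    rw [Real.log_mul (inv_pos.2 hγ).ne' (Finset.prod_pos fun j _ => hν _).ne', Real.log_inv,
      Real.log_prod fun j _ => (hν _).ne', Finset.sum_neg_distrib]
    ring
  rw [← h3]
  have h4 : Real.log E.card ≤ (E.card : ℝ)⁻¹ * ∑ x ∈ E, -Real.log (q x) := by linarith
  have h5 := mul_le_mul_of_nonneg_left h4 hc.le
  rwa [← mul_assoc, mul_inv_cancel₀ hc.ne', one_mul] at h5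

variable [MeasurableSpace Λ] [BorelSpace Λ]

/-- A set with negligible boundary is dominated by a continuous function of almost the same
integral. -/
lemma exists_majorant (μ : Measure Λ) [IsProbabilityMeasure μ] {s : Set Λ}
    (hs : μ (frontier s) = 0) {η : ℝ} (hη : 0 < η) :
    ∃ g : C(Λ, ℝ), (∀ z, 0 ≤ g z) ∧ (∀ z ∈ s, 1 ≤ g z) ∧ ∫ z, g z ∂μ ≤ μ.real s + η := by
  have hcl : μ (closure s) = μ s := by
    refine le_antisymm ?_ (measure_mono subset_closure)
    calc μ (closure s) ≤ μ (s ∪ frontier s) :=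
          measure_mono (closure_eq_self_union_frontier s).le
      _ ≤ μ s + μ (frontier s) := measure_union_le _ _
      _ = μ s := by rw [hs, add_zero]
  obtain ⟨U, hsU, hU, hUμ⟩ := (closure s).exists_isOpen_lt_add (μ := μ) (measure_ne_top _ _)
    (ε := ENNReal.ofReal η) (by simpa using hη)
  obtain ⟨g, hg0, hg1, hg⟩ := exists_continuous_zero_one_of_isClosed hU.isClosed_compl
    (isClosed_closure (s := s)) (disjoint_compl_left_iff_subset.2 hsU)
  refine ⟨g, fun z => (hg z).1, fun z hz => (hg1 (subset_closure hz)).ge, ?_⟩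
  calc ∫ z, g z ∂μ ≤ ∫ z, U.indicator (fun _ => (1:ℝ)) z ∂μ := by
        refine integral_mono (integrable_cont μ _ g.continuous)
          ((integrable_const _).indicator hU.measurableSet) fun z => ?_
        by_cases hz : z ∈ U
        · simpa [hz] using (hg z).2
        · simpa [hz] using (hg0 hz).le
    _ = μ.real U := by
        rw [integral_indicator_const _ hU.measurableSet, smul_eq_mul, mul_one]
    _ ≤ (μ (closure s) + ENNReal.ofReal η).toReal :=
        ENNReal.toReal_mono (by finiteness) hUμ.le
    _ = μ.real s + η := by
        rw [hcl, ENNReal.toReal_add (measure_ne_top _ _) ENNReal.ofReal_ne_top,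
          ENNReal.toReal_ofReal hη.le]; rfl

lemma null_frontier_iInter {ι : Type*} [Finite ι] (μ : Measure Λ) (s : ι → Set Λ)
    (h : ∀ i, μ (frontier (s i)) = 0) : μ (frontier (⋂ i, s i)) = 0 := by
  refine measure_mono_null (t := ⋃ i, frontier (s i)) ?_ (measure_iUnion_null h)
  intro z hz
  by_contra hcon
  simp only [mem_iUnion, not_exists] at hcon
  have h1 : ∀ i, z ∈ closure (s i) := fun i =>
    closure_mono (iInter_subset _ i) (frontier_subset_closure hz)
  have h2 : ∀ i, z ∈ interior (s i) := fun i => by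
    by_contra hi
    exact hcon i ⟨h1 i, hi⟩
  refine hz.2 ?_
  rw [interior_iInter_of_finite]
  exact mem_iInter.2 h2

/-- Small partitions whose elements have negligible boundary. -/
lemma exists_partition (μ : Measure Λ) [IsProbabilityMeasure μ] {ε : ℝ} (hε : 0 < ε) :
    ∃ P : Finset (Set Λ), IsMeasPartition P ∧ (∀ p ∈ P, μ (frontier p) = 0) ∧
      ∀ p ∈ P, ∀ x ∈ p, ∀ y ∈ p, dist x y ≤ ε := by
  classical
  have h1 : ∀ z : Λ, ∃ r ∈ Ioo (0:ℝ) (ε / 2), μ (frontier (Metric.ball z r)) = 0 := fun z => by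
    obtain ⟨r, hr, h⟩ := exists_null_frontier_thickening μ {z} (half_pos hε)
    exact ⟨r, hr, by rwa [Metric.thickening_singleton] at h⟩
  choose r hr hfr using h1
  obtain ⟨t, ht⟩ := isCompact_univ.elim_finite_subcover (fun z : Λ => Metric.ball z (r z))
    (fun z => Metric.isOpen_ball)
    fun z _ => mem_iUnion.2 ⟨z, Metric.mem_ball_self (hr z).1⟩
  let c : Λ → ({z // z ∈ t} → Bool) := fun y z => decide (y ∈ Metric.ball z.1 (r z.1))
  have hpre : ∀ b, c ⁻¹' {b} = ⋂ z : {z // z ∈ t},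
      if b z then Metric.ball z.1 (r z.1) else (Metric.ball z.1 (r z.1))ᶜ := by
    intro b
    ext y
    simp only [mem_preimage, mem_singleton_iff, mem_iInter, c, funext_iff]
    refine forall_congr' fun z => ?_
    cases b z <;> simp
  refine ⟨Finset.univ.image fun b => c ⁻¹' {b}, ⟨?_, ?_, ?_⟩, ?_, ?_⟩
  · intro p hp
    obtain ⟨b, -, rfl⟩ := Finset.mem_image.1 hp
    rw [hpre]
    refine MeasurableSet.iInter fun z => ?_
    split_ifs
    exacts [Metric.isOpen_ball.measurableSet, Metric.isOpen_ball.measurableSet.compl]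
  · exact eq_univ_of_forall fun y => mem_sUnion.2 ⟨c ⁻¹' {c y}, by simp, rfl⟩
  · intro p hp q hq hpq
    obtain ⟨b, -, rfl⟩ := Finset.mem_image.1 (Finset.mem_coe.1 hp)
    obtain ⟨b', -, rfl⟩ := Finset.mem_image.1 (Finset.mem_coe.1 hq)
    refine Set.disjoint_left.2 fun y hy hy' => hpq ?_
    have : b = b' := hy.symm.trans hy'
    rw [this]
  · intro p hp
    obtain ⟨b, -, rfl⟩ := Finset.mem_image.1 hp
    rw [hpre]
    refine null_frontier_iInter μ _ fun z => ?_
    split_ifs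
    · exact hfr _
    · rw [frontier_compl]; exact hfr _
  · intro p hp x hx y hy
    obtain ⟨b, -, rfl⟩ := Finset.mem_image.1 hp
    obtain ⟨z, hz, hxz⟩ : ∃ z ∈ t, x ∈ Metric.ball z (r z) := by simpa using ht (mem_univ x)
    have hcxy : c x = c y := (show c x = b from hx).trans (show c y = b from hy).symm
    have h2 : c x ⟨z, hz⟩ = true := by simpa [c] using hxz
    rw [hcxy] at h2
    have h3 : dist y z < r z := by simpa [c] using h2
    have h4 : dist x z < r z := by simpa using hxz
    have := dist_triangle_right x y z
    linarith [(hr z).2]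

lemma cyl_null_frontier {f : Λ → Λ} (hf : Continuous f) (μ : Measure Λ)
    (hμ : MeasurePreserving f μ μ) {P : Finset (Set Λ)} (hP : ∀ p ∈ P, μ (frontier p) = 0)
    (m : ℕ) (a : Fin m → {p // p ∈ P}) : μ (frontier (cyl f P m a)) = 0 := by
  refine null_frontier_iInter μ _ fun i => ?_
  refine measure_mono_null ((hf.iterate i).frontier_preimage_subset _) ?_
  rw [(hμ.iterate i).measure_preimage isClosed_frontier.measurableSet.nullMeasurableSet]
  exact hP _ (a i).2

lemma refinedInfo_le_log {f : Λ → Λ} (hf : Continuous f) (μ : Measure Λ)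
    [IsProbabilityMeasure μ] {P : Finset (Set Λ)} (hP : IsMeasPartition P) (m : ℕ) :
    refinedInfo f μ P m ≤ m * Real.log (Fintype.card {p // p ∈ P}) := by
  have hPne : Nonempty {p // p ∈ P} := by
    obtain ⟨z₀⟩ : Nonempty Λ := nonempty_of_isProbabilityMeasure μ
    have : z₀ ∈ ⋃₀ (↑P : Set (Set Λ)) := by rw [hP.2.1]; trivial
    obtain ⟨p, hp, -⟩ := this
    exact ⟨⟨p, hp⟩⟩
  have hk : 0 < ((Fintype.card {p // p ∈ P} : ℝ) ^ m)⁻¹ := by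
    have : 0 < (Fintype.card {p // p ∈ P} : ℝ) := by exact_mod_cast Fintype.card_pos
    positivity
  rw [refinedInfo_eq]
  refine (Finset.sum_le_sum fun a _ => gibbs measureReal_nonneg hk).trans ?_
  rw [Finset.sum_sub_distrib, Finset.sum_add_distrib, sum_cyl_measure hf hP, ← Finset.sum_mul,
    sum_cyl_measure hf hP, Finset.sum_const, Finset.card_univ, Fintype.card_fun, Fintype.card_fin,
    nsmul_eq_mul]
  push_cast
  rw [mul_inv_cancel₀ (inv_pos.1 hk).ne', Real.log_inv, Real.log_pow]
  simp

end LowerBound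


section LowerBound

variable {Λ : Type*} [MetricSpace Λ] [CompactSpace Λ]

lemma flow_iterate (φ : Flow ℝ Λ) (k : ℕ) (z : Λ) : (φ.toFun 1)^[k] z = φ (k : ℝ) z := by
  induction k generalizing z with
  | zero => simp [φ.map_zero_apply]
  | succ k ih =>
    rw [Function.iterate_succ_apply, ih]
    push_cast
    rw [φ.map_add]

/-- Points that are close remain close for all times in `[-T, T]`. -/
lemma flow_unif_back (φ : Flow ℝ Λ) (T : ℝ) {ε : ℝ} (hε : 0 < ε) :
    ∃ ε' > 0, ∀ s ∈ Icc (-T) T, ∀ x y : Λ, dist x y ≤ ε' → dist (φ s x) (φ s y) ≤ ε := by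
  have hc : Continuous fun p : Icc (-T) T × Λ => φ p.1.1 p.2 :=
    φ.continuous (continuous_subtype_val.comp continuous_fst) continuous_snd
  have hu := CompactSpace.uniformContinuous_of_continuous hc
  obtain ⟨δ, hδ, h⟩ := Metric.uniformContinuous_iff.1 hu ε hε
  refine ⟨δ / 2, half_pos hδ, fun s hs x y hxy => (h (a := (⟨s, hs⟩, x)) (b := (⟨s, hs⟩, y)) ?_).le⟩
  rw [Prod.dist_eq, dist_self]
  exact max_lt hδ (hxy.trans_lt (half_lt_self hδ))

lemma sum_range_mul (u : ℕ → ℝ) (J m : ℕ) :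
    ∑ k ∈ Finset.range (J * m), u k = ∑ a ∈ Finset.range m, ∑ j ∈ Finset.range J, u (a + j * m) := by
  induction J with
  | zero => simp
  | succ J ih =>
    rw [Nat.succ_mul, Finset.sum_range_add, ih, ← Finset.sum_add_distrib]
    refine Finset.sum_congr rfl fun a _ => ?_
    rw [Finset.sum_range_succ, add_comm (J * m) a]

lemma le_of_linear {A B D : ℝ} (h : ∀ N : ℕ, ∃ n ≥ N, A * n ≤ B + (n + 1) * D) : A ≤ D := by
  by_contra hcon
  push Not at hcon
  obtain ⟨N, hN⟩ := exists_nat_gt ((B + D) / (A - D))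
  obtain ⟨n, hn, h1⟩ := h N
  rw [div_lt_iff₀ (by linarith)] at hN
  have hn' : (N : ℝ) ≤ n := by exact_mod_cast hn
  nlinarith

variable [MeasurableSpace Λ] [BorelSpace Λ]

/-- Counting a separated set with blocks of length `m`, averaged over the `m` offsets. -/
lemma block_estimate {f : Λ → Λ} {P : Finset (Set Λ)} (hP : IsMeasPartition P)
    {ε : ℝ} (hdiam : ∀ p ∈ P, ∀ x ∈ p, ∀ y ∈ p, dist x y ≤ ε) {m : ℕ}
    (ν : (Fin m → {p // p ∈ P}) → ℝ) (hν : ∀ b, 0 < ν b) (hsum : ∑ b, ν b ≤ 1)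
    (g : Λ → ℝ) (hg : ∀ b, ∀ z ∈ cyl f P m b, -Real.log (ν b) ≤ g z)
    {n J : ℕ} (hJ : n < (J + 1) * m) (E : Finset Λ) (hE : E.Nonempty) (hsep : IsDynSep f n ε ↑E) :
    m * (E.card * Real.log E.card) ≤
      m * (E.card * (m * Real.log (Fintype.card {p // p ∈ P}))) +
        ∑ x ∈ E, ∑ k ∈ Finset.range (J * m), g (f^[k] x) := by
  classical
  have hcell : ∀ y : Λ, ∃ p : {p // p ∈ P}, y ∈ (p : Set Λ) := fun y => by
    have : y ∈ ⋃₀ (↑P : Set (Set Λ)) := by rw [hP.2.1]; trivial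
    obtain ⟨p, hp, hy⟩ := this
    exact ⟨⟨p, hp⟩, hy⟩
  choose pc hpc using hcell
  have key : ∀ a ∈ Finset.range m, E.card * Real.log E.card ≤
      E.card * (m * Real.log (Fintype.card {p // p ∈ P})) +
        ∑ x ∈ E, ∑ j ∈ Finset.range J, g (f^[a + j * m] x) := by
    intro a ha
    have ham : a < m := Finset.mem_range.1 ha
    have h := count_blocks E hE J (fun x j (i : Fin m) => pc (f^[a + j * m + i] x))
      (fun x (k : Fin m) => pc (f^[if (k : ℕ) < a then (k : ℕ) else J * m + k] x)) ?_ ν hν hsum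
    · rw [Fintype.card_fun, Fintype.card_fin] at h
      push_cast at h
      rw [Real.log_pow] at h
      refine h.trans (add_le_add le_rfl (Finset.sum_le_sum fun x _ => ?_))
      rw [← Fin.sum_univ_eq_sum_range (fun j => g (f^[a + j * m] x)) J]
      refine Finset.sum_le_sum fun j _ => hg _ _ ?_
      simp only [cyl, mem_iInter, mem_preimage]
      intro i
      rw [← Function.iterate_add_apply, add_comm (i : ℕ)]
      exact hpc _
    · intro x hx y hy h1 h2
      by_contra hne
      obtain ⟨t, htn, htd⟩ := hsep hx hy hne
      refine absurd htd (not_lt.2 ?_)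
      have hsame : pc (f^[t] x) = pc (f^[t] y) := by
        by_cases hta : t < a
        · have := congrFun h2 ⟨t, hta.trans ham⟩
          simpa [hta] using this
        by_cases htJ : t < a + J * m
        · have hm0 : 0 < m := by omega
          have hdiv : (t - a) / m < J := by
            rw [Nat.div_lt_iff_lt_mul hm0]; omega
          have hmod : (t - a) % m < m := Nat.mod_lt _ hm0
          have := congrFun (congrFun h1 ⟨(t - a) / m, hdiv⟩) ⟨(t - a) % m, hmod⟩
          have hEq : a + (t - a) / m * m + (t - a) % m = t := by
            have := Nat.div_add_mod (t - a) m
            rw [Nat.mul_comm] at this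
            omega
          simp only [hEq] at this
          exact this
        · have hlt : t - J * m < m := by
            rw [Nat.succ_mul] at hJ; omega
          have := congrFun h2 ⟨t - J * m, hlt⟩
          have h3 : ¬ (t - J * m < a) := by omega
          have h4 : J * m + (t - J * m) = t := by omega
          simp only [h3, if_false, h4] at this
          exact this
      exact hdiam _ (pc (f^[t] x)).2 _ (hpc _) _ (by rw [hsame]; exact hpc _)
  have h := Finset.sum_le_sum key
  rw [Finset.sum_add_distrib, Finset.sum_const, Finset.sum_const, Finset.card_range, nsmul_eq_mul,
    nsmul_eq_mul, Finset.sum_comm] at h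
  refine h.trans (add_le_add le_rfl (Finset.sum_le_sum fun x _ => ?_))
  rw [sum_range_mul (fun k => g (f^[k] x))]

/-- Entropy in blocks of length `m` dominates `m` times the growth rate of separated sets. -/
lemma le_refinedInfo {φ : Flow ℝ Λ} {Γ : Set Λ} (hUE : UEOn φ Γ) {μ : Measure Λ}
    [IsProbabilityMeasure μ] (hμ : FlowInvariant φ μ) (hΓ : μ Γᶜ = 0) {c ε₀ ε : ℝ}
    (hsep : ∀ η > 0, ∀ N : ℕ, ∃ n ≥ N, ∃ E : Finset Λ, E.Nonempty ∧ ↑E ⊆ Γ ∧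
      IsDynSep (φ.toFun 1) n ε₀ ↑E ∧ n * (c - η) ≤ Real.log E.card)
    (hback : ∀ s ∈ Icc (-1:ℝ) 1, ∀ x y : Λ, dist x y ≤ ε → dist (φ s x) (φ s y) ≤ ε₀)
    {P : Finset (Set Λ)} (hP : IsMeasPartition P) (hPf : ∀ p ∈ P, μ (frontier p) = 0)
    (hdiam : ∀ p ∈ P, ∀ x ∈ p, ∀ y ∈ p, dist x y ≤ ε) {m : ℕ} (hm : 0 < m) :
    c * m ≤ refinedInfo (φ.toFun 1) μ P m := by
  classical
  set f : Λ → Λ := φ.toFun 1 with hfdef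
  have hf : Continuous f := φ.continuous continuous_const continuous_id
  have hfμ : MeasurePreserving f μ μ := hμ 1
  have hm' : (0:ℝ) < m := by exact_mod_cast hm
  have hPne : Nonempty {p // p ∈ P} := by
    obtain ⟨z₀⟩ : Nonempty Λ := nonempty_of_isProbabilityMeasure μ
    have : z₀ ∈ ⋃₀ (↑P : Set (Set Λ)) := by rw [hP.2.1]; trivial
    obtain ⟨p, hp, -⟩ := this
    exact ⟨⟨p, hp⟩⟩
  set M : ℝ := (Fintype.card (Fin m → {p // p ∈ P}) : ℝ) with hM
  have hM1 : 1 ≤ M := by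
    have : 0 < Fintype.card (Fin m → {p // p ∈ P}) := Fintype.card_pos
    rw [hM]; exact_mod_cast this
  refine le_of_forall_pos_le_add fun η₀ hη₀ => ?_
  -- smoothing of the distribution of blocks
  obtain ⟨κ, hκ, hκη⟩ : ∃ κ > 0, κ * M ≤ η₀ / 4 :=
    ⟨η₀ / 4 / M, by positivity, by rw [div_mul_cancel₀]; positivity⟩
  have hden : 0 < 1 + κ * M := by positivity
  let ν : (Fin m → {p // p ∈ P}) → ℝ := fun b => (μ.real (cyl f P m b) + κ) / (1 + κ * M)
  have hν : ∀ b, 0 < ν b := fun b => div_pos (add_pos_of_nonneg_of_pos measureReal_nonneg hκ) hden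
  have hsum : ∑ b, ν b = 1 := by
    simp only [ν]
    rw [← Finset.sum_div, Finset.sum_add_distrib, sum_cyl_measure hf hP, Finset.sum_const,
      Finset.card_univ, nsmul_eq_mul, ← hM, mul_comm M, div_self hden.ne']
  have hν1 : ∀ b, ν b ≤ 1 := fun b => by
    rw [← hsum]
    exact Finset.single_le_sum (fun b _ => (hν b).le) (Finset.mem_univ b)
  have hlog0 : ∀ b, 0 ≤ -Real.log (ν b) := fun b => by
    have := Real.log_nonpos (hν b).le (hν1 b)
    linarith
  set W : ℝ := ∑ b, -Real.log (ν b) with hW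
  have hW0 : 0 ≤ W := Finset.sum_nonneg fun b _ => hlog0 b
  have hη1 : 0 < η₀ / 4 / (W + 1) := by positivity
  have hmaj := fun b : Fin m → {p // p ∈ P} =>
    exists_majorant μ (cyl_null_frontier hf μ hfμ hPf m b) hη1
  choose gb hgb0 hgb1 hgbI using hmaj
  let g : C(Λ, ℝ) := ∑ b, (-Real.log (ν b)) • gb b
  have hgv : ∀ z, g z = ∑ b, -Real.log (ν b) * gb b z := fun z => by
    simp [g, ContinuousMap.sum_apply]
  have hgcyl : ∀ b, ∀ z ∈ cyl f P m b, -Real.log (ν b) ≤ g z := fun b z hz => by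
    rw [hgv]
    have h1 : -Real.log (ν b) * 1 ≤ -Real.log (ν b) * gb b z :=
      mul_le_mul_of_nonneg_left (hgb1 b z hz) (hlog0 b)
    have h2 := Finset.single_le_sum (f := fun b => -Real.log (ν b) * gb b z)
      (fun b _ => mul_nonneg (hlog0 b) (hgb0 b z)) (Finset.mem_univ b)
    linarith
  have hg0 : ∀ z, 0 ≤ g z := fun z => by
    rw [hgv]
    exact Finset.sum_nonneg fun b _ => mul_nonneg (hlog0 b) (hgb0 b z)
  have hHν : ∀ b, -Real.log (ν b) * μ.real (cyl f P m b) ≤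
      negMulLog (μ.real (cyl f P m b)) + μ.real (cyl f P m b) * (η₀ / 4) := fun b => by
    rcases (measureReal_nonneg (μ := μ) (s := cyl f P m b)).eq_or_lt with h | h
    · rw [← h]; simp [negMulLog]
    · have h1 : Real.log (ν b) = Real.log (μ.real (cyl f P m b) + κ) - Real.log (1 + κ * M) := by
        simp only [ν]
        rw [Real.log_div (by positivity) hden.ne']
      have h2 : Real.log (μ.real (cyl f P m b)) ≤ Real.log (μ.real (cyl f P m b) + κ) :=
        Real.log_le_log h (by linarith)
      have h3 : Real.log (1 + κ * M) ≤ κ * M := by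
        have := Real.log_le_sub_one_of_pos hden
        linarith
      rw [h1, negMulLog]
      nlinarith
  have hgI : ∫ z, g z ∂μ ≤ refinedInfo f μ P m + η₀ / 2 := by
    simp only [hgv]
    rw [integral_finsetSum _ fun b _ => (integrable_cont μ _ (gb b).continuous).const_mul _]
    simp only [integral_const_mul]
    calc ∑ b, -Real.log (ν b) * ∫ z, gb b z ∂μ
        ≤ ∑ b, (negMulLog (μ.real (cyl f P m b)) + μ.real (cyl f P m b) * (η₀ / 4) +
            -Real.log (ν b) * (η₀ / 4 / (W + 1))) := by
          refine Finset.sum_le_sum fun b _ => ?_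
          have := mul_le_mul_of_nonneg_left (hgbI b) (hlog0 b)
          have := hHν b
          linarith
      _ = refinedInfo f μ P m + η₀ / 4 + W * (η₀ / 4 / (W + 1)) := by
          rw [Finset.sum_add_distrib, Finset.sum_add_distrib, ← Finset.sum_mul, ← Finset.sum_mul,
            sum_cyl_measure hf hP, refinedInfo_eq, one_mul]
      _ ≤ refinedInfo f μ P m + η₀ / 2 := by
          have : W * (η₀ / 4 / (W + 1)) ≤ η₀ / 4 := by
            rw [mul_div_assoc', div_le_iff₀ (by linarith)]
            nlinarith
          linarith
  obtain ⟨I, hI⟩ := hUE g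
  have hIeq : ∫ z, g z ∂μ = I := ue_integral μ hμ hΓ g hI
  have hI0 : 0 ≤ I := by rw [← hIeq]; exact integral_nonneg hg0
  obtain ⟨T₀, hT₀, hT⟩ := hI (η₀ / 4) (by positivity)
  have hlin : (c - η₀ / 4 / m) * m ≤ I + η₀ / 4 := by
    apply le_of_linear (B := m * (m * Real.log (Fintype.card {p // p ∈ P})))
    intro N
    obtain ⟨N₁, hN₁⟩ := exists_nat_gt (T₀ + m)
    obtain ⟨n, hn, E, hEne, hEΓ, hEs, hEc⟩ := hsep (η₀ / 4 / m) (by positivity) (max N N₁)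
    refine ⟨n, le_trans (le_max_left _ _) hn, ?_⟩
    set J := (n + 1) / m with hJdef
    have hJm : J * m ≤ n + 1 := Nat.div_mul_le_self _ _
    have hJm2 : n < (J + 1) * m := by
      have := Nat.lt_mul_div_succ (n + 1) hm
      rw [mul_comm, ← hJdef] at this
      omega
    have hT₀J : T₀ ≤ ((J * m : ℕ) : ℝ) := by
      have h1 : ((N₁ : ℕ) : ℝ) ≤ n := by exact_mod_cast le_trans (le_max_right _ _) hn
      have h2 : (n : ℝ) ≤ ((J * m : ℕ) : ℝ) + m := by
        have : n ≤ J * m + m := by rw [← Nat.succ_mul]; exact hJm2.le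
        exact_mod_cast this
      linarith
    have hEcard : 0 < (E.card : ℝ) := by exact_mod_cast Finset.card_pos.2 hEne
    set C₀ : ℝ := m * (E.card * Real.log E.card) -
      m * (E.card * (m * Real.log (Fintype.card {p // p ∈ P}))) with hC₀
    -- the estimate for the set `φ_s E`
    have hs : ∀ s ∈ Icc (0:ℝ) 1,
        C₀ ≤ ∑ x ∈ E, ∑ k ∈ Finset.range (J * m), g (φ (k + s) x) := by
      intro s hs
      have hinj : Function.Injective fun z => φ s z := fun x y hxy => by
        have := congrArg (fun z => φ (-s) z) hxy
        simpa [← φ.map_add, φ.map_zero_apply] using this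
      have hcd : (E.image fun z => φ s z).card = E.card := Finset.card_image_of_injective _ hinj
      have hcomm : ∀ (k : ℕ) z, f^[k] (φ s z) = φ (k + s) z := fun k z => by
        rw [hfdef, flow_iterate, ← φ.map_add]
      have hsep' : IsDynSep f n ε ↑(E.image fun z => φ s z) := by
        intro x hx y hy hxy
        simp only [Finset.coe_image, mem_image, Finset.mem_coe] at hx hy
        obtain ⟨x, hx, rfl⟩ := hx
        obtain ⟨y, hy, rfl⟩ := hy
        obtain ⟨j, hj, hd⟩ := hEs hx hy fun h => hxy (by rw [h])
        refine ⟨j, hj, ?_⟩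
        by_contra hcon
        push Not at hcon
        have := hback (-s) ⟨by linarith [hs.2], by linarith [hs.1]⟩ _ _ hcon
        rw [hcomm, hcomm, ← φ.map_add, ← φ.map_add] at this
        rw [flow_iterate, flow_iterate] at hd
        have he : -s + ((j : ℝ) + s) = j := by ring
        rw [he] at this
        exact absurd hd (not_lt.2 this)
      have h := block_estimate hP hdiam ν hν hsum.le g hgcyl hJm2
        (E.image fun z => φ s z) (hEne.image _) hsep'
      rw [hcd, Finset.sum_image fun x _ y _ hxy => hinj hxy] at h
      simp only [hcomm] at h
      rw [hC₀]
      linarith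
    have hcont : ∀ (k : ℕ) (x : Λ), Continuous fun s : ℝ => g (φ (k + s) x) := fun k x =>
      g.continuous.comp (φ.continuous (continuous_const.add continuous_id) continuous_const)
    have hint : C₀ ≤ ∑ x ∈ E, ∫ t in (0:ℝ)..((J * m : ℕ) : ℝ), g (φ t x) := by
      have h1 : ∫ s in (0:ℝ)..1, C₀ ≤
          ∫ s in (0:ℝ)..1, ∑ x ∈ E, ∑ k ∈ Finset.range (J * m), g (φ (k + s) x) := by
        refine intervalIntegral.integral_mono_on zero_le_one (continuous_const.intervalIntegrable _ _)
          ?_ hs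
        exact (continuous_finsetSum _ fun x _ => continuous_finsetSum _ fun k _ =>
          hcont k x).intervalIntegrable _ _
      rw [intervalIntegral.integral_finsetSum fun x _ =>
        (continuous_finsetSum _ fun k _ => hcont k x).intervalIntegrable _ _] at h1
      simp only [intervalIntegral.integral_const, sub_zero, one_smul] at h1
      refine h1.trans (Finset.sum_le_sum fun x _ => ?_)
      rw [intervalIntegral.integral_finsetSum fun k _ => (hcont k x).intervalIntegrable _ _]
      have h2 := intervalIntegral.sum_integral_adjacent_intervals (μ := volume)
        (f := fun t => g (φ t x)) (a := fun k : ℕ => (k : ℝ)) (n := J * m)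
        fun k _ => (continuous_test φ g x).intervalIntegrable _ _
      simp only [Nat.cast_zero] at h2
      rw [← h2]
      refine (Finset.sum_congr rfl fun k _ => ?_).le
      have h3 := intervalIntegral.integral_comp_add_left (fun t => g (φ t x)) (k : ℝ)
        (a := 0) (b := 1)
      rw [h3, add_zero]
      push_cast
      rfl
    have hUEx : ∀ x ∈ E, ∫ t in (0:ℝ)..((J * m : ℕ) : ℝ), g (φ t x) ≤
        (I + η₀ / 4) * (n + 1) := fun x hx => by
      have h1 := (abs_le.1 (hT _ hT₀J x (hEΓ hx))).2
      have h2 : ((J * m : ℕ) : ℝ) ≤ n + 1 := by exact_mod_cast hJm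
      have h3 : (I + η₀ / 4) * ((J * m : ℕ) : ℝ) ≤ (I + η₀ / 4) * (n + 1) :=
        mul_le_mul_of_nonneg_left h2 (by linarith)
      linarith
    have h5 := hint.trans (Finset.sum_le_sum hUEx)
    rw [Finset.sum_const, nsmul_eq_mul, hC₀] at h5
    have h6 : m * Real.log E.card - m * (m * Real.log (Fintype.card {p // p ∈ P})) ≤
        (I + η₀ / 4) * (n + 1) := by
      refine le_of_mul_le_mul_left ?_ hEcard
      linarith
    have h7 := mul_le_mul_of_nonneg_left hEc hm'.le
    linarith
  have h8 : (c - η₀ / 4 / m) * m = c * m - η₀ / 4 := by field_simp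
  rw [h8, ← hIeq] at hlin
  linarith

/-- If time averages are uniform on `Γ` and `Γ` contains, for arbitrarily large `n`, about
`exp (c n)` points that are `(n,ε₀)`-separated, the invariant measure has entropy at least `c`. -/
theorem le_measEntropy {φ : Flow ℝ Λ} {Γ : Set Λ} (hUE : UEOn φ Γ) {μ : Measure Λ}
    [IsProbabilityMeasure μ] (hμ : FlowInvariant φ μ) (hΓ : μ Γᶜ = 0) {c ε₀ : ℝ} (hε₀ : 0 < ε₀)
    (hsep : ∀ η > 0, ∀ N : ℕ, ∃ n ≥ N, ∃ E : Finset Λ, E.Nonempty ∧ ↑E ⊆ Γ ∧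
      IsDynSep (φ.toFun 1) n ε₀ ↑E ∧ n * (c - η) ≤ Real.log E.card) :
    (c : EReal) ≤ measEntropy (φ.toFun 1) μ := by
  obtain ⟨ε, hε, hback⟩ := flow_unif_back φ 1 hε₀
  obtain ⟨P, hP, hPf, hdiam⟩ := exists_partition μ hε
  have hf : Continuous (φ.toFun 1) := φ.continuous continuous_const continuous_id
  refine le_trans (EReal.coe_le_coe_iff.2 ?_) (le_iSup₂ (f := fun (P : Finset (Set Λ))
    (_ : IsMeasPartition P) => ((partEntropy (φ.toFun 1) μ P : ℝ) : EReal)) P hP)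
  refine le_limsup_of_frequently_le (Eventually.frequently ?_) ?_
  · filter_upwards [eventually_gt_atTop 0] with m hm
    have hm' : (0:ℝ) < m := by exact_mod_cast hm
    rw [le_div_iff₀ hm']
    exact le_refinedInfo hUE hμ hΓ hsep hback hP hPf hdiam hm
  · refine isBoundedUnder_of_eventually_le (a := Real.log (Fintype.card {p // p ∈ P})) ?_
    filter_upwards [eventually_gt_atTop 0] with m hm
    have hm' : (0:ℝ) < m := by exact_mod_cast hm
    rw [div_le_iff₀ hm', mul_comm]
    exact refinedInfo_le_log hf μ hP m

end LowerBound


/-! ### Vertex shifts: words, Birkhoff sums and continuity -/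

section Shift

variable {B : Type} [Fintype B] [MetricSpace B] {Adj : B → B → Prop}

/-- The points of the vertex shift of `Adj`. -/
abbrev VS (Adj : B → B → Prop) : Type := ↥(vertexShift Adj)

/-- The `n`-th power of the shift, for `n : ℤ`. -/
def sh (n : ℤ) (x : VS Adj) : VS Adj :=
  ⟨fun i => x.1 (i + n), fun i => by
    have := x.2 (i + n)
    rwa [add_right_comm] at this⟩

lemma sh_apply (n i : ℤ) (x : VS Adj) : (sh n x).1 i = x.1 (i + n) := rfl

lemma sh_sh (a b : ℤ) (x : VS Adj) : sh a (sh b x) = sh (a + b) x :=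
  Subtype.ext (funext fun i => by simp only [sh_apply, add_assoc])

lemma sh_zero (x : VS Adj) : sh 0 x = x :=
  Subtype.ext (funext fun i => by simp only [sh_apply, add_zero])

/-- Birkhoff sums for the shift. -/
noncomputable def bs (f : VS Adj → ℝ) (n : ℕ) (x : VS Adj) : ℝ :=
  ∑ i ∈ Finset.range n, f (sh i x)

lemma bs_zero (f : VS Adj → ℝ) (x : VS Adj) : bs f 0 x = 0 := by simp [bs]

lemma bs_succ (f : VS Adj → ℝ) (n : ℕ) (x : VS Adj) :
    bs f (n + 1) x = bs f n x + f (sh n x) := Finset.sum_range_succ _ _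

lemma bs_add (f : VS Adj → ℝ) (m n : ℕ) (x : VS Adj) :
    bs f (m + n) x = bs f m x + bs f n (sh m x) := by
  simp only [bs, Finset.sum_range_add, sh_sh]
  congr 1
  refine Finset.sum_congr rfl fun i _ => ?_
  push_cast
  rw [add_comm (m : ℤ)]

lemma bs_sub_smul (f g : VS Adj → ℝ) (J : ℝ) (n : ℕ) (x : VS Adj) :
    bs (fun x => f x - J * g x) n x = bs f n x - J * bs g n x := by
  simp only [bs, Finset.sum_sub_distrib, Finset.mul_sum]

lemma bs_le (f : VS Adj → ℝ) {R : ℝ} (hf : ∀ x, f x ≤ R) (n : ℕ) (x : VS Adj) :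
    bs f n x ≤ n * R := by
  have := Finset.sum_le_sum fun i (_ : i ∈ Finset.range n) => hf (sh (i : ℤ) x)
  simpa [bs] using this

lemma le_bs (f : VS Adj → ℝ) {ρ : ℝ} (hf : ∀ x, ρ ≤ f x) (n : ℕ) (x : VS Adj) :
    n * ρ ≤ bs f n x := by
  have := Finset.sum_le_sum fun i (_ : i ∈ Finset.range n) => hf (sh (i : ℤ) x)
  simpa [bs] using this

lemma bs_mono {f : VS Adj → ℝ} (hf : ∀ x, 0 < f x) {m n : ℕ} (h : m ≤ n) (x : VS Adj) :
    bs f m x ≤ bs f n x := by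
  obtain ⟨k, rfl⟩ := Nat.exists_eq_add_of_le h
  rw [bs_add]
  have := le_bs f (fun x => (hf x).le) k (sh m x)
  simp only [mul_zero] at this
  linarith

/-- The word of length `L` of `x` starting at coordinate `0`. -/
def wd (x : VS Adj) (L : ℕ) : List B := (List.range L).map fun i : ℕ => x.1 (i : ℤ)

@[simp] lemma wd_length (x : VS Adj) (L : ℕ) : (wd x L).length = L := by simp [wd]

lemma wd_getElem (x : VS Adj) (L i : ℕ) (h : i < (wd x L).length) :
    (wd x L)[i] = x.1 (i : ℤ) := by simp [wd]

lemma wd_eq_iff {x y : VS Adj} {L : ℕ} : wd x L = wd y L ↔ ∀ i < L, x.1 (i : ℤ) = y.1 (i : ℤ) := by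
  simp [wd]

lemma wd_eq_iff' {x : VS Adj} {w : List B} :
    wd x w.length = w ↔ ∀ (i : ℕ) (h : i < w.length), x.1 (i : ℤ) = w[i] := by
  constructor
  · intro h i hi
    have := wd_getElem x w.length i (by simpa using hi)
    rw [← this]
    simp only [h]
  · intro h
    refine List.ext_getElem (by simp) fun i h1 h2 => ?_
    rw [wd_getElem, h i h2]

lemma wd_add (x : VS Adj) (L L' : ℕ) : wd x (L + L') = wd x L ++ wd (sh L x) L' := by
  simp only [wd, List.range_add, List.map_append, List.map_map]
  congr 1
  refine List.map_congr_left fun i _ => ?_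
  simp only [Function.comp, sh_apply]
  push_cast
  rw [add_comm]

lemma wd_zero (x : VS Adj) : wd x 0 = [] := rfl

lemma wd_eq_mono {x y : VS Adj} {L L' : ℕ} (h : wd x L = wd y L) (hL : L' ≤ L) :
    wd x L' = wd y L' :=
  wd_eq_iff.2 fun i hi => wd_eq_iff.1 h i (by omega)

lemma finite_wd (L : ℕ) : {w : List B | w.length = L}.Finite := List.finite_length_eq B L

lemma isClosed_vertexShift : IsClosed (vertexShift Adj) := by
  have : vertexShift Adj = ⋂ i : ℤ, (fun x : ℤ → B => (x i, x (i + 1))) ⁻¹' {p | Adj p.1 p.2} := by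
    ext x; simp [vertexShift]
  rw [this]
  refine isClosed_iInter fun i => IsClosed.preimage ?_ (isClosed_discrete _)
  exact (continuous_apply i).prodMk (continuous_apply (i + 1))

instance : CompactSpace (VS Adj) :=
  isCompact_iff_compactSpace.1 (isClosed_vertexShift.isCompact)

lemma continuous_coord (i : ℤ) : Continuous fun x : VS Adj => x.1 i :=
  (continuous_apply i).comp continuous_subtype_val

lemma continuous_sh (n : ℤ) : Continuous (sh n : VS Adj → VS Adj) :=
  Continuous.subtype_mk (continuous_pi fun i => continuous_coord (i + n)) _

lemma isClopen_coord_eq (i : ℤ) : IsClosed {p : VS Adj × VS Adj | p.1.1 i = p.2.1 i} :=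
  isClosed_eq ((continuous_coord i).comp continuous_fst) ((continuous_coord i).comp continuous_snd)

/-- A continuous function is determined up to `ε` by finitely many coordinates. -/
lemma agree {N : Type*} [PseudoMetricSpace N] {g : VS Adj → N} (hg : Continuous g) {ε : ℝ}
    (hε : 0 < ε) :
    ∃ K : ℕ, ∀ x y : VS Adj, (∀ i : ℤ, |i| ≤ K → x.1 i = y.1 i) → dist (g x) (g y) < ε := by
  by_contra hcon
  push Not at hcon
  let t : ℕ → Set (VS Adj × VS Adj) := fun K =>
    {p | (∀ i : ℤ, |i| ≤ K → p.1.1 i = p.2.1 i)} ∩ {p | ε ≤ dist (g p.1) (g p.2)}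
  have hcl : ∀ K, IsClosed (t K) := fun K => by
    refine IsClosed.inter ?_ (isClosed_le continuous_const
      ((hg.comp continuous_fst).dist (hg.comp continuous_snd)))
    simp only [setOf_forall]
    exact isClosed_iInter fun i => isClosed_iInter fun _ => isClopen_coord_eq i
  obtain ⟨p, hp⟩ := IsCompact.nonempty_iInter_of_sequence_nonempty_isCompact_isClosed t
    (fun K p hp => ⟨fun i hi => hp.1 i (hi.trans (by push_cast; linarith)), hp.2⟩)
    (fun K => by
      obtain ⟨x, y, h1, h2⟩ := hcon K
      exact ⟨(x, y), h1, h2⟩) (hcl 0).isCompact hcl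
  rw [mem_iInter] at hp
  have : p.1 = p.2 := Subtype.ext (funext fun i => (hp i.natAbs).1 i (by simp))
  have h2 := (hp 0).2
  simp only [mem_setOf_eq, this, dist_self] at h2
  linarith

lemma exists_bound_vs {g : VS Adj → ℝ} (hg : Continuous g) : ∃ C > 0, ∀ x, |g x| ≤ C := by
  obtain ⟨C, hC⟩ := isCompact_univ.exists_bound_of_continuousOn hg.continuousOn
  exact ⟨|C| + 1, by positivity, fun x => (hC x (mem_univ x)).trans (by linarith [le_abs_self C])⟩

/-- Birkhoff sums over equal words differ by `o(L)`. -/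
lemma osc {f : VS Adj → ℝ} (hf : Continuous f) {ε : ℝ} (hε : 0 < ε) :
    ∃ C > 0, ∀ (L : ℕ) (x y : VS Adj), wd x L = wd y L → |bs f L x - bs f L y| ≤ ε * L + C := by
  classical
  obtain ⟨K, hK⟩ := agree hf hε
  obtain ⟨D, hD, hfD⟩ := exists_bound_vs hf
  refine ⟨2 * K * (2 * D) + 1, by positivity, fun L x y hxy => ?_⟩
  have h1 : |bs f L x - bs f L y| ≤
      ∑ i ∈ Finset.range L, |f (sh i x) - f (sh i y)| := by
    simp only [bs, ← Finset.sum_sub_distrib]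
    exact Finset.abs_sum_le_sum_abs _ _
  -- only the first and the last `K` summands are not controlled by agreement of the words
  have h2 : ∀ i ∈ Finset.range L, |f (sh i x) - f (sh i y)| ≤
      ε + ((if i < K then 2 * D else 0) + (if L - 1 - i < K then 2 * D else 0)) := by
    intro i hi
    have hiL := Finset.mem_range.1 hi
    have h3 : |f (sh i x) - f (sh i y)| ≤ 2 * D := by
      have := abs_sub (f (sh i x)) (f (sh i y))
      linarith [hfD (sh i x), hfD (sh i y)]
    by_cases hlo : i < K
    · rw [if_pos hlo]; split_ifs <;> linarith
    by_cases hhi : L - 1 - i < K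
    · rw [if_pos hhi]; split_ifs; linarith
    rw [if_neg hlo, if_neg hhi]
    have := hK (sh i x) (sh i y) fun k hk => by
      rw [abs_le] at hk
      simp only [sh_apply]
      have h4 := wd_eq_iff.1 hxy (k + i).toNat (by omega)
      rwa [Int.toNat_of_nonneg (by omega)] at h4
    rw [Real.dist_eq] at this
    linarith
  refine h1.trans ((Finset.sum_le_sum h2).trans ?_)
  rw [Finset.sum_add_distrib, Finset.sum_add_distrib, Finset.sum_const, Finset.card_range,
    Finset.sum_range_reflect (fun i => if i < K then 2 * D else 0) L, nsmul_eq_mul,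
    ← Finset.sum_filter, Finset.sum_const, nsmul_eq_mul]
  have h5 : (((Finset.range L).filter fun i => i < K).card : ℝ) ≤ K := by
    have : ((Finset.range L).filter fun i => i < K).card ≤ (Finset.range K).card :=
      Finset.card_le_card fun i hi => by
        simp only [Finset.mem_filter, Finset.mem_range] at hi ⊢
        exact hi.2
    rw [Finset.card_range] at this
    exact_mod_cast this
  nlinarith

end Shift


/-! ### Suspension flows over vertex shifts: upper bound for the entropy -/

section Suspension

variable {B : Type} [Fintype B] [MetricSpace B] {Adj : B → B → Prop}
variable {Λ : Type*} [MetricSpace Λ] [CompactSpace Λ]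

/-- The flow `φ` presented as a suspension of the vertex shift of `Adj`: `E` embeds the base,
`r` is the roof function, with values in `[lo, hi]`. -/
structure Susp (Adj : B → B → Prop) (φ : Flow ℝ Λ) where
  E : VS Adj → Λ
  r : VS Adj → ℝ
  lo : ℝ
  hi : ℝ
  contE : Continuous E
  contr : Continuous r
  lo_pos : 0 < lo
  lo_le : ∀ x, lo ≤ r x
  le_hi : ∀ x, r x ≤ hi
  step : ∀ x, φ (r x) (E x) = E (sh 1 x)
  surj : ∀ z, ∃ x s, 0 ≤ s ∧ s < r x ∧ φ s (E x) = z
  uniq : ∀ x y s u, 0 ≤ s → s < r x → 0 ≤ u → u < r y → φ s (E x) = φ u (E y) → x = y ∧ s = u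

variable {φ : Flow ℝ Λ} (P : Susp Adj φ)

/-- The part of the suspension lying over the set `Y` of base points. -/
def Susp.over (Y : Set (VS Adj)) : Set Λ :=
  {z | ∃ x ∈ Y, ∃ s, 0 ≤ s ∧ s ≤ P.r x ∧ φ s (P.E x) = z}

lemma Susp.pos (x : VS Adj) : 0 < P.r x := P.lo_pos.trans_le (P.lo_le x)

lemma Susp.step_n (n : ℕ) (x : VS Adj) : φ (bs P.r n x) (P.E x) = P.E (sh n x) := by
  induction n with
  | zero => simp [bs_zero, φ.map_zero_apply, sh_zero]
  | succ n ih =>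
    rw [bs_succ, add_comm, φ.map_add, ih, P.step, sh_sh]
    push_cast
    rw [add_comm]

lemma Susp.flow_eq (n : ℕ) (x : VS Adj) (t : ℝ) :
    φ t (P.E x) = φ (t - bs P.r n x) (P.E (sh n x)) := by
  rw [← P.step_n, ← φ.map_add, sub_add_cancel]

lemma exists_floor (f : ℕ → ℝ) (h0 : f 0 = 0) {t : ℝ} (ht : 0 ≤ t) {N : ℕ} (hN : t < f N) :
    ∃ i < N, f i ≤ t ∧ t < f (i + 1) := by
  induction N with
  | zero => linarith
  | succ N ih =>
    by_cases h : t < f N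
    · obtain ⟨i, hi, h⟩ := ih h
      exact ⟨i, by omega, h⟩
    · exact ⟨N, by omega, not_lt.1 h, hN⟩

lemma drift (f : VS Adj → ℝ) {x y : VS Adj} {N : ℕ} {d : ℝ}
    (h : ∀ i < N, |f (sh i x) - f (sh i y)| ≤ d) (i k : ℕ) (hik : i + k ≤ N) :
    |(bs f (i + k) x - bs f (i + k) y) - (bs f i x - bs f i y)| ≤ k * d := by
  induction k with
  | zero => simp
  | succ k ih =>
    have h1 := ih (by omega)
    have h2 := h (i + k) (by omega)
    rw [← add_assoc, bs_succ, bs_succ]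
    push_cast at h2 ⊢
    rw [abs_le] at h1 h2 ⊢
    constructor <;> linarith

lemma Susp.close {ε : ℝ} (hε : 0 < ε) :
    ∃ δ > 0, ∃ K : ℕ, ∀ x y : VS Adj, (∀ i : ℤ, |i| ≤ K → x.1 i = y.1 i) → ∀ u v : ℝ,
      0 ≤ u → u ≤ P.hi → |u - v| ≤ δ → dist (φ u (P.E x)) (φ v (P.E y)) ≤ ε := by
  obtain ⟨ε', hε', h1⟩ := flow_unif_back φ P.hi (half_pos hε)
  obtain ⟨K, hK⟩ := agree P.contE hε'
  have hc : Continuous fun p : Icc (-1 : ℝ) 1 × Λ => φ p.1.1 p.2 :=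
    φ.continuous (continuous_subtype_val.comp continuous_fst) continuous_snd
  obtain ⟨δ, hδ, h2⟩ := Metric.uniformContinuous_iff.1
    (CompactSpace.uniformContinuous_of_continuous hc) (ε / 2) (half_pos hε)
  refine ⟨min (δ / 2) 1, by positivity, K, fun x y hxy u v hu hu' huv => ?_⟩
  have h3 := h1 u ⟨by linarith, hu'⟩ _ _ (hK x y hxy).le
  have hv1 : |v - u| ≤ 1 := by rw [abs_sub_comm]; exact huv.trans (min_le_right _ _)
  have hv2 : |v - u| < δ := by
    rw [abs_sub_comm]
    exact (huv.trans (min_le_left _ _)).trans_lt (half_lt_self hδ)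
  have h4 := h2 (a := (⟨0, by norm_num⟩, φ u (P.E y))) (b := (⟨v - u, abs_le.1 hv1⟩, φ u (P.E y))) (by
    rw [Prod.dist_eq, dist_self]
    refine max_lt ?_ hδ
    rw [Subtype.dist_eq, Real.dist_eq, zero_sub, abs_neg]
    exact hv2)
  simp only [φ.map_zero_apply, ← φ.map_add, sub_add_cancel] at h4
  have := dist_triangle (φ u (P.E x)) (φ u (P.E y)) (φ v (P.E y))
  linarith

lemma topEntropyOn_le {f : Λ → Λ} {K : Set Λ} {c : ℝ}
    (h : ∀ ε > 0, ∀ η > 0, ∃ C : ℝ, ∀ n : ℕ, ∀ Q : Finset Λ, ↑Q ⊆ K → IsDynSep f n ε ↑Q →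
      Real.log Q.card ≤ (c + η) * n + C) : topEntropyOn f K ≤ (c : EReal) := by
  refine iSup₂_le fun ε hε => ?_
  refine EReal.le_of_forall_lt_iff_le.1 fun c' hc' => ?_
  have hc'' : c < c' := EReal.coe_lt_coe_iff.1 hc'
  obtain ⟨C, hC⟩ := h ε hε ((c' - c) / 2) (by linarith)
  refine limsup_le_of_le (by isBoundedDefault) ?_
  obtain ⟨N, hN⟩ := exists_nat_gt (|C| / ((c' - c) / 2))
  filter_upwards [eventually_ge_atTop (N + 1)] with n hn
  obtain ⟨Q, hQ, hsep, hcard⟩ := exists_max_sep (f := f) K n hε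
  have h1 := hC n Q hQ hsep
  rw [hcard] at h1
  refine EReal.coe_le_coe_iff.2 ?_
  have hn0 : (N : ℝ) + 1 ≤ n := by exact_mod_cast hn
  have hN0 : (0 : ℝ) ≤ N := Nat.cast_nonneg _
  rw [div_le_iff₀ (by linarith)]
  rw [div_lt_iff₀ (by linarith)] at hN
  have h2 : (N : ℝ) * ((c' - c) / 2) ≤ n * ((c' - c) / 2) :=
    mul_le_mul_of_nonneg_right (by linarith) (by linarith)
  linarith [le_abs_self C]

end Suspension


section UpperBound

variable {B : Type} [Fintype B] [MetricSpace B] {Adj : B → B → Prop}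
variable {Λ : Type*} [MetricSpace Λ] [CompactSpace Λ] {φ : Flow ℝ Λ}

/-- The words of length `m` of points of `Y` whose orbit segment takes time at most `t`. -/
def tw (f : VS Adj → ℝ) (Y : Set (VS Adj)) (m : ℕ) (t : ℝ) : Set (List B) :=
  {w | ∃ x ∈ Y, wd x m = w ∧ bs f m x ≤ t}

lemma finite_tw (f : VS Adj → ℝ) (Y : Set (VS Adj)) (m : ℕ) (t : ℝ) : (tw f Y m t).Finite :=
  (finite_wd m).subset fun w ⟨x, _, hx, _⟩ => by simp [← hx]

lemma agree_of_wd {x y : VS Adj} {K' N : ℕ}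
    (h : wd (sh (-(K' : ℤ)) x) (N + 2 * K' + 1) = wd (sh (-(K' : ℤ)) y) (N + 2 * K' + 1))
    {i : ℕ} (hi : i ≤ N) : ∀ k : ℤ, |k| ≤ K' → (sh i x).1 k = (sh i y).1 k := by
  intro k hk
  rw [abs_le] at hk
  have := wd_eq_iff.1 h (k + i + K').toNat (by omega)
  rw [Int.toNat_of_nonneg (by omega)] at this
  simpa [sh_apply] using this

lemma floor_close {a b δ : ℝ} (hδ : 0 < δ) (h : ⌊a / δ⌋ = ⌊b / δ⌋) : |a - b| ≤ δ := by
  have := Int.abs_sub_lt_one_of_floor_eq_floor h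
  rw [← sub_div, abs_div, abs_of_pos hδ, div_lt_one hδ] at this
  exact this.le

lemma floor_step {a b δ : ℝ} (hδ : 0 < δ) (h : |a - b| ≤ δ) :
    0 ≤ ⌊a / δ⌋ - ⌊b / δ⌋ + 1 ∧ ⌊a / δ⌋ - ⌊b / δ⌋ + 1 < 3 := by
  have h1 : |a / δ - b / δ| ≤ 1 := by
    rw [← sub_div, abs_div, abs_of_pos hδ, div_le_one hδ]; exact h
  rw [abs_le] at h1
  have ha := Int.floor_le (a / δ)
  have ha' := Int.lt_floor_add_one (a / δ)
  have hb := Int.floor_le (b / δ)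
  have hb' := Int.lt_floor_add_one (b / δ)
  constructor
  · have : (⌊b / δ⌋ : ℝ) < ⌊a / δ⌋ + 2 := by linarith
    have : ⌊b / δ⌋ < ⌊a / δ⌋ + 2 := by exact_mod_cast this
    omega
  · have : (⌊a / δ⌋ : ℝ) < ⌊b / δ⌋ + 2 := by linarith
    have : ⌊a / δ⌋ < ⌊b / δ⌋ + 2 := by exact_mod_cast this
    omega

/-- Points of a separated set are coded by a word, an initial height and a sequence of
rounded increments of the time drift along blocks of length `K`. -/
lemma Susp.sep_le (P : Susp Adj φ) {Y : Set (VS Adj)} (hY : ∀ n : ℤ, ∀ x ∈ Y, sh n x ∈ Y)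
    {c C : ℝ} (hc : 0 ≤ c) (hC : 0 < C) (hcount : ∀ (m : ℕ) (t : ℝ), 0 ≤ t →
      ((tw P.r Y m t).ncard : ℝ) ≤ C * Real.exp (c * t)) {ε : ℝ} (hε : 0 < ε) {K : ℕ} (hK : 1 ≤ K) :
    ∃ A : ℝ, ∀ n : ℕ, ∀ Q : Finset Λ, ↑Q ⊆ P.over Y → IsDynSep (φ.toFun 1) n ε ↑Q →
      Real.log Q.card ≤ (c + 3 / (K * P.lo)) * n + A := by
  classical
  obtain ⟨δ', hδ', K₁, hclose⟩ := P.close hε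
  set δ := δ' / 3 with hδdef
  have hδ : 0 < δ := by positivity
  have hKpos : (0 : ℝ) < K := by exact_mod_cast hK
  obtain ⟨K₂, hK₂⟩ := agree P.contr (div_pos hδ hKpos)
  set K' := max K₁ K₂ with hK'
  set R := P.hi with hR
  set N₀ := ⌊R / δ⌋₊ + 1 with hN₀
  set C₁ : ℝ := (K + 2 * K' + 2) * |R| with hC₁
  have hlo := P.lo_pos
  set q : ℝ := K * P.lo with hq
  have hq0 : 0 < q := by positivity
  refine ⟨3 * (|R| / q + 2) + |Real.log C| + c * C₁ + Real.log N₀, fun n Q hQ hsep => ?_⟩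
  rcases Q.eq_empty_or_nonempty with rfl | hQne
  · have h1 : 0 ≤ Real.log N₀ := Real.log_natCast_nonneg _
    simp only [Finset.card_empty, Nat.cast_zero, Real.log_zero]
    positivity
  obtain ⟨z₀, hz₀⟩ := hQne
  have : Nonempty Λ := ⟨z₀⟩
  -- base points, heights and block counts
  have hdata : ∀ z : Λ, ∃ (x : VS Adj) (s : ℝ) (M : ℕ), z ∈ Q → x ∈ Y ∧ 0 ≤ s ∧ s ≤ P.r x ∧
      φ s (P.E x) = z ∧ 1 ≤ M ∧ n + s < bs P.r (M * K) x ∧ bs P.r ((M - 1) * K) x ≤ n + s := by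
    intro z
    by_cases hz : z ∈ Q
    · obtain ⟨x, hx, s, hs0, hs, hz'⟩ := hQ hz
      obtain ⟨N, hN⟩ := exists_nat_gt ((n + s) / q)
      rw [div_lt_iff₀ hq0] at hN
      have hN' : n + s < bs P.r (N * K) x := by
        refine hN.trans_le ?_
        have := le_bs P.r P.lo_le (N * K) x
        push_cast at this
        rw [hq, ← mul_assoc]; exact this
      obtain ⟨i, -, hi1, hi2⟩ := exists_floor (fun M => bs P.r (M * K) x) (by simp [bs_zero])
        (by positivity : (0 : ℝ) ≤ n + s) hN'
      exact ⟨x, s, i + 1, fun _ => ⟨hx, hs0, hs, hz', by omega, hi2, by simpa using hi1⟩⟩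
    · obtain ⟨x, s, -⟩ := P.surj z
      exact ⟨x, s, 0, fun h => absurd h hz⟩
  choose xx s M hd using hdata
  set Mm := ⌊(n + |R|) / q⌋₊ + 1 with hMm
  have hMle : ∀ z ∈ Q, M z ≤ Mm := by
    intro z hz
    obtain ⟨-, -, hs, -, h1, -, h3⟩ := hd z hz
    have h4 := (le_bs P.r P.lo_le ((M z - 1) * K) (xx z)).trans h3
    have h5 : ((M z - 1 : ℕ) : ℝ) ≤ (n + |R|) / q := by
      rw [le_div_iff₀ hq0]
      push_cast at h4
      have := (hs.trans (P.le_hi _)).trans (le_abs_self R)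
      rw [hq, ← mul_assoc]
      linarith
    have := Nat.le_floor h5
    omega
  let wv : Λ → List B := fun z => wd (sh (-(K' : ℤ)) (xx z)) (M z * K + 2 * K' + 1)
  let g : List B → Λ := Function.invFunOn wv ↑Q
  have hg : ∀ z ∈ Q, wv (g (wv z)) = wv z := fun z hz =>
    Function.invFunOn_eq (s := (↑Q : Set Λ)) ⟨z, hz, rfl⟩
  have hgQ : ∀ z ∈ Q, g (wv z) ∈ Q := fun z hz =>
    Function.invFunOn_mem (s := (↑Q : Set Λ)) ⟨z, hz, rfl⟩
  have hwM : ∀ z z', wv z = wv z' → M z = M z' := by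
    intro z z' h
    have := congrArg List.length h
    simp only [wv, wd_length] at this
    exact Nat.eq_of_mul_eq_mul_right (by omega : 0 < K) (by omega)
  have hwa : ∀ z z', wv z = wv z' → ∀ i ≤ M z * K, ∀ k : ℤ, |k| ≤ K' →
      (sh i (xx z)).1 k = (sh i (xx z')).1 k := by
    intro z z' h i hi
    have hM := hwM z z' h
    simp only [wv] at h
    rw [← hM] at h
    exact agree_of_wd h hi
  have hwr : ∀ z z', wv z = wv z' → ∀ i < M z * K,
      |P.r (sh i (xx z)) - P.r (sh i (xx z'))| ≤ δ / K := by
    intro z z' h i hi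
    have := hK₂ _ _ fun k hk => hwa z z' h i hi.le k
      (hk.trans (by exact_mod_cast le_max_right K₁ K₂))
    rw [Real.dist_eq] at this
    exact this.le
  let e : Λ → ℕ → ℝ := fun z l => bs P.r (l * K) (xx z) - bs P.r (l * K) (xx (g (wv z)))
  have hblock : ∀ z z', wv z = wv z' → ∀ l k : ℕ, k ≤ K → l * K + k ≤ M z * K →
      |(bs P.r (l * K + k) (xx z) - bs P.r (l * K + k) (xx z')) -
        (bs P.r (l * K) (xx z) - bs P.r (l * K) (xx z'))| ≤ δ := by
    intro z z' h l k hk hl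
    refine (drift P.r (hwr z z' h) (l * K) k hl).trans ?_
    rw [mul_div_assoc', div_le_iff₀ hKpos, mul_comm δ]
    exact mul_le_mul_of_nonneg_right (by exact_mod_cast hk) hδ.le
  have he : ∀ z ∈ Q, ∀ l < M z, |e z (l + 1) - e z l| ≤ δ := by
    intro z hz l hl
    have := hblock z (g (wv z)) (hg z hz).symm l K le_rfl (by nlinarith)
    simp only [e, Nat.succ_mul]
    exact this
  let code : Λ → List B × ℕ × (Fin Mm → Fin 3) := fun z =>
    (wv z, ⌊s z / δ⌋₊, fun l => Fin.ofNat 3 (⌊e z (l + 1) / δ⌋ - ⌊e z l / δ⌋ + 1).toNat)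
  have hinj : Set.InjOn code ↑Q := by
    intro z hz z' hz' hcode
    have hz : z ∈ Q := hz
    have hz' : z' ∈ Q := hz'
    simp only [code, Prod.mk.injEq] at hcode
    obtain ⟨hw, hfl, hinc⟩ := hcode
    obtain ⟨hx, hs0, hs, hzz, hM1, hM2, hM3⟩ := hd z hz
    obtain ⟨hx', hs0', hs', hzz', hM1', hM2', hM3'⟩ := hd z' hz'
    have hMM := hwM z z' hw
    by_contra hne
    obtain ⟨j, hj, hdist⟩ := hsep hz hz' hne
    refine absurd hdist (not_lt.2 ?_)
    have hss : |s z - s z'| ≤ δ := by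
      refine floor_close hδ ?_
      rw [← Int.natCast_floor_eq_floor (div_nonneg hs0 hδ.le),
        ← Int.natCast_floor_eq_floor (div_nonneg hs0' hδ.le), hfl]
    have hfloor : ∀ l ≤ M z, ⌊e z l / δ⌋ = ⌊e z' l / δ⌋ := by
      intro l
      induction l with
      | zero => intro _; simp [e, bs_zero]
      | succ l ih =>
        intro hl
        have h1 := ih (by omega)
        have h2 := congrFun hinc ⟨l, by have := hMle z hz; omega⟩
        simp only at h2
        have h3 := floor_step hδ (he z hz l (by omega))
        have h4 := floor_step hδ (he z' hz' l (by omega))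
        have h5 := congrArg Fin.val h2
        simp only [Fin.val_ofNat] at h5
        omega
    have htime : ∀ i < M z * K, |bs P.r i (xx z) - bs P.r i (xx z')| ≤ 2 * δ := by
      intro i hi
      have hl : i / K < M z := (Nat.div_lt_iff_lt_mul (by omega)).2 hi
      have hdm := Nat.div_add_mod i K
      rw [Nat.mul_comm] at hdm
      have hmod := Nat.mod_lt i (by omega : 0 < K)
      have h1 := hblock z z' hw (i / K) (i % K) hmod.le (by omega)
      have h2 := floor_close hδ (hfloor (i / K) hl.le)
      rw [hdm] at h1
      simp only [e, hw] at h2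
      rw [abs_le] at h1 h2 ⊢
      constructor <;> linarith
    have hj' : (j : ℝ) ≤ n := by exact_mod_cast hj
    obtain ⟨i, hi, hi1, hi2⟩ := exists_floor (fun i => bs P.r i (xx z)) (bs_zero _ _)
      (by positivity : (0 : ℝ) ≤ j + s z) (by linarith : j + s z < bs P.r (M z * K) (xx z))
    rw [flow_iterate, flow_iterate, ← hzz, ← hzz', ← φ.map_add, ← φ.map_add,
      P.flow_eq i (xx z), P.flow_eq i (xx z')]
    refine hclose _ _ (fun k hk => hwa z z' hw i hi.le k
      (hk.trans (by exact_mod_cast le_max_left K₁ K₂))) _ _ (by linarith) ?_ ?_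
    · rw [bs_succ] at hi2
      have := P.le_hi (sh i (xx z))
      linarith
    · have h1 := htime i hi
      rw [abs_le] at h1 hss ⊢
      constructor <;> linarith
  let WS : Finset (List B) := (Finset.range (Mm + 1)).biUnion fun M =>
    (finite_tw P.r Y (M * K + 2 * K' + 1) (n + C₁)).toFinset
  have hC₁0 : 0 ≤ C₁ := by positivity
  have hWS : (WS.card : ℝ) ≤ (Mm + 1) * (C * Real.exp (c * (n + C₁))) := by
    have h1 : (WS.card : ℝ) ≤ ∑ M ∈ Finset.range (Mm + 1),
        ((finite_tw P.r Y (M * K + 2 * K' + 1) (n + C₁)).toFinset.card : ℝ) := by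
      exact_mod_cast Finset.card_biUnion_le
    refine h1.trans ((Finset.sum_le_sum (g := fun _ => C * Real.exp (c * (n + C₁)))
      fun M _ => ?_).trans_eq ?_)
    · rw [← Set.ncard_eq_toFinset_card _ (finite_tw _ _ _ _)]
      exact hcount _ _ (by positivity)
    · rw [Finset.sum_const, Finset.card_range, nsmul_eq_mul]
      push_cast
      rfl
  have hmem : ∀ z ∈ Q, code z ∈ WS ×ˢ (Finset.range N₀ ×ˢ Finset.univ) := by
    intro z hz
    obtain ⟨hx, hs0, hs, hzz, hM1, hM2, hM3⟩ := hd z hz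
    simp only [code, Finset.mem_product, Finset.mem_univ, and_true, Finset.mem_range]
    have hsR := hs.trans (P.le_hi _)
    refine ⟨Finset.mem_biUnion.2 ⟨M z, Finset.mem_range.2 (by have := hMle z hz; omega), ?_⟩, ?_⟩
    · rw [Set.Finite.mem_toFinset]
      refine ⟨_, hY _ _ hx, rfl, ?_⟩
      have hsplit : M z * K + 2 * K' + 1 = K' + ((M z - 1) * K + (K + K' + 1)) := by
        obtain ⟨a, ha⟩ : ∃ a, M z = a + 1 := ⟨M z - 1, by omega⟩
        rw [ha, Nat.succ_mul, Nat.add_sub_cancel]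
        omega
      rw [hsplit, bs_add, bs_add, sh_sh]
      have h0 : ((K' : ℕ) : ℤ) + -(K' : ℤ) = 0 := by ring
      rw [h0, sh_zero]
      have h1 := bs_le P.r P.le_hi K' (sh (-(K' : ℤ)) (xx z))
      have h2 := bs_le P.r P.le_hi (K + K' + 1) (sh (((M z - 1) * K : ℕ) : ℤ) (xx z))
      push_cast at h2
      have h3 : (K' : ℝ) * R ≤ K' * |R| := mul_le_mul_of_nonneg_left (le_abs_self R) (by positivity)
      have h4 : ((K : ℝ) + K' + 1) * R ≤ (K + K' + 1) * |R| :=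
        mul_le_mul_of_nonneg_left (le_abs_self R) (by positivity)
      have h5 := le_abs_self R
      rw [hC₁]
      push_cast
      linarith
    · have : ⌊s z / δ⌋₊ ≤ ⌊R / δ⌋₊ := Nat.floor_le_floor (div_le_div_of_nonneg_right hsR hδ.le)
      omega
  have hcard := Finset.card_le_card_of_injOn code hmem hinj
  rw [Finset.card_product, Finset.card_product, Finset.card_range, Finset.card_univ,
    Fintype.card_fun, Fintype.card_fin, Fintype.card_fin] at hcard
  have hQpos : (0 : ℝ) < Q.card := by exact_mod_cast Finset.card_pos.2 ⟨z₀, hz₀⟩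
  have hN₀pos : (0 : ℝ) < N₀ := by rw [hN₀]; positivity
  have hb : (Q.card : ℝ) ≤ ((Mm + 1) * (C * Real.exp (c * (n + C₁)))) * (N₀ * 3 ^ Mm) := by
    have : (Q.card : ℝ) ≤ WS.card * (N₀ * 3 ^ Mm) := by exact_mod_cast hcard
    exact this.trans (mul_le_mul_of_nonneg_right hWS (by positivity))
  have hlog := Real.log_le_log hQpos hb
  have hMm0 : (0 : ℝ) ≤ Mm := Nat.cast_nonneg _
  rw [Real.log_mul (by positivity) (by positivity), Real.log_mul (by positivity) (by positivity),
    Real.log_mul (by positivity) (by positivity), Real.log_mul (by positivity) (by positivity),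
    Real.log_exp, Real.log_pow] at hlog
  have hl1 : Real.log (Mm + 1) ≤ Mm := by
    have := Real.log_le_sub_one_of_pos (by positivity : (0 : ℝ) < Mm + 1)
    linarith
  have hl3 : Real.log 3 ≤ 2 := by
    have := Real.log_le_sub_one_of_pos (by positivity : (0 : ℝ) < 3)
    linarith
  have hMmle : (Mm : ℝ) ≤ (n + |R|) / q + 1 := by
    rw [hMm]
    push_cast
    have := Nat.floor_le (by positivity : 0 ≤ (n + |R|) / q)
    linarith
  have hl4 : Mm * Real.log 3 ≤ Mm * 2 := mul_le_mul_of_nonneg_left hl3 hMm0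
  have : (c + 3 / q) * n = c * n + 3 * (n / q) := by ring
  rw [this]
  rw [add_div] at hMmle
  linarith [le_abs_self (Real.log C)]

/-- If the number of words realised over `Y` in time at most `t` is `O(exp (c t))`, then the
entropy of the flow over `Y` is at most `c`. -/
theorem Susp.entropy_le (P : Susp Adj φ) {Y : Set (VS Adj)} (hY : ∀ n : ℤ, ∀ x ∈ Y, sh n x ∈ Y)
    {c C : ℝ} (hc : 0 ≤ c) (hC : 0 < C) (hcount : ∀ (m : ℕ) (t : ℝ), 0 ≤ t →
      ((tw P.r Y m t).ncard : ℝ) ≤ C * Real.exp (c * t)) {K : Set Λ} (hK : K ⊆ P.over Y) :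
    topEntropyOn (φ.toFun 1) K ≤ (c : EReal) := by
  refine topEntropyOn_le fun ε hε η hη => ?_
  obtain ⟨k, hk⟩ := exists_nat_gt (3 / (η * P.lo))
  have hlo := P.lo_pos
  have hk0 : (0 : ℝ) < k := lt_trans (by positivity) hk
  obtain ⟨A, hA⟩ := P.sep_le hY hc hC hcount hε (K := k) (by exact_mod_cast hk0)
  refine ⟨A, fun n Q hQ hsep => (hA n Q (hQ.trans hK) hsep).trans ?_⟩
  have : 3 / (k * P.lo) ≤ η := by
    rw [div_lt_iff₀ (by positivity)] at hk
    rw [div_le_iff₀ (by positivity)]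
    nlinarith
  have := mul_le_mul_of_nonneg_right this (Nat.cast_nonneg (α := ℝ) n)
  linarith

end UpperBound


/-! ### Suspension flows over vertex shifts: separation of words and time averages -/

section Separation

variable {B : Type} [Fintype B] [MetricSpace B] {Adj : B → B → Prop}
variable {Λ : Type*} [MetricSpace Λ] [CompactSpace Λ] {φ : Flow ℝ Λ}

/-- Points near `E x` are of the form `φ τ (E y)` with `τ` small and `y` near `x`. -/
lemma Susp.local_section (P : Susp Adj φ) {η : ℝ} (hη : 0 < η) :
    ∃ ε > 0, ∀ x z, dist (P.E x) z ≤ ε →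
      ∃ y τ, |τ| < η ∧ z = φ τ (P.E y) ∧ y.1 0 = x.1 0 ∧ |P.r y - P.r x| < η := by
  let good : VS Adj → VS Adj → ℝ → Prop := fun x y τ =>
    |τ| < η ∧ (y.1 0, x.1 0) ∈ {p : B × B | p.1 = p.2} ∧ |P.r y - P.r x| < η
  have hgood : IsOpen {p : (VS Adj × VS Adj) × ℝ | good p.1.1 p.1.2 p.2} := by
    have hx : Continuous fun p : (VS Adj × VS Adj) × ℝ => p.1.1 := by fun_prop
    have hy : Continuous fun p : (VS Adj × VS Adj) × ℝ => p.1.2 := by fun_prop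
    refine (isOpen_lt (continuous_snd.abs) continuous_const).inter (IsOpen.inter ?_ ?_)
    · exact (isOpen_discrete {p : B × B | p.1 = p.2}).preimage
        (((continuous_coord 0).comp hy).prodMk ((continuous_coord 0).comp hx))
    · exact isOpen_lt ((P.contr.comp hy).sub (P.contr.comp hx)).abs continuous_const
  let F : Set ((VS Adj × VS Adj) × ℝ) := {p | 0 ≤ p.2 ∧ p.2 ≤ P.hi ∧ p.2 ≤ P.r p.1.2 ∧
    ¬ good p.1.1 p.1.2 p.2 ∧ ¬ good p.1.1 (sh 1 p.1.2) (p.2 - P.r p.1.2)}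
  have hry : Continuous fun p : (VS Adj × VS Adj) × ℝ => P.r p.1.2 :=
    P.contr.comp (continuous_snd.comp continuous_fst)
  have hFc : IsCompact F := by
    have hK : IsCompact ((univ : Set (VS Adj × VS Adj)) ×ˢ Icc (0 : ℝ) P.hi) :=
      isCompact_univ.prod isCompact_Icc
    refine hK.of_isClosed_subset ?_ fun p hp => ⟨mem_univ _, hp.1, hp.2.1⟩
    refine (isClosed_le continuous_const continuous_snd).inter
      ((isClosed_le continuous_snd continuous_const).inter
      ((isClosed_le continuous_snd hry).inter (IsClosed.inter ?_ ?_)))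
    · exact hgood.isClosed_compl
    · refine IsClosed.preimage (f := fun p : (VS Adj × VS Adj) × ℝ =>
        ((p.1.1, sh 1 p.1.2), p.2 - P.r p.1.2)) ?_ hgood.isClosed_compl
      exact ((continuous_fst.comp continuous_fst).prodMk
        ((continuous_sh 1).comp (continuous_snd.comp continuous_fst))).prodMk
        (continuous_snd.sub hry)
  have hdc : Continuous fun p : (VS Adj × VS Adj) × ℝ => dist (P.E p.1.1) (φ p.2 (P.E p.1.2)) :=
    (P.contE.comp (continuous_fst.comp continuous_fst)).dist
      (φ.continuous continuous_snd (P.contE.comp (continuous_snd.comp continuous_fst)))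
  have hpos : ∀ p ∈ F, 0 < dist (P.E p.1.1) (φ p.2 (P.E p.1.2)) := by
    rintro ⟨⟨x, y⟩, s⟩ ⟨h0, -, h1, h2, h3⟩
    simp only at h0 h1 h2 h3 ⊢
    refine dist_pos.2 fun heq => ?_
    rcases h1.lt_or_eq with h | h
    · obtain ⟨hxy, hs⟩ := P.uniq x y 0 s le_rfl (P.pos x) h0 h (by rw [φ.map_zero_apply, heq])
      subst hxy
      subst hs
      exact h2 ⟨by simpa using hη, rfl, by simpa using hη⟩
    · rw [h, P.step] at heq
      obtain ⟨hxy, -⟩ := P.uniq x (sh 1 y) 0 0 le_rfl (P.pos x) le_rfl (P.pos _)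
        (by rw [φ.map_zero_apply, φ.map_zero_apply, heq])
      refine h3 ⟨by simpa [h] using hη, ?_, ?_⟩
      · rw [hxy]; rfl
      · rw [hxy]; simpa using hη
  have hmin : ∃ m > 0, ∀ p ∈ F, m ≤ dist (P.E p.1.1) (φ p.2 (P.E p.1.2)) := by
    rcases F.eq_empty_or_nonempty with h | h
    · exact ⟨1, one_pos, by simp [h]⟩
    · obtain ⟨p, hp, hpm⟩ := hFc.exists_isMinOn h hdc.continuousOn
      exact ⟨_, hpos p hp, fun q hq => hpm hq⟩
  obtain ⟨m, hm, hmF⟩ := hmin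
  refine ⟨m / 2, half_pos hm, fun x z hz => ?_⟩
  obtain ⟨y, s, h0, h1, rfl⟩ := P.surj z
  by_cases hg1 : good x y s
  · exact ⟨y, s, hg1.1, rfl, hg1.2.1, hg1.2.2⟩
  by_cases hg2 : good x (sh 1 y) (s - P.r y)
  · refine ⟨sh 1 y, s - P.r y, hg2.1, ?_, hg2.2.1, hg2.2.2⟩
    rw [← P.step, ← φ.map_add, sub_add_cancel]
  have := hmF ((x, y), s) ⟨h0, h1.le.trans (P.le_hi y), h1.le, hg1, hg2⟩
  simp only at this
  linarith

/-- Distinct base points are not joined by an orbit segment shorter than the least return time. -/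
lemma Susp.rigid (P : Susp Adj φ) {x y : VS Adj} {a : ℝ} (ha : |a| < P.lo)
    (h : P.E y = φ a (P.E x)) : y = x ∧ a = 0 := by
  rw [abs_lt] at ha
  rcases le_or_gt 0 a with h0 | h0
  · obtain ⟨h1, h2⟩ := P.uniq y x 0 a le_rfl (P.pos y) h0 (ha.2.trans_le (P.lo_le x))
      (by rw [φ.map_zero_apply, h])
    exact ⟨h1, h2.symm⟩
  · obtain ⟨h1, h2⟩ := P.uniq y x (-a) 0 (by linarith) ((by linarith : -a < P.lo).trans_le
      (P.lo_le y)) le_rfl (P.pos x) (by rw [h, ← φ.map_add, neg_add_cancel])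
    exact ⟨h1, by linarith⟩

/-- Base points whose orbits stay close during the time of `L` returns have equal words. -/
theorem Susp.separates (P : Susp Adj φ) :
    ∃ ε > 0, ∀ (x x' : VS Adj) (L n : ℕ), bs P.r L x ≤ n →
      (∀ j ≤ n, dist ((φ.toFun 1)^[j] (P.E x)) ((φ.toFun 1)^[j] (P.E x')) ≤ ε) →
      wd x L = wd x' L := by
  have hlo := P.lo_pos
  obtain ⟨ε₁, hε₁, h1⟩ := P.local_section (η := P.lo / 8) (by positivity)
  obtain ⟨ε₀, hε₀, h0⟩ := flow_unif_back φ 1 hε₁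
  refine ⟨ε₀, hε₀, fun x x' L n hL hclose => ?_⟩
  have hreal : ∀ t : ℝ, 0 ≤ t → t ≤ n → dist (φ t (P.E x)) (φ t (P.E x')) ≤ ε₁ := by
    intro t ht0 ht
    have hf := Nat.floor_le ht0
    have hf' := Nat.lt_floor_add_one t
    have := hclose ⌊t⌋₊ (Nat.floor_le_of_le ht)
    rw [flow_iterate, flow_iterate] at this
    have := h0 (t - ⌊t⌋₊) ⟨by linarith, by linarith⟩ _ _ this
    rwa [← φ.map_add, ← φ.map_add, sub_add_cancel] at this
  have hsuff : ∀ i ≤ L, ∀ a, |a| < 3 * (P.lo / 8) →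
      φ (bs P.r i x) (P.E x') = φ a (P.E (sh i x')) →
      ∃ τ, |τ| < P.lo / 8 ∧ φ (bs P.r i x) (P.E x') = φ τ (P.E (sh i x')) ∧
        x'.1 i = x.1 i ∧ |P.r (sh i x') - P.r (sh i x)| < P.lo / 8 := by
    intro i hi a ha hae
    -- the point reached by `x'` at the time of the `i`-th return of `x` is close to the section
    obtain ⟨y, τ', hτ', hy, hy0, hyr⟩ := h1 (sh i x) (φ (bs P.r i x) (P.E x')) (by
      rw [← P.step_n]
      refine hreal _ ?_ ((bs_mono P.pos hi x).trans hL)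
      have := le_bs P.r P.lo_le i x
      exact le_trans (by positivity) this)
    have h2 : P.E y = φ (a - τ') (P.E (sh i x')) := by
      have : φ (-τ') (φ τ' (P.E y)) = φ (-τ') (φ a (P.E (sh i x'))) := by rw [← hy, hae]
      rw [← φ.map_add, ← φ.map_add, neg_add_cancel, φ.map_zero_apply] at this
      rw [this]
      congr 1
      ring
    obtain ⟨h3, -⟩ := P.rigid (by
      rw [abs_lt] at ha hτ' ⊢
      constructor <;> linarith) h2
    subst h3
    exact ⟨τ', hτ', hy, by simpa [sh_apply] using hy0, hyr⟩
  have key : ∀ i ≤ L, ∃ τ, |τ| < P.lo / 8 ∧ φ (bs P.r i x) (P.E x') = φ τ (P.E (sh i x')) ∧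
      x'.1 i = x.1 i ∧ |P.r (sh i x') - P.r (sh i x)| < P.lo / 8 := by
    intro i
    induction i with
    | zero =>
      intro h
      exact hsuff 0 h 0 (by simpa using hlo) (by simp [bs_zero, sh_zero])
    | succ i ih =>
      intro hi
      obtain ⟨τ, hτ, hτe, -, hr⟩ := ih (by omega)
      refine hsuff (i + 1) hi (P.r (sh i x) + τ - P.r (sh i x')) ?_ ?_
      · rw [abs_lt] at hτ hr ⊢
        constructor <;> linarith
      · have h3 := P.step (sh i x')
        rw [sh_sh, add_comm] at h3
        push_cast
        rw [← h3, ← φ.map_add, sub_add_cancel, φ.map_add, ← hτe, ← φ.map_add, bs_succ, add_comm]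
  refine wd_eq_iff.2 fun i hi => ?_
  obtain ⟨_, _, _, h, _⟩ := key i hi.le
  exact h.symm

/-- Birkhoff averages of every continuous function converge uniformly on `Y` to a constant. -/
def UB (Y : Set (VS Adj)) : Prop :=
  ∀ f : VS Adj → ℝ, Continuous f → ∃ I : ℝ, ∀ ε > 0, ∃ C : ℝ, 0 ≤ C ∧ ∀ (n : ℕ), ∀ x ∈ Y,
    |bs f n x - n * I| ≤ ε * n + C

/-- Integral of an observable along the orbit segment from a base point to its return. -/
noncomputable def Susp.fib (P : Susp Adj φ) (g : C(Λ, ℝ)) (x : VS Adj) : ℝ :=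
  ∫ t in (0 : ℝ)..P.r x, g (φ t (P.E x))

lemma Susp.continuous_fib (P : Susp Adj φ) (g : C(Λ, ℝ)) : Continuous (P.fib g) := by
  refine intervalIntegral.continuous_parametric_intervalIntegral_of_continuous
    (f := fun x t => g (φ t (P.E x))) ?_ P.contr
  exact g.continuous.comp (φ.continuous continuous_snd (P.contE.comp continuous_fst))

lemma Susp.bs_fib (P : Susp Adj φ) (g : C(Λ, ℝ)) (n : ℕ) (x : VS Adj) :
    ∫ t in (0 : ℝ)..bs P.r n x, g (φ t (P.E x)) = bs (P.fib g) n x := by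
  induction n with
  | zero => simp [bs_zero]
  | succ n ih =>
    have hi : ∀ a b, IntervalIntegrable (fun t => g (φ t (P.E x))) volume a b :=
      fun a b => (continuous_test φ g _).intervalIntegrable a b
    rw [bs_succ (P.fib g), ← ih, bs_succ,
      ← intervalIntegral.integral_add_adjacent_intervals (hi 0 (bs P.r n x)) (hi _ _)]
    congr 1
    simp only [Susp.fib, ← P.step_n, ← φ.map_add]
    rw [intervalIntegral.integral_comp_add_right (fun t => g (φ t (P.E x)))]
    congr 1 <;> ring

lemma integral_le_of_bound (φ : Flow ℝ Λ) (g : C(Λ, ℝ)) {D : ℝ} (hD : ∀ z, |g z| ≤ D) (z : Λ)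
    (a b : ℝ) : |∫ t in a..b, g (φ t z)| ≤ D * |b - a| := by
  rw [← Real.norm_eq_abs]
  exact intervalIntegral.norm_integral_le_of_norm_le_const fun t _ => hD _

/-- Uniform Birkhoff averages on a set of base points give uniform time averages over it: by
`Susp.bs_fib` a time average is, up to boundary terms, a quotient of Birkhoff sums of `P.fib g` and
of the roof. -/
theorem Susp.ueOn (P : Susp Adj φ) {Y : Set (VS Adj)} (hY : UB Y) : UEOn φ (P.over Y) := by
  intro g
  obtain ⟨D, hD, hgD⟩ := exists_bound g
  obtain ⟨Ig, hIg⟩ := hY _ (P.continuous_fib g)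
  obtain ⟨Ir, hIr⟩ := hY _ P.contr
  have hlo := P.lo_pos
  set J := Ig / Ir with hJ
  refine ⟨J, fun ε hε => ?_⟩
  set ε₁ := ε * P.lo / (4 * (1 + |J|)) with hε₁
  have hε₁0 : 0 < ε₁ := by positivity
  obtain ⟨C₁, hC₁, h1⟩ := hIg ε₁ hε₁0
  obtain ⟨C₂, hC₂, h2⟩ := hIr ε₁ hε₁0
  set R := |P.hi| with hR
  set A := (ε / 4) * (2 * R) + C₁ + |J| * C₂ + 2 * D * R + |J| * (2 * R) with hA
  have hA0 : 0 ≤ A := by positivity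
  refine ⟨A / (ε / 2) + 1, by positivity, fun T hT z hz => ?_⟩
  obtain ⟨x, hx, s, hs0, hs, rfl⟩ := hz
  have hsR : s ≤ R := (hs.trans (P.le_hi x)).trans (le_abs_self _)
  have hT0 : 0 ≤ T := le_trans (by positivity) hT
  have hIr0 : 0 < Ir := by
    by_contra hcon
    push Not at hcon
    obtain ⟨C, hC, h⟩ := hIr (P.lo / 2) (by positivity)
    obtain ⟨n, hn⟩ := exists_nat_gt (C / (P.lo / 2))
    rw [div_lt_iff₀ (by positivity)] at hn
    have h3 := (abs_le.1 (h n x hx)).2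
    have h4 := le_bs P.r P.lo_le n x
    nlinarith [Nat.cast_nonneg (α := ℝ) n]
  obtain ⟨M, hM⟩ := exists_nat_gt ((T + s) / P.lo)
  rw [div_lt_iff₀ hlo] at hM
  obtain ⟨N, -, hN1, hN2⟩ := exists_floor (fun i => bs P.r i x) (bs_zero _ _)
    (by positivity : 0 ≤ T + s) (hM.trans_le (le_bs P.r P.lo_le M x))
  have hNlo : N * P.lo ≤ T + R := by
    have := le_bs P.r P.lo_le N x
    linarith
  have hrest : |T + s - bs P.r N x| ≤ R := by
    rw [bs_succ] at hN2
    have h3 := (P.le_hi (sh N x)).trans (le_abs_self _)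
    rw [abs_le]
    constructor <;> linarith [abs_nonneg P.hi]
  have hi : ∀ a b, IntervalIntegrable (fun t => g (φ t (P.E x))) volume a b :=
    fun a b => (continuous_test φ g _).intervalIntegrable a b
  have hint : ∫ t in (0 : ℝ)..T, g (φ t (φ s (P.E x))) =
      bs (P.fib g) N x + (∫ t in bs P.r N x..(T + s), g (φ t (P.E x))) -
        ∫ t in (0 : ℝ)..s, g (φ t (P.E x)) := by
    simp only [← φ.map_add]
    rw [intervalIntegral.integral_comp_add_right (fun t => g (φ t (P.E x))), ← P.bs_fib,
      intervalIntegral.integral_add_adjacent_intervals (hi _ _) (hi _ _), zero_add,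
      intervalIntegral.integral_interval_sub_left (hi _ _) (hi _ _)]
  rw [hint]
  have e1 := integral_le_of_bound φ g hgD (P.E x) (bs P.r N x) (T + s)
  have e2 := integral_le_of_bound φ g hgD (P.E x) 0 s
  have e1' := e1.trans (mul_le_mul_of_nonneg_left hrest hD.le)
  have e2' : |∫ t in (0 : ℝ)..s, g (φ t (P.E x))| ≤ D * R := by
    refine e2.trans (mul_le_mul_of_nonneg_left ?_ hD.le)
    rwa [sub_zero, abs_of_nonneg hs0]
  have e3 := h1 N x hx
  have e4 := h2 N x hx
  have e5 : |J * (bs P.r N x - N * Ir)| ≤ |J| * (ε₁ * N + C₂) := by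
    rw [abs_mul]
    exact mul_le_mul_of_nonneg_left e4 (abs_nonneg J)
  have e6 : |J * (T - bs P.r N x)| ≤ |J| * (2 * R) := by
    rw [abs_mul]
    refine mul_le_mul_of_nonneg_left ?_ (abs_nonneg J)
    rw [abs_le] at hrest ⊢
    constructor <;> linarith
  have hJIr : J * (N * Ir) = N * Ig := by
    rw [hJ]
    field_simp
  have e7 : (1 + |J|) * (ε₁ * N) ≤ ε / 4 * (T + R) := by
    have : (1 + |J|) * (ε₁ * N) = ε / 4 * (N * P.lo) := by
      rw [hε₁]
      field_simp
    rw [this]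
    exact mul_le_mul_of_nonneg_left hNlo (by positivity)
  have hfin : A ≤ ε / 2 * T := by
    have : A / (ε / 2) ≤ T := by linarith
    rwa [div_le_iff₀ (by positivity), mul_comm] at this
  have hR0 : 0 ≤ R := abs_nonneg _
  have h9 : ε / 4 * T ≤ ε / 2 * T := mul_le_mul_of_nonneg_right (by linarith) hT0
  have h10 : 0 ≤ ε / 4 * R := by positivity
  rw [abs_le] at e1' e2' e3 e5 e6 ⊢
  constructor <;> linarith

end Separation


/-! ### Many loops at one vertex -/

section Loops

variable {B : Type} [Fintype B] [MetricSpace B] {Adj : B → B → Prop}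
variable {Λ : Type*} [MetricSpace Λ] [CompactSpace Λ] {φ : Flow ℝ Λ}

lemma sq_le_exp {η : ℝ} (hη : 0 < η) : ∃ A > 0, ∀ t : ℝ, 0 ≤ t → (t + 1) ^ 2 ≤ A * Real.exp (η * t) := by
  refine ⟨2 + 4 / η ^ 2, by positivity, fun t ht => ?_⟩
  have h1 := Real.quadratic_le_exp_of_nonneg (by positivity : 0 ≤ η * t)
  have h2 : (2 + 4 / η ^ 2) * (1 + (η * t) ^ 2 / 2) ≤ (2 + 4 / η ^ 2) * Real.exp (η * t) :=
    mul_le_mul_of_nonneg_left (by nlinarith [mul_nonneg hη.le ht]) (by positivity)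
  refine le_trans ?_ h2
  have h3 : (2 + 4 / η ^ 2) * (1 + (η * t) ^ 2 / 2) = 2 + 4 / η ^ 2 + (η * t) ^ 2 + 2 * t ^ 2 := by
    field_simp
    ring
  rw [h3]
  have : 0 ≤ 4 / η ^ 2 := by positivity
  nlinarith [sq_nonneg (t - 1), sq_nonneg (η * t)]

/-- Words of length `m`, of duration at most `t`, of points that visit only `V` on `[0,m)`. -/
def pathsIn (f : VS Adj → ℝ) (V : Finset B) (m : ℕ) (t : ℝ) : Set (List B) :=
  tw f {x | ∀ i : ℕ, i < m → x.1 i ∈ V} m t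

/-- Words of length `m`, of duration at most `t`, of points visiting `a` at times `0` and `m`. -/
def loopsAt (f : VS Adj → ℝ) (a : B) (m : ℕ) (t : ℝ) : Set (List B) :=
  tw f {x | x.1 0 = a ∧ x.1 m = a} m t

lemma tw_empty_of_lt {f : VS Adj → ℝ} {lo : ℝ} (hf : ∀ x, lo ≤ f x) {Y : Set (VS Adj)} {m : ℕ}
    {t : ℝ} (h : t < m * lo) : tw f Y m t = ∅ := by
  refine Set.eq_empty_of_forall_notMem fun w ⟨x, _, _, hx⟩ => ?_
  linarith [le_bs f hf m x]

lemma ncard_image2_le {α β γ : Type*} (g : α → β → γ) {s : Set α} {u : Set β} (hs : s.Finite)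
    (hu : u.Finite) : (Set.image2 g s u).ncard ≤ s.ncard * u.ncard := by
  rw [← Set.image_prod, ← Set.ncard_prod]
  exact Set.ncard_image_le (hs.prod hu)

/-- Splitting a path at the last visit to its initial vertex. -/
lemma pathsIn_subset [DecidableEq B] {f : VS Adj → ℝ} (hf : ∀ x, 0 < f x) (V : Finset B) {m : ℕ}
    (hm : 0 < m) {t : ℝ} :
    pathsIn f V m t ⊆ ⋃ p ∈ (V ×ˢ Finset.range m) ×ˢ Finset.range (⌊t⌋₊ + 1),
      Set.image2 (fun u v => u ++ p.1.1 :: v) (loopsAt f p.1.1 p.1.2 (p.2 + 1))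
        (pathsIn f (V.erase p.1.1) (m - p.1.2 - 1) (t - p.2)) := by
  rintro w ⟨x, hx, rfl, hxt⟩
  set a := x.1 0 with ha
  have haV : a ∈ V := by simpa using hx 0 hm
  obtain ⟨j, hj, hjmax⟩ : ∃ j, (j < m ∧ x.1 j = a) ∧ ∀ k, (k < m ∧ x.1 k = a) → k ≤ j := by
    let s := (Finset.range m).filter fun k : ℕ => x.1 k = a
    have hs : s.Nonempty := ⟨0, by simp [s, hm, ha]⟩
    refine ⟨s.max' hs, by simpa [s] using s.max'_mem hs, fun k hk => s.le_max' k (by simpa [s] using hk)⟩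
  have hsplit : m = j + (1 + (m - j - 1)) := by omega
  have hbs : bs f m x = bs f j x + (f (sh j x) + bs f (m - j - 1) (sh (j + 1 : ℕ) x)) := by
    conv_lhs => rw [hsplit]
    rw [bs_add, bs_add, sh_sh]
    congr 2
    · rw [bs_succ, bs_zero, zero_add]
      simp [sh_zero]
    · push_cast
      rw [add_comm]
  have hj0 : 0 ≤ bs f j x := by
    have := le_bs f (fun x => (hf x).le) j x
    simpa using this
  have hv0 : 0 ≤ bs f (m - j - 1) (sh (j + 1 : ℕ) x) := by
    have := le_bs f (fun x => (hf x).le) (m - j - 1) (sh (j + 1 : ℕ) x)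
    simpa using this
  have hfl := Nat.floor_le hj0
  have hfl' := Nat.lt_floor_add_one (bs f j x)
  have hfj := hf (sh j x)
  simp only [mem_iUnion]
  refine ⟨((a, j), ⌊bs f j x⌋₊), ?_, wd x j, ⟨x, ⟨rfl, hj.2⟩, rfl, hfl'.le⟩,
    wd (sh (j + 1 : ℕ) x) (m - j - 1), ⟨_, ?_, rfl, ?_⟩, ?_⟩
  · simp only [Finset.mem_product, Finset.mem_range]
    exact ⟨⟨haV, hj.1⟩, Nat.lt_succ_of_le (Nat.floor_le_floor (by linarith))⟩
  · intro i hi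
    rw [sh_apply]
    have h1 : ((i : ℤ) + (j + 1 : ℕ)) = ((i + (j + 1) : ℕ) : ℤ) := by push_cast; ring
    rw [h1, Finset.mem_erase]
    simp only at hi
    refine ⟨fun h => ?_, hx _ (by omega)⟩
    have := hjmax (i + (j + 1)) ⟨by omega, h⟩
    omega
  · simp only
    linarith
  · simp only
    conv_rhs => rw [hsplit, wd_add, wd_add, sh_sh]
    have h1 : wd (sh (j : ℤ) x) 1 = [a] := by simp [wd, sh_apply, hj.2]
    rw [h1]
    simp only [List.singleton_append]
    push_cast
    rw [add_comm (1 : ℤ)]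

/-- If loops at every vertex have rate at most `c₁`, all paths have rate at most any `c₂ > c₁`, by
induction on the set `V` of allowed vertices. -/
lemma paths_count [DecidableEq B] {f : VS Adj → ℝ} {lo : ℝ} (hlo : 0 < lo) (hf : ∀ x, lo ≤ f x)
    {c₁ C : ℝ} (hc₁ : 0 ≤ c₁) (hC : 0 < C)
    (hloop : ∀ (a : B) (m : ℕ) (t : ℝ), 0 ≤ t → ((loopsAt f a m t).ncard : ℝ) ≤ C * Real.exp (c₁ * t))
    (V : Finset B) : ∀ c₂ > c₁, ∃ C' > 0, ∀ (m : ℕ) (t : ℝ), 0 ≤ t →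
      ((pathsIn f V m t).ncard : ℝ) ≤ C' * Real.exp (c₂ * t) := by
  induction V using Finset.strongInduction with
  | H V ih =>
  intro c₂ hc₂
  set c₃ := (c₁ + c₂) / 2 with hc₃
  have hA : ∀ a : B, ∃ D > 0, a ∈ V → ∀ (m : ℕ) (t : ℝ), 0 ≤ t →
      ((pathsIn f (V.erase a) m t).ncard : ℝ) ≤ D * Real.exp (c₃ * t) := by
    intro a
    by_cases ha : a ∈ V
    · obtain ⟨D, hD, h⟩ := ih (V.erase a) (Finset.erase_ssubset ha) c₃ (by rw [hc₃]; linarith)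
      exact ⟨D, hD, fun _ => h⟩
    · exact ⟨1, one_pos, fun h => absurd h ha⟩
  choose D hD0 hD using hA
  obtain ⟨A, hA0, hA⟩ := sq_le_exp (η := c₂ - c₃) (by rw [hc₃]; linarith)
  have hSD : 0 ≤ ∑ a ∈ V, D a := Finset.sum_nonneg fun a _ => (hD0 a).le
  refine ⟨1 + (1 / lo) * (C * Real.exp c₁) * (∑ a ∈ V, D a) * A, by positivity, fun m t ht => ?_⟩
  have hexp1 : 1 ≤ Real.exp (c₂ * t) := Real.one_le_exp (by nlinarith)
  have hbig : 0 ≤ (1 / lo) * (C * Real.exp c₁) * (∑ a ∈ V, D a) * A := by positivity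
  rcases Nat.eq_zero_or_pos m with rfl | hm
  · have h1 : pathsIn f V 0 t ⊆ {[]} := fun w ⟨x, _, hx, _⟩ => by simp [← hx, wd_zero]
    have h2 := Set.ncard_le_ncard h1 (Set.finite_singleton _)
    rw [Set.ncard_singleton] at h2
    have h3 : ((pathsIn f V 0 t).ncard : ℝ) ≤ 1 := by exact_mod_cast h2
    nlinarith
  by_cases hmt : t < m * lo
  · rw [pathsIn, tw_empty_of_lt hf hmt, Set.ncard_empty, Nat.cast_zero]
    positivity
  push Not at hmt
  have hfin : ∀ p : (B × ℕ) × ℕ, (Set.image2 (fun u v => u ++ p.1.1 :: v)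
      (loopsAt f p.1.1 p.1.2 (p.2 + 1))
      (pathsIn f (V.erase p.1.1) (m - p.1.2 - 1) (t - p.2))).Finite :=
    fun p => (finite_tw _ _ _ _).image2 _ (finite_tw _ _ _ _)
  have h1 := Set.ncard_le_ncard (pathsIn_subset (f := f) (fun x => hlo.trans_le (hf x)) V hm (t := t))
    (Set.Finite.biUnion (Finset.finite_toSet _) fun p _ => hfin p)
  have h2 := h1.trans (Finset.set_ncard_biUnion_le _ _)
  have h3 : ((pathsIn f V m t).ncard : ℝ) ≤ ∑ p ∈ (V ×ˢ Finset.range m) ×ˢ Finset.range (⌊t⌋₊ + 1),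
      (C * Real.exp c₁) * (D p.1.1 * Real.exp (c₃ * t)) := by
    refine (Nat.cast_le.2 h2).trans ?_
    push_cast
    refine Finset.sum_le_sum fun p hp => ?_
    simp only [Finset.mem_product, Finset.mem_range] at hp
    obtain ⟨⟨hpV, hpm⟩, hpt⟩ := hp
    have hpt' : (p.2 : ℝ) ≤ t := (Nat.le_floor_iff ht).1 (by omega)
    have h4 : ((Set.image2 (fun u v => u ++ p.1.1 :: v) (loopsAt f p.1.1 p.1.2 (p.2 + 1))
      (pathsIn f (V.erase p.1.1) (m - p.1.2 - 1) (t - p.2))).ncard : ℝ) ≤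
      (loopsAt f p.1.1 p.1.2 (p.2 + 1)).ncard *
        (pathsIn f (V.erase p.1.1) (m - p.1.2 - 1) (t - p.2)).ncard := by
      exact_mod_cast ncard_image2_le _ (finite_tw _ _ _ _) (finite_tw _ _ _ _)
    have h5 := hloop p.1.1 p.1.2 (p.2 + 1) (by positivity)
    have h6 := hD p.1.1 hpV (m - p.1.2 - 1) (t - p.2) (by linarith)
    refine h4.trans ((mul_le_mul h5 h6 (by positivity) (by positivity)).trans ?_)
    have h7 : C * Real.exp (c₁ * (p.2 + 1)) * (D p.1.1 * Real.exp (c₃ * (t - p.2))) =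
        (C * Real.exp c₁) * (D p.1.1 * Real.exp (c₃ * t + (c₁ - c₃) * p.2)) := by
      have e1 : c₁ * ((p.2 : ℝ) + 1) = c₁ + c₁ * p.2 := by ring
      have e2 : c₃ * t + (c₁ - c₃) * p.2 = c₃ * (t - p.2) + c₁ * p.2 := by ring
      rw [e1, e2, Real.exp_add, Real.exp_add]
      ring
    rw [h7]
    refine mul_le_mul_of_nonneg_left (mul_le_mul_of_nonneg_left (Real.exp_le_exp.2 ?_)
      (hD0 _).le) (by positivity)
    have : (c₁ - c₃) * p.2 ≤ 0 := mul_nonpos_of_nonpos_of_nonneg (by rw [hc₃]; linarith) (by positivity)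
    linarith
  rw [Finset.sum_product, Finset.sum_product] at h3
  simp only [Finset.sum_const, Finset.card_range, nsmul_eq_mul, ← Finset.mul_sum, ← Finset.sum_mul]
    at h3
  have h8 : (m : ℝ) ≤ (1 / lo) * (t + 1) := by
    rw [one_div, inv_mul_eq_div, le_div_iff₀ hlo]; linarith
  have h9 : ((⌊t⌋₊ + 1 : ℕ) : ℝ) ≤ t + 1 := by
    push_cast
    linarith [Nat.floor_le ht]
  have h10 : (m : ℝ) * ((⌊t⌋₊ + 1 : ℕ) : ℝ) ≤ (1 / lo) * (A * Real.exp ((c₂ - c₃) * t)) := by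
    refine (mul_le_mul h8 h9 (by positivity) (by positivity)).trans ?_
    rw [mul_assoc, ← sq]
    exact mul_le_mul_of_nonneg_left (hA t ht) (by positivity)
  have h11 : Real.exp (c₂ * t) = Real.exp ((c₂ - c₃) * t) * Real.exp (c₃ * t) := by
    rw [← Real.exp_add]; congr 1; ring
  calc ((pathsIn f V m t).ncard : ℝ)
      ≤ (m * ((⌊t⌋₊ + 1 : ℕ) : ℝ)) * ((C * Real.exp c₁) * ((∑ a ∈ V, D a) * Real.exp (c₃ * t))) := by
        refine h3.trans (le_of_eq ?_)
        ring
    _ ≤ ((1 / lo) * (A * Real.exp ((c₂ - c₃) * t))) *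
          ((C * Real.exp c₁) * ((∑ a ∈ V, D a) * Real.exp (c₃ * t))) :=
        mul_le_mul_of_nonneg_right h10 (by positivity)
    _ = ((1 / lo) * (C * Real.exp c₁) * (∑ a ∈ V, D a) * A) * Real.exp (c₂ * t) := by
        rw [h11]; ring
    _ ≤ _ := by
        rw [add_mul]
        linarith

/-- Below the entropy of the flow, some vertex carries exponentially many loops. -/
theorem Susp.many_loops (P : Susp Adj φ) {c : ℝ} (hc : 0 ≤ c)
    (h : (c : EReal) < topEntropyOn (φ.toFun 1) univ) (C : ℝ) (hC : 0 < C) :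
    ∃ (a : B) (m : ℕ) (t : ℝ), 0 ≤ t ∧ C * Real.exp (c * t) < (loopsAt P.r a m t).ncard := by
  classical
  by_contra hcon
  push Not at hcon
  refine absurd h (not_lt.2 ?_)
  refine EReal.le_of_forall_lt_iff_le.1 fun c' hc' => ?_
  obtain ⟨C', hC', h1⟩ := paths_count P.lo_pos P.lo_le hc hC hcon Finset.univ c'
    (EReal.coe_lt_coe_iff.1 hc')
  refine P.entropy_le (Y := univ) (fun _ _ _ => mem_univ _)
    (hc.trans (EReal.coe_lt_coe_iff.1 hc').le) hC' (fun m t ht => ?_) fun z _ => ?_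
  · have : pathsIn P.r Finset.univ m t = tw P.r univ m t := by
      simp [pathsIn, Set.ofPred_true]
    rw [← this]
    exact h1 m t ht
  · obtain ⟨x, s, h0, h1, h2⟩ := P.surj z
    exact ⟨x, mem_univ _, s, h0, h1.le, h2⟩

end Loops


/-! ### Levels: families of loops of equal length -/

section Levels

variable {B : Type} [Fintype B] [MetricSpace B] {Adj : B → B → Prop}
variable {Λ : Type*} [MetricSpace Λ] [CompactSpace Λ] {φ : Flow ℝ Λ}

/-- `w` is the word of a closed path at `a`; the default value of `getD` encodes the return
to `a` after the last letter. -/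
def IsLoop (Adj : B → B → Prop) (a : B) (w : List B) : Prop :=
  w.getD 0 a = a ∧ ∀ i < w.length, Adj (w.getD i a) (w.getD (i + 1) a)

lemma IsLoop.append {a : B} {u v : List B} (hu : IsLoop Adj a u) (hv : IsLoop Adj a v) :
    IsLoop Adj a (u ++ v) := by
  have key : ∀ i, (u ++ v).getD i a = if i < u.length then u.getD i a else v.getD (i - u.length) a := by
    intro i
    split_ifs with h
    · exact List.getD_append _ _ _ _ h
    · exact List.getD_append_right _ _ _ _ (not_lt.1 h)
  have hend : u.getD u.length a = a := by simp
  refine ⟨?_, fun i hi => ?_⟩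
  · rw [key]
    split_ifs with h
    · exact hu.1
    · simpa using hv.1
  · rw [List.length_append] at hi
    rw [key, key]
    by_cases h1 : i + 1 < u.length
    · rw [if_pos (by omega), if_pos h1]
      exact hu.2 i (by omega)
    rw [if_neg h1]
    by_cases h2 : i < u.length
    · have h3 : i + 1 = u.length := by omega
      have h4 := hu.2 i h2
      rw [if_pos h2, h3, Nat.sub_self, hv.1]
      rwa [h3, hend] at h4
    · rw [if_neg h2]
      have h5 : i + 1 - u.length = i - u.length + 1 := by omega
      rw [h5]
      exact hv.2 _ (by omega)

lemma IsLoop.flatten {a : B} {l : List (List B)} (h : ∀ w ∈ l, IsLoop Adj a w) :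
    IsLoop Adj a l.flatten := by
  induction l with
  | nil => exact ⟨by simp, by simp⟩
  | cons w l ih =>
    rw [List.flatten_cons]
    exact (h w (by simp)).append (ih fun v hv => h v (by simp [hv]))

/-- Every bi-infinite sequence of loops of equal length is read off a point of the shift. -/
lemma exists_point {a : B} {L : ℕ} (hL : 1 ≤ L) (u : ℤ → List B) (hlen : ∀ j, (u j).length = L)
    (hu : ∀ j, IsLoop Adj a (u j)) : ∃ x : VS Adj, ∀ j : ℤ, wd (sh (j * L) x) L = u j := by
  have hL0 : (0 : ℤ) < L := by exact_mod_cast hL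
  let x : ℤ → B := fun n => (u (n / L)).getD (n % L).toNat a
  have hx : x ∈ vertexShift Adj := by
    intro n
    have hm0 := Int.emod_nonneg n hL0.ne'
    have hm1 := Int.emod_lt_of_pos n hL0
    have hdm := Int.mul_ediv_add_emod n L
    have h1 := (hu (n / L)).2 (n % L).toNat (by rw [hlen]; omega)
    by_cases h : n % L + 1 < L
    · have e1 : (n + 1) / (L : ℤ) = n / L := by
        rw [Int.ediv_eq_iff_of_pos hL0]
        constructor <;> nlinarith
      have e2 : (n + 1) % (L : ℤ) = n % L + 1 := by
        have := Int.mul_ediv_add_emod (n + 1) L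
        rw [e1] at this
        omega
      simp only [x, e1, e2]
      rwa [Int.toNat_add hm0 zero_le_one]
    · have h2 : n % (L : ℤ) + 1 = L := by omega
      have e1 : (n + 1) / (L : ℤ) = n / L + 1 := by
        rw [Int.ediv_eq_iff_of_pos hL0]
        constructor <;> nlinarith
      have e2 : (n + 1) % (L : ℤ) = 0 := by
        have := Int.mul_ediv_add_emod (n + 1) L
        rw [e1, mul_add] at this
        omega
      simp only [x, e1, e2]
      have h3 : (n % (L : ℤ)).toNat + 1 = (u (n / L)).length := by rw [hlen]; omega
      rw [h3] at h1
      simp only [Int.toNat_zero, (hu (n / L + 1)).1]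
      simpa using h1
  refine ⟨⟨x, hx⟩, fun j => ?_⟩
  have h := hlen j
  have : wd (sh (j * L) (⟨x, hx⟩ : VS Adj)) (u j).length = u j := by
    rw [wd_eq_iff']
    intro i hi
    rw [h] at hi
    have hi' : (i : ℤ) < L := by exact_mod_cast hi
    simp only [sh_apply, x]
    rw [Int.add_mul_ediv_right _ _ hL0.ne', Int.add_mul_emod_self_right,
      Int.ediv_eq_zero_of_lt (by omega) hi', Int.emod_eq_of_lt (by omega) hi', zero_add,
      Int.toNat_natCast, List.getD_eq_getElem _ _ (by omega)]
  rwa [h] at this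

/-- A family of loops at `a` of common length `L ≥ 1`, each of duration at most `T`. -/
structure Lev (f : VS Adj → ℝ) (a : B) where
  W : Finset (List B)
  L : ℕ
  T : ℝ
  ne : W.Nonempty
  one_le : 1 ≤ L
  len : ∀ w ∈ W, w.length = L
  loop : ∀ w ∈ W, IsLoop Adj a w
  time : ∀ x : VS Adj, wd x L ∈ W → bs f L x ≤ T

lemma Lev.exists_wd {f : VS Adj → ℝ} {a : B} (l : Lev f a) {w : List B} (hw : w ∈ l.W) :
    ∃ x : VS Adj, wd x l.L = w := by
  obtain ⟨x, hx⟩ := exists_point l.one_le (fun _ => w) (fun _ => l.len w hw) (fun _ => l.loop w hw)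
  refine ⟨x, ?_⟩
  have := hx 0
  rwa [zero_mul, sh_zero] at this

lemma Lev.T_pos {f : VS Adj → ℝ} {a : B} (l : Lev f a) {lo : ℝ} (hlo : 0 < lo)
    (hf : ∀ x, lo ≤ f x) : 0 < l.T := by
  obtain ⟨w, hw⟩ := l.ne
  obtain ⟨x, hx⟩ := l.exists_wd hw
  have h1 := l.time x (hx ▸ hw)
  have h2 := le_bs f hf l.L x
  have h3 : (1 : ℝ) ≤ l.L := by exact_mod_cast l.one_le
  nlinarith

lemma isLoop_wd {a : B} {x : VS Adj} {m : ℕ} (h0 : x.1 0 = a) (hm : x.1 m = a) :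
    IsLoop Adj a (wd x m) := by
  have key : ∀ i ≤ m, (wd x m).getD i a = x.1 i := by
    intro i hi
    rcases hi.lt_or_eq with h | rfl
    · rw [List.getD_eq_getElem _ _ (by simpa using h), wd_getElem]
    · rw [List.getD_eq_default _ _ (by simp), hm]
  refine ⟨by rw [key 0 (by omega)]; exact h0, fun i hi => ?_⟩
  rw [wd_length] at hi
  rw [key i hi.le, key (i + 1) hi]
  have := x.2 i
  push_cast
  exact this

/-- Below the entropy of the flow there is a level of larger rate: the loops of `Susp.many_loops`,
with a duration `T` that absorbs the variation of the return time among points with equal words. -/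
theorem Susp.exists_lev (P : Susp Adj φ) {c : ℝ} (hc : 0 ≤ c)
    (h : (c : EReal) < topEntropyOn (φ.toFun 1) univ) :
    ∃ (a : B) (l : Lev P.r a), Real.exp (c * l.T) < l.W.card := by
  obtain ⟨c₁, hc₁, hc₁h⟩ : ∃ c₁ : ℝ, c < c₁ ∧ (c₁ : EReal) < topEntropyOn (φ.toFun 1) univ := by
    obtain ⟨c₁, h1, h2⟩ := EReal.lt_iff_exists_real_btwn.1 h
    exact ⟨c₁, EReal.coe_lt_coe_iff.1 h1, h2⟩
  have hlo := P.lo_pos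
  set ε := (c₁ - c) * P.lo / (c + 1) with hε
  have hε0 : 0 < ε := div_pos (mul_pos (by linarith) hlo) (by linarith)
  obtain ⟨D, hD, hosc⟩ := osc P.contr hε0
  obtain ⟨a, m, t, ht, hbig⟩ := P.many_loops (hc.trans hc₁.le) hc₁h (Real.exp (c * D))
    (Real.exp_pos _)
  have hfin := finite_tw P.r {x | x.1 0 = a ∧ x.1 m = a} m t
  have h1 : 1 < (loopsAt P.r a m t).ncard := by
    have e1 : 1 ≤ Real.exp (c * D) := Real.one_le_exp (by positivity)
    have e2 : 1 ≤ Real.exp (c₁ * t) := Real.one_le_exp (mul_nonneg (by linarith) ht)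
    have : (1 : ℝ) < (loopsAt P.r a m t).ncard := by nlinarith
    exact_mod_cast this
  have hmt : m * P.lo ≤ t := by
    by_contra hcon
    rw [loopsAt, tw_empty_of_lt P.lo_le (not_le.1 hcon), Set.ncard_empty] at h1
    omega
  have hm : 1 ≤ m := by
    by_contra hcon
    have hm0 : m = 0 := by omega
    subst hm0
    have h2 : loopsAt P.r a 0 t ⊆ {[]} := fun w ⟨x, _, hx, _⟩ => by simp [← hx, wd_zero]
    have h3 := Set.ncard_le_ncard h2 (Set.finite_singleton _)
    rw [Set.ncard_singleton] at h3
    omega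
  have hcard : (loopsAt P.r a m t).ncard = hfin.toFinset.card :=
    Set.ncard_eq_toFinset_card _ hfin
  refine ⟨a, ⟨hfin.toFinset, m, t + ε * m + D, ?_, hm, ?_, ?_, ?_⟩, ?_⟩
  · rw [← Finset.card_pos, ← hcard]; omega
  · intro w hw
    obtain ⟨x, _, hx, _⟩ := hfin.mem_toFinset.1 hw
    simp [← hx]
  · intro w hw
    obtain ⟨x, hx, rfl, _⟩ := hfin.mem_toFinset.1 hw
    exact isLoop_wd hx.1 hx.2
  · intro x hx
    obtain ⟨y, hy, hyx, hyt⟩ := hfin.mem_toFinset.1 hx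
    have := (abs_le.1 (hosc m x y hyx.symm)).2
    linarith
  · simp only
    rw [← hcard]
    refine lt_of_le_of_lt ?_ hbig
    rw [← Real.exp_add]
    refine Real.exp_le_exp.2 ?_
    have h4 : c * (ε * m) ≤ (c₁ - c) * t := by
      have e1 : c * (ε * m) = (c / (c + 1)) * ((c₁ - c) * (m * P.lo)) := by
        rw [hε]; field_simp
      have e2 : c / (c + 1) ≤ 1 := by rw [div_le_one (by linarith)]; linarith
      have e3 : (c₁ - c) * (m * P.lo) ≤ (c₁ - c) * t :=
        mul_le_mul_of_nonneg_left hmt (by linarith)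
      have e4 : 0 ≤ (c₁ - c) * (m * P.lo) := mul_nonneg (by linarith) (by positivity)
      rw [e1]
      nlinarith
    linarith

end Levels


/-! ### From one level to the next: concatenations of a common type -/

section Step

variable {B : Type} [Fintype B] [MetricSpace B] {Adj : B → B → Prop}

lemma wd_split {L : ℕ} {w : List B} {u : List (List B)} (hw : w.length = L) {x : VS Adj}
    (h : wd x ((w :: u).length * L) = (w :: u).flatten) :
    wd x L = w ∧ wd (sh L x) (u.length * L) = u.flatten := by
  rw [List.length_cons, Nat.succ_mul, add_comm, wd_add, List.flatten_cons] at h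
  exact List.append_inj h (by simp [hw])

lemma bs_cons (f : VS Adj → ℝ) (L : ℕ) (w : List B) (u : List (List B)) (x : VS Adj) :
    bs f ((w :: u).length * L) x = bs f L x + bs f (u.length * L) (sh L x) := by
  rw [List.length_cons, Nat.succ_mul, add_comm, bs_add]

lemma bs_blocks {f : VS Adj → ℝ} {L : ℕ} {F : List B → ℝ} {D : ℝ} (u : List (List B))
    (hlen : ∀ w ∈ u, w.length = L) (hF : ∀ w ∈ u, ∀ y : VS Adj, wd y L = w → |bs f L y - F w| ≤ D)
    {x : VS Adj} (hx : wd x (u.length * L) = u.flatten) :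
    |bs f (u.length * L) x - (u.map F).sum| ≤ u.length * D := by
  induction u generalizing x with
  | nil => simp [bs_zero]
  | cons w u ih =>
    obtain ⟨h1, h2⟩ := wd_split (hlen w (by simp)) hx
    have h3 := ih (fun v hv => hlen v (by simp [hv])) (fun v hv => hF v (by simp [hv])) h2
    have h4 := hF w (by simp) x h1
    rw [bs_cons, List.map_cons, List.sum_cons, List.length_cons]
    push_cast
    rw [abs_le] at h3 h4 ⊢
    constructor <;> linarith

lemma bs_blocks_le {f : VS Adj → ℝ} {L : ℕ} {T : ℝ} (u : List (List B))
    (hlen : ∀ w ∈ u, w.length = L) (hF : ∀ w ∈ u, ∀ y : VS Adj, wd y L = w → bs f L y ≤ T)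
    {x : VS Adj} (hx : wd x (u.length * L) = u.flatten) :
    bs f (u.length * L) x ≤ u.length * T := by
  induction u generalizing x with
  | nil => simp [bs_zero]
  | cons w u ih =>
    obtain ⟨h1, h2⟩ := wd_split (hlen w (by simp)) hx
    have h3 := ih (fun v hv => hlen v (by simp [hv])) (fun v hv => hF v (by simp [hv])) h2
    have h4 := hF w (by simp) x h1
    rw [bs_cons, List.length_cons]
    push_cast
    linarith

lemma exists_rep {f : VS Adj → ℝ} {L : ℕ} {D : ℝ} (hD : 0 ≤ D)
    (h : ∀ x y : VS Adj, wd x L = wd y L → |bs f L x - bs f L y| ≤ D) :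
    ∃ F : List B → ℝ, ∀ w, ∀ y : VS Adj, wd y L = w → |bs f L y - F w| ≤ D := by
  have : ∀ w : List B, ∃ b : ℝ, ∀ y : VS Adj, wd y L = w → |bs f L y - b| ≤ D := by
    intro w
    by_cases hw : ∃ y : VS Adj, wd y L = w
    · obtain ⟨y, hy⟩ := hw
      exact ⟨bs f L y, fun z hz => h z y (hz.trans hy.symm)⟩
    · exact ⟨0, fun y hy => absurd ⟨y, hy⟩ hw⟩
  choose F hF using this
  exact ⟨F, hF⟩

/-- Rearranging the blocks changes a Birkhoff sum by a controlled amount. -/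
lemma bs_perm {f : VS Adj → ℝ} {L : ℕ} {D : ℝ} (hD : 0 ≤ D)
    (h : ∀ x y : VS Adj, wd x L = wd y L → |bs f L x - bs f L y| ≤ D) {u v : List (List B)}
    (huv : u.Perm v) (hlen : ∀ w ∈ u, w.length = L) {x y : VS Adj}
    (hx : wd x (u.length * L) = u.flatten) (hy : wd y (u.length * L) = v.flatten) :
    |bs f (u.length * L) x - bs f (u.length * L) y| ≤ u.length * (2 * D) := by
  obtain ⟨F, hF⟩ := exists_rep hD h
  have h1 := bs_blocks u hlen (fun w _ => hF w) hx
  rw [huv.length_eq] at hy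
  have h2 := bs_blocks v (fun w hw => hlen w (huv.mem_iff.2 hw)) (fun w _ => hF w) hy
  rw [← huv.length_eq, ← (huv.map F).sum_eq] at h2
  rw [abs_le] at h1 h2 ⊢
  constructor <;> linarith

/-- `l'` is a family of concatenations of words of `l` of a common type `u₀`, containing every
word of `l`; the duration of `l'` is sharp for this type, and its cardinality is at most just above
the one of rate `c'`. -/
def IsStep {f : VS Adj → ℝ} {a : B} (c' : ℝ) (l l' : Lev f a) : Prop :=
  ∃ u₀ : List (List B), 2 ≤ u₀.length ∧ l'.L = u₀.length * l.L ∧ (∀ w ∈ l.W, w ∈ u₀) ∧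
    (∀ w ∈ u₀, w ∈ l.W) ∧ (∀ w ∈ l'.W, ∃ u : List (List B), u.Perm u₀ ∧ u.flatten = w) ∧
    (∃ (y : VS Adj) (u : List (List B)), u.Perm u₀ ∧ wd y l'.L = u.flatten ∧
      l'.T ≤ bs f l'.L y + 1) ∧
    (l'.W.card : ℝ) ≤ Real.exp (c' * l'.T) + 1

/-- The exponential gain `κ` per block beats the number `(q + 1) ^ N` of types of `q` blocks. -/
lemma exists_q {N κ A : ℝ} (hN : 0 < N) (hκ : 0 < κ) :
    ∃ q : ℕ, 1 ≤ q ∧ N * Real.log (q + 1) + A < q * κ := by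
  set η := κ / (2 * N) with hη
  have hη0 : 0 < η := by positivity
  set A' := N * (η - 1 - Real.log η) + A with hA'
  obtain ⟨q, hq⟩ := exists_nat_gt (A' / (κ / 2))
  rw [div_lt_iff₀ (by positivity)] at hq
  refine ⟨q + 1, by omega, ?_⟩
  have hq0 : (0 : ℝ) < q + 1 + 1 := by positivity
  have h1 := Real.log_le_sub_one_of_pos (mul_pos hη0 hq0)
  rw [Real.log_mul hη0.ne' hq0.ne'] at h1
  have h2 : N * Real.log (q + 1 + 1) ≤ N * (η * (q + 1 + 1) - 1 - Real.log η) :=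
    mul_le_mul_of_nonneg_left (by linarith) hN.le
  have h3 : N * η = κ / 2 := by rw [hη]; field_simp
  push_cast
  have h4 : N * (η * ((q : ℝ) + 1 + 1) - 1 - Real.log η) = κ / 2 * (q + 1) + (A' - A) := by
    rw [hA', ← h3]; ring
  linarith

lemma flatten_inj {L : ℕ} (hL : 1 ≤ L) {u v : List (List B)} (hu : ∀ w ∈ u, w.length = L)
    (hv : ∀ w ∈ v, w.length = L) (hlen : u.length = v.length) (h : u.flatten = v.flatten) : u = v := by
  refine List.eq_iff_flatten_eq.2 ⟨h, ?_⟩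
  have h1 : ∀ u : List (List B), (∀ w ∈ u, w.length = L) →
      u.map List.length = List.replicate u.length L := fun u hu =>
    List.eq_replicate_iff.2 ⟨by simp, fun b hb => by
      obtain ⟨w, hw, rfl⟩ := List.mem_map.1 hb
      exact hu w hw⟩
  rw [h1 u hu, h1 v hv, hlen]

/-- Pigeonhole on the types of concatenations of `q` words. -/
lemma exists_type (W : Finset (List B)) (q : ℕ) : ∃ V : Finset (Fin q → {w // w ∈ W}),
    (W.card : ℝ) ^ q ≤ V.card * ((q : ℝ) + 1) ^ W.card ∧
    ∀ v ∈ V, ∀ v' ∈ V, (List.ofFn v).Perm (List.ofFn v') := by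
  classical
  let F : (Fin q → {w // w ∈ W}) → ({w // w ∈ W} → Fin (q + 1)) := fun v w =>
    ⟨(List.ofFn v).count w, by
      have := List.count_le_length (a := w) (l := List.ofFn v)
      rw [List.length_ofFn] at this
      omega⟩
  by_contra hcon
  push Not at hcon
  have hfib : ∀ y, ((Finset.univ.filter fun v => F v = y).card : ℝ) * ((q : ℝ) + 1) ^ W.card <
      (W.card : ℝ) ^ q := by
    intro y
    by_contra h
    obtain ⟨v, hv, v', hv', hp⟩ := hcon _ (not_lt.1 h)
    refine hp (List.perm_iff_count.2 fun w => ?_)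
    have h1 := (Finset.mem_filter.1 hv).2.trans (Finset.mem_filter.1 hv').2.symm
    simpa [F] using congrFun h1 w
  have hsum := Finset.card_eq_sum_card_fiberwise (f := F) (s := Finset.univ) (t := Finset.univ)
    (fun _ _ => Finset.mem_coe.2 (Finset.mem_univ _))
  have hcard : (Finset.univ : Finset (Fin q → {w // w ∈ W})).card = W.card ^ q := by
    simp
  have hcard' : (Finset.univ : Finset ({w // w ∈ W} → Fin (q + 1))).card = (q + 1) ^ W.card := by
    simp
  have h2 : ∑ y : {w // w ∈ W} → Fin (q + 1),
      ((Finset.univ.filter fun v => F v = y).card : ℝ) * ((q : ℝ) + 1) ^ W.card <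
      ∑ _y : {w // w ∈ W} → Fin (q + 1), (W.card : ℝ) ^ q :=
    Finset.sum_lt_sum_of_nonempty ⟨fun _ => 0, Finset.mem_univ _⟩ fun y _ => hfib y
  rw [← Finset.sum_mul, Finset.sum_const, hcard', nsmul_eq_mul] at h2
  have h3 : ∑ y : {w // w ∈ W} → Fin (q + 1),
      ((Finset.univ.filter fun v => F v = y).card : ℝ) = (W.card : ℝ) ^ q := by
    rw [← Nat.cast_sum, ← hsum, hcard]
    push_cast
    rfl
  rw [h3] at h2
  push_cast at h2
  linarith

end Step


section StepLemma

variable {B : Type} [Fintype B] [MetricSpace B] {Adj : B → B → Prop}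

/-- A level of rate larger than `c` produces, for every `c' < c`, a much longer level of rate just
above `c'` made of concatenations of a single type. -/
theorem Lev.exists_step {f : VS Adj → ℝ} {a : B} (l : Lev f a) {lo c c' : ℝ} (hlo : 0 < lo)
    (hf : ∀ x, lo ≤ f x) (hc' : 0 ≤ c') (hcc : c' < c) (h : Real.exp (c * l.T) < l.W.card) :
    ∃ l' : Lev f a, Real.exp (c' * l'.T) < l'.W.card ∧ IsStep c' l l' := by
  classical
  have hT := l.T_pos hlo hf
  set N := l.W.card with hN
  have hN1 : 1 ≤ N := Finset.card_pos.2 l.ne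
  have hN0 : (0 : ℝ) < N := by exact_mod_cast hN1
  have hκ : 0 < Real.log N - c' * l.T := by
    have h1 := (Real.lt_log_iff_exp_lt hN0).2 h
    nlinarith
  -- `q` free blocks, preceded by one copy of each of the `N` words of `l`
  obtain ⟨q, hq1, hq⟩ := exists_q (A := c' * N * l.T) hN0 hκ
  obtain ⟨V, hVc, hVp⟩ := exists_type l.W q
  have hVbig : Real.exp (c' * ((N + q : ℕ) * l.T)) < V.card := by
    have h1 : 0 < ((q : ℝ) + 1) ^ N := by positivity
    have h2 : Real.exp (c' * ((N + q : ℕ) * l.T)) * ((q : ℝ) + 1) ^ N < (N : ℝ) ^ q := by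
      have e1 : ((q : ℝ) + 1) ^ N = Real.exp (N * Real.log (q + 1)) := by
        rw [← Real.log_pow, Real.exp_log h1]
      have e2 : (N : ℝ) ^ q = Real.exp (q * Real.log N) := by
        rw [← Real.log_pow, Real.exp_log (by positivity)]
      rw [e1, e2, ← Real.exp_add]
      refine Real.exp_lt_exp.2 ?_
      push_cast
      nlinarith
    exact lt_of_mul_lt_mul_right (h2.trans_le hVc) h1.le
  have hVne : V.Nonempty := by
    rw [← Finset.card_pos]
    have := (Real.exp_pos _).trans hVbig
    exact_mod_cast this
  obtain ⟨v₀, hv₀⟩ := hVne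
  let U : (Fin q → {w // w ∈ l.W}) → List (List B) := fun v =>
    l.W.toList ++ (List.ofFn v).map Subtype.val
  have hUlen : ∀ v, (U v).length = N + q := fun v => by simp [U, hN]
  have hUmem : ∀ v, ∀ w ∈ U v, w ∈ l.W := by
    intro v w hw
    rcases List.mem_append.1 hw with h | h
    · exact Finset.mem_toList.1 h
    · obtain ⟨w', _, rfl⟩ := List.mem_map.1 h
      exact w'.2
  have hUl : ∀ v, ∀ w ∈ U v, w.length = l.L := fun v w hw => l.len w (hUmem v w hw)
  have hUp : ∀ v ∈ V, (U v).Perm (U v₀) := fun v hv =>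
    List.Perm.append_left _ ((hVp v hv v₀ hv₀).map _)
  have hUinj : Function.Injective fun v => (U v).flatten := by
    intro v v' hvv
    have h1 := flatten_inj l.one_le (hUl v) (hUl v') ((hUlen v).trans (hUlen v').symm) hvv
    have h2 := List.append_cancel_left h1
    exact List.ofFn_injective (List.map_injective_iff.2 Subtype.val_injective h2)
  set cand := V.image fun v => (U v).flatten with hcand
  have hcc' : cand.card = V.card := Finset.card_image_of_injective _ hUinj
  set L' := (N + q) * l.L with hL'
  have hL1 : 1 ≤ L' := Nat.mul_pos (by omega) l.one_le
  have hclen : ∀ w ∈ cand, w.length = L' := by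
    intro w hw
    obtain ⟨v, _, rfl⟩ := Finset.mem_image.1 hw
    have hm : (U v).map List.length = List.replicate (N + q) l.L :=
      List.eq_replicate_iff.2 ⟨by simp [hUlen], fun b hb => by
        obtain ⟨w, hw, rfl⟩ := List.mem_map.1 hb
        exact hUl v w hw⟩
    rw [List.length_flatten, hm, List.sum_replicate, smul_eq_mul]
  have hcloop : ∀ w ∈ cand, IsLoop Adj a w := by
    intro w hw
    obtain ⟨v, _, rfl⟩ := Finset.mem_image.1 hw
    exact IsLoop.flatten fun w hw => l.loop w (hUmem v w hw)
  have hctime : ∀ x : VS Adj, wd x L' ∈ cand → bs f L' x ≤ (N + q : ℕ) * l.T := by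
    intro x hx
    obtain ⟨v, _, hv⟩ := Finset.mem_image.1 hx
    have := bs_blocks_le (f := f) (U v) (hUl v)
      (fun w hw y hy => l.time y (hy ▸ hUmem v w hw)) (x := x) (by rw [hUlen]; exact hv.symm)
    rwa [hUlen] at this
  set X := (fun x : VS Adj => bs f L' x) '' {x | wd x L' ∈ cand} with hX
  have hXb : BddAbove X := ⟨(N + q : ℕ) * l.T, by rintro _ ⟨x, hx, rfl⟩; exact hctime x hx⟩
  have hXne : X.Nonempty := by
    have h0 : (U v₀).flatten ∈ cand := Finset.mem_image_of_mem _ hv₀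
    obtain ⟨x, hx⟩ := exists_point hL1 (fun _ => (U v₀).flatten) (fun _ => hclen _ h0)
      (fun _ => hcloop _ h0)
    have := hx 0
    rw [zero_mul, sh_zero] at this
    exact ⟨_, x, by rw [Set.mem_ofPred_eq, this]; exact h0, rfl⟩
  set T' := sSup X with hT'
  have hT'le : T' ≤ (N + q : ℕ) * l.T :=
    csSup_le hXne (by rintro _ ⟨x, hx, rfl⟩; exact hctime x hx)
  have hbig : Real.exp (c' * T') < cand.card := by
    rw [hcc']
    exact (Real.exp_le_exp.2 (mul_le_mul_of_nonneg_left hT'le hc')).trans_lt hVbig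
  have hfl : ⌊Real.exp (c' * T')⌋₊ + 1 ≤ cand.card :=
    Nat.succ_le_of_lt ((Nat.floor_lt (Real.exp_pos _).le).2 hbig)
  obtain ⟨W', hW', hWc⟩ := Finset.exists_subset_card_eq hfl
  refine ⟨⟨W', L', T', ?_, hL1, fun w hw => hclen w (hW' hw), fun w hw => hcloop w (hW' hw),
    fun x hx => le_csSup hXb ⟨x, hW' hx, rfl⟩⟩, ?_, U v₀, ?_, ?_, ?_, hUmem v₀, ?_, ?_, ?_⟩
  · rw [← Finset.card_pos]; omega
  · simp only
    rw [hWc]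
    push_cast
    exact Nat.lt_floor_add_one _
  · rw [hUlen]; omega
  · rw [hUlen]
  · exact fun w hw => List.mem_append_left _ (Finset.mem_toList.2 hw)
  · intro w hw
    obtain ⟨v, hv, rfl⟩ := Finset.mem_image.1 (hW' hw)
    exact ⟨U v, hUp v hv, rfl⟩
  · obtain ⟨_, ⟨y, hy, rfl⟩, hy'⟩ := exists_lt_of_lt_csSup hXne (sub_one_lt T')
    obtain ⟨v, hv, hvy⟩ := Finset.mem_image.1 hy
    exact ⟨y, U v, hUp v hv, hvy.symm, by simp only at hy' ⊢; linarith⟩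
  · simp only
    rw [hWc]
    push_cast
    have := Nat.floor_le (Real.exp_pos (c' * T')).le
    linarith

end StepLemma


/-! ### The subshifts of free concatenations of the words of a level -/

section Points

variable {B : Type} [Fintype B] [MetricSpace B] {Adj : B → B → Prop}
variable {f : VS Adj → ℝ} {a : B}

/-- The points that are bi-infinite concatenations of words of the level, at some phase `p`. -/
def Lev.pts (l : Lev f a) : Set (VS Adj) :=
  {x | ∃ p : ℤ, ∀ j : ℤ, wd (sh (p + j * l.L) x) l.L ∈ l.W}

lemma Lev.pts_sh (l : Lev f a) (n : ℤ) {x : VS Adj} (hx : x ∈ l.pts) : sh n x ∈ l.pts := by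
  obtain ⟨p, hp⟩ := hx
  refine ⟨p - n, fun j => ?_⟩
  have h := hp j
  rw [sh_sh]
  convert h using 3
  ring

lemma Lev.exists_phase (l : Lev f a) {x : VS Adj} (hx : x ∈ l.pts) :
    ∃ p : ℕ, p < l.L ∧ ∀ j : ℤ, wd (sh (p + j * l.L) x) l.L ∈ l.W := by
  obtain ⟨p, hp⟩ := hx
  have hL0 : (0 : ℤ) < l.L := by exact_mod_cast l.one_le
  have hm0 := Int.emod_nonneg p hL0.ne'
  have hm1 := Int.emod_lt_of_pos p hL0
  refine ⟨(p % l.L).toNat, by omega, fun j => ?_⟩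
  rw [Int.toNat_of_nonneg hm0]
  have h := hp (j - p / l.L)
  have e : p + (j - p / l.L) * l.L = p % l.L + j * l.L := by
    have := Int.mul_ediv_add_emod p l.L
    linear_combination -this
  rwa [e] at h

lemma Lev.isClosed_mem (l : Lev f a) : IsClosed {x : VS Adj | wd x l.L ∈ l.W} := by
  have : {x : VS Adj | wd x l.L ∈ l.W} = ⋃ w ∈ l.W, {x | wd x l.L = w} := by
    ext x; simp
  rw [this]
  refine l.W.finite_toSet.isClosed_biUnion fun w hw => ?_
  have h : {x : VS Adj | wd x l.L = w} =
      ⋂ (i : ℕ) (h : i < w.length), {x | x.1 (i : ℤ) = w[i]} := by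
    ext x
    simp only [Set.mem_iInter, Set.mem_ofPred_eq]
    rw [← l.len w hw]
    exact wd_eq_iff'
  rw [h]
  exact isClosed_iInter fun i => isClosed_iInter fun _ =>
    isClosed_eq (continuous_coord _) continuous_const

lemma Lev.isClosed_pts (l : Lev f a) : IsClosed l.pts := by
  have : l.pts = ⋃ p ∈ Finset.range l.L, ⋂ j : ℤ, sh ((p : ℕ) + j * l.L) ⁻¹' {x | wd x l.L ∈ l.W} := by
    ext x
    simp only [Set.mem_iUnion, Set.mem_iInter, Set.mem_preimage, Set.mem_ofPred_eq,
      Finset.mem_range, exists_prop]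
    exact ⟨l.exists_phase, fun ⟨p, _, hp⟩ => ⟨p, hp⟩⟩
  rw [this]
  exact (Finset.range l.L).finite_toSet.isClosed_biUnion fun p _ =>
    isClosed_iInter fun j => l.isClosed_mem.preimage (continuous_sh _)

lemma Lev.pts_nonempty (l : Lev f a) : l.pts.Nonempty := by
  obtain ⟨w, hw⟩ := l.ne
  obtain ⟨x, hx⟩ := exists_point l.one_le (fun _ => w) (fun _ => l.len w hw) (fun _ => l.loop w hw)
  exact ⟨x, 0, fun j => by rw [zero_add, hx]; exact hw⟩

lemma wd_block {L : ℕ} {u : List (List B)} (hlen : ∀ w ∈ u, w.length = L) {x : VS Adj}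
    (h : wd x (u.length * L) = u.flatten) (i : ℕ) (hi : i < u.length) :
    wd (sh (i * L) x) L = u[i] := by
  induction u generalizing x i with
  | nil => simp at hi
  | cons w u ih =>
    obtain ⟨h1, h2⟩ := wd_split (hlen w (by simp)) h
    cases i with
    | zero => simpa [sh_zero] using h1
    | succ i =>
      have h3 := ih (fun v hv => hlen v (by simp [hv])) h2 i (by simpa using hi)
      rw [sh_sh] at h3
      simp only [List.getElem_cons_succ]
      rw [← h3]
      congr 2
      push_cast
      ring

lemma IsStep.L_ge {c' : ℝ} {l l' : Lev f a} (h : IsStep c' l l') : 2 * l.L ≤ l'.L := by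
  obtain ⟨u₀, h2, hL, _⟩ := h
  rw [hL]
  exact Nat.mul_le_mul_right _ h2

/-- A word of the longer level is a concatenation of words of the shorter one, each of which
occurs. -/
lemma IsStep.blocks {c' : ℝ} {l l' : Lev f a} (h : IsStep c' l l') {y : VS Adj}
    (hy : wd y l'.L ∈ l'.W) : ∃ Q : ℕ, l'.L = Q * l.L ∧
      (∀ i < Q, wd (sh (i * l.L) y) l.L ∈ l.W) ∧
      ∀ w ∈ l.W, ∃ i < Q, wd (sh (i * l.L) y) l.L = w := by
  obtain ⟨u₀, h2, hL, hsub, hsub', hperm, _⟩ := h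
  obtain ⟨u, hu, huy⟩ := hperm _ hy
  have hlen : ∀ w ∈ u, w.length = l.L := fun w hw => l.len w (hsub' w (hu.mem_iff.1 hw))
  have h1 : wd y (u.length * l.L) = u.flatten := by rw [hu.length_eq, ← hL, huy]
  have hb := wd_block hlen h1
  refine ⟨u.length, by rw [hL, hu.length_eq], fun i hi => ?_, fun w hw => ?_⟩
  · rw [hb i hi]
    exact hsub' _ (hu.mem_iff.1 (List.getElem_mem hi))
  · obtain ⟨i, hi, hiw⟩ := List.getElem_of_mem (hu.mem_iff.2 (hsub w hw))
    exact ⟨i, hi, by rw [hb i hi, hiw]⟩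

lemma IsStep.pts_subset {c' : ℝ} {l l' : Lev f a} (h : IsStep c' l l') : l'.pts ⊆ l.pts := by
  rintro x ⟨p, hp⟩
  obtain ⟨Q, hQ, -⟩ := h.blocks (hp 0)
  have hL1 := l.one_le
  have hL1' := l'.one_le
  have hQ0 : (0 : ℤ) < Q := by
    rcases Nat.eq_zero_or_pos Q with h | h
    · rw [h] at hQ; omega
    · exact_mod_cast h
  refine ⟨p, fun n => ?_⟩
  obtain ⟨Q', hQ', hb, -⟩ := h.blocks (hp (n / Q))
  have hQQ : Q' = Q := Nat.eq_of_mul_eq_mul_right hL1 (hQ'.symm.trans hQ)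
  subst hQQ
  have hm0 := Int.emod_nonneg n hQ0.ne'
  have hm1 := Int.emod_lt_of_pos n hQ0
  have h1 := hb (n % Q').toNat (by omega)
  rw [sh_sh, Int.toNat_of_nonneg hm0, hQ'] at h1
  convert h1 using 3
  have := Int.mul_ediv_add_emod n Q'
  push_cast
  linear_combination -(l.L : ℤ) * this

lemma IsStep.occurs {c' : ℝ} {l l' : Lev f a} (h : IsStep c' l l') {x : VS Adj} (hx : x ∈ l'.pts)
    {w : List B} (hw : w ∈ l.W) : ∃ n : ℤ, wd (sh n x) l.L = w := by
  obtain ⟨p, hp⟩ := hx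
  obtain ⟨Q, -, -, hb⟩ := h.blocks (hp 0)
  obtain ⟨i, _, hi⟩ := hb w hw
  rw [sh_sh] at hi
  exact ⟨_, hi⟩

/-- If all words of a level have nearly the same Birkhoff sum, then Birkhoff averages are uniform
along its concatenations. -/
lemma Lev.bs_pts (l : Lev f a) {g : VS Adj → ℝ} {M S D : ℝ} (hM : ∀ x, |g x| ≤ M)
    (hS : ∀ y : VS Adj, wd y l.L ∈ l.W → |bs g l.L y - S| ≤ D * l.L) (n : ℕ) {x : VS Adj}
    (hx : x ∈ l.pts) : |bs g n x - n * (S / l.L)| ≤ D * n + (4 * l.L * M + |S| + |D| * l.L) := by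
  obtain ⟨p, hpL, hp⟩ := l.exists_phase hx
  have hL0 : (0 : ℝ) < l.L := by exact_mod_cast l.one_le
  have hbM : ∀ k (y : VS Adj), |bs g k y| ≤ k * M := fun k y =>
    abs_le.2 ⟨by have := le_bs g (fun x => (abs_le.1 (hM x)).1) k y; linarith,
      bs_le g (fun x => (abs_le.1 (hM x)).2) k y⟩
  have hM0 : 0 ≤ M := (abs_nonneg _).trans (hM x)
  have hblk : ∀ q : ℕ, |bs g (q * l.L) (sh p x) - q * S| ≤ q * (D * l.L) := by
    intro q
    induction q with
    | zero => simp [bs_zero]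
    | succ q ih =>
      rw [Nat.succ_mul, bs_add]
      have h1 := hS _ (hp q)
      rw [sh_sh]
      have e : (p : ℤ) + (q : ℤ) * l.L = ((q * l.L : ℕ) : ℤ) + p := by push_cast; ring
      rw [e] at h1
      push_cast at ih h1 ⊢
      rw [abs_le] at ih h1 ⊢
      constructor <;> linarith
  set q := n / l.L with hq
  set r := n % l.L with hr
  have hn : q * l.L + r = n := Nat.div_add_mod' n l.L
  have hrL : r < l.L := Nat.mod_lt _ l.one_le
  have e1 : bs g n x = bs g p x + bs g n (sh p x) - bs g p (sh n x) := by
    have h1 := bs_add g p n x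
    have h2 := bs_add g n p x
    rw [add_comm n p] at h2
    linarith
  have e2 : bs g n (sh p x) = bs g (q * l.L) (sh p x) + bs g r (sh ((q * l.L : ℕ) : ℤ) (sh p x)) := by
    rw [← bs_add, hn]
  have hpL' : (p : ℝ) * M ≤ l.L * M :=
    mul_le_mul_of_nonneg_right (by exact_mod_cast hpL.le) hM0
  have hrL' : (r : ℝ) * M ≤ l.L * M :=
    mul_le_mul_of_nonneg_right (by exact_mod_cast hrL.le) hM0
  have h1 := abs_le.1 ((hbM p x).trans hpL')
  have h2 := abs_le.1 ((hbM p (sh n x)).trans hpL')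
  have h3 := abs_le.1 ((hbM r (sh ((q * l.L : ℕ) : ℤ) (sh p x))).trans hrL')
  have h4 := abs_le.1 (hblk q)
  have hn' : (q : ℝ) * l.L + r = n := by exact_mod_cast hn
  have e3 : (n : ℝ) * (S / l.L) = q * S + r / l.L * S := by
    rw [← hn']; field_simp
  have h5 : |(r : ℝ) / l.L * S| ≤ |S| := by
    rw [abs_mul]
    refine mul_le_of_le_one_left (abs_nonneg _) ?_
    rw [abs_of_nonneg (by positivity), div_le_one hL0]
    exact_mod_cast hrL.le
  have h5 := abs_le.1 h5
  have e4 : (q : ℝ) * (D * l.L) = D * n - D * r := by rw [← hn']; ring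
  have h6 : |D * (r : ℝ)| ≤ |D| * l.L := by
    rw [abs_mul, abs_of_nonneg (by positivity : (0 : ℝ) ≤ r)]
    exact mul_le_mul_of_nonneg_left (by exact_mod_cast hrL.le) (abs_nonneg _)
  have h6 := abs_le.1 h6
  have h7 : 0 ≤ (l.L : ℝ) * M := by positivity
  rw [abs_le, e1, e2, e3]
  constructor <;> linarith

end Points


/-! ### The limit of a tower of levels -/

section Tower

variable {B : Type} [Fintype B] [MetricSpace B] {Adj : B → B → Prop}
variable {f : VS Adj → ℝ} {a : B}

/-- Words of `l'` are rearrangements of the same words of `l`, so their Birkhoff sums almost agree as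
soon as those of `g` over a word of `l` are determined by the word up to `ε` per letter. -/
lemma IsStep.uniform {c' : ℝ} {l l' : Lev f a} (h : IsStep c' l l') :
    ∃ y₀ : VS Adj, l'.T ≤ bs f l'.L y₀ + 1 ∧ ∀ (g : VS Adj → ℝ) (ε : ℝ), 0 ≤ ε →
      (∀ x y : VS Adj, wd x l.L = wd y l.L → |bs g l.L x - bs g l.L y| ≤ ε * l.L) →
      ∀ y : VS Adj, wd y l'.L ∈ l'.W → |bs g l'.L y - bs g l'.L y₀| ≤ 2 * ε * l'.L := by
  obtain ⟨u₀, h2, hL, hsub, hsub', hperm, ⟨y₀, v, hv, hvy, hT⟩, -⟩ := h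
  refine ⟨y₀, hT, fun g ε hε hosc y hy => ?_⟩
  obtain ⟨u, hu, huy⟩ := hperm _ hy
  have hlen : ∀ w ∈ u, w.length = l.L := fun w hw => l.len w (hsub' w (hu.mem_iff.1 hw))
  have hL' : l'.L = u.length * l.L := by rw [hL, hu.length_eq]
  rw [hL'] at huy hvy ⊢
  have := bs_perm (by positivity) hosc (hu.trans hv.symm) hlen huy.symm hvy
  refine this.trans (le_of_eq ?_)
  push_cast
  ring

/-- The points that are concatenations of words of every level of the sequence `l`. -/
def limSet (l : ℕ → Lev f a) : Set (VS Adj) := ⋂ k, (l k).pts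

variable {l : ℕ → Lev f a} {cs : ℕ → ℝ}

lemma lt_L (hstep : ∀ k, IsStep (cs (k + 1)) (l k) (l (k + 1))) (k : ℕ) : k < (l k).L := by
  induction k with
  | zero => exact (l 0).one_le
  | succ k ih =>
    have := (hstep k).L_ge
    omega

lemma limSet_nonempty (hstep : ∀ k, IsStep (cs (k + 1)) (l k) (l (k + 1))) :
    (limSet l).Nonempty :=
  IsCompact.nonempty_iInter_of_sequence_nonempty_isCompact_isClosed _
    (fun k => (hstep k).pts_subset) (fun k => (l k).pts_nonempty)
    (l 0).isClosed_pts.isCompact (fun k => (l k).isClosed_pts)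

lemma limSet_sh (n : ℤ) {x : VS Adj} (hx : x ∈ limSet l) : sh n x ∈ limSet l :=
  Set.mem_iInter.2 fun k => (l k).pts_sh n (Set.mem_iInter.1 hx k)

lemma isClosed_limSet : IsClosed (limSet l) := isClosed_iInter fun k => (l k).isClosed_pts

lemma tower_uniform (hstep : ∀ k, IsStep (cs (k + 1)) (l k) (l (k + 1))) {g : VS Adj → ℝ}
    (hg : Continuous g) {ε : ℝ} (hε : 0 < ε) :
    ∃ K : ℕ, ∀ k ≥ K, ∃ y₀ : VS Adj, (l (k + 1)).T ≤ bs f (l (k + 1)).L y₀ + 1 ∧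
      ∀ y : VS Adj, wd y (l (k + 1)).L ∈ (l (k + 1)).W →
        |bs g (l (k + 1)).L y - bs g (l (k + 1)).L y₀| ≤ ε * (l (k + 1)).L := by
  obtain ⟨C, hC, hosc⟩ := osc hg (ε := ε / 4) (by positivity)
  obtain ⟨K, hK⟩ := exists_nat_gt (C / (ε / 4))
  rw [div_lt_iff₀ (by positivity)] at hK
  refine ⟨K, fun k hk => ?_⟩
  obtain ⟨y₀, hT, h⟩ := (hstep k).uniform
  refine ⟨y₀, hT, fun y hy => ?_⟩
  have h1 := h g (ε / 2) (by positivity) (fun x y hxy => ?_) y hy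
  · refine h1.trans (le_of_eq ?_)
    ring
  · refine (hosc _ x y hxy).trans ?_
    have h2 : (K : ℝ) ≤ (l k).L := by exact_mod_cast hk.trans (lt_L hstep k).le
    nlinarith

/-- Uniform approximation of Birkhoff averages by constants up to every `ε` gives uniform
convergence to one constant. -/
lemma ub_of {Y : Set (VS Adj)} (hne : Y.Nonempty) (h : ∀ g : VS Adj → ℝ, Continuous g → ∀ ε > 0,
    ∃ I C : ℝ, 0 ≤ C ∧ ∀ (n : ℕ), ∀ x ∈ Y, |bs g n x - n * I| ≤ ε * n + C) : UB Y := by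
  intro g hg
  obtain ⟨x₀, hx₀⟩ := hne
  have h' : ∀ ε : ℝ, ∃ I C : ℝ, 0 < ε → 0 ≤ C ∧ ∀ (n : ℕ), ∀ x ∈ Y,
      |bs g n x - n * I| ≤ ε * n + C := by
    intro ε
    by_cases hε : 0 < ε
    · obtain ⟨I, C, hC⟩ := h g hg ε hε
      exact ⟨I, C, fun _ => hC⟩
    · exact ⟨0, 0, fun h => absurd h hε⟩
  choose I C hIC using h'
  have hcmp : ∀ ε ε' : ℝ, 0 < ε → 0 < ε' → I ε' - ε' ≤ I ε + ε := by
    intro ε ε' hε hε'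
    have : I ε' - I ε ≤ ε + ε' := by
      refine le_of_linear (B := C ε + C ε') fun N => ⟨N, le_rfl, ?_⟩
      have h1 := abs_le.1 ((hIC ε hε).2 N x₀ hx₀)
      have h2 := abs_le.1 ((hIC ε' hε').2 N x₀ hx₀)
      nlinarith
    linarith
  set J := sSup {s | ∃ ε > 0, s = I ε - ε} with hJ
  have hb : BddAbove {s | ∃ ε > 0, s = I ε - ε} :=
    ⟨I 1 + 1, by rintro _ ⟨ε, hε, rfl⟩; exact hcmp 1 ε one_pos hε⟩
  have hJI : ∀ ε > 0, |J - I ε| ≤ ε := by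
    intro ε hε
    have h1 : I ε - ε ≤ J := le_csSup hb ⟨ε, hε, rfl⟩
    have h2 : J ≤ I ε + ε := csSup_le ⟨_, 1, one_pos, rfl⟩ (by
      rintro _ ⟨ε', hε', rfl⟩; exact hcmp ε ε' hε hε')
    rw [abs_le]
    constructor <;> linarith
  refine ⟨J, fun ε hε => ⟨C (ε / 2), (hIC _ (half_pos hε)).1, fun n x hx => ?_⟩⟩
  have h1 := abs_le.1 ((hIC _ (half_pos hε)).2 n x hx)
  have h2 := abs_le.1 (hJI _ (half_pos hε))
  have hn : (0 : ℝ) ≤ n := by positivity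
  rw [abs_le]
  constructor <;> nlinarith

/-- The base system on the limit of a tower is uniquely ergodic. -/
theorem ub_limSet (hstep : ∀ k, IsStep (cs (k + 1)) (l k) (l (k + 1))) : UB (limSet l) := by
  refine ub_of (limSet_nonempty hstep) fun g hg ε hε => ?_
  obtain ⟨K, hK⟩ := tower_uniform hstep hg hε
  obtain ⟨y₀, -, h⟩ := hK K le_rfl
  obtain ⟨M, hM0, hM⟩ := exists_bound_vs hg
  exact ⟨_, _, by positivity, fun n x hx =>
    (l (K + 1)).bs_pts hM h n (Set.mem_iInter.1 hx (K + 1))⟩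

/-- The concatenations of a level have few words of length `m`: such a word is determined by its
phase and `m / L + 2` consecutive blocks. -/
lemma Lev.count (l : Lev f a) {g : VS Adj → ℝ} (m : ℕ) (t : ℝ) :
    (tw g l.pts m t).ncard ≤ l.L * l.W.card ^ (m / l.L + 2) := by
  classical
  let C : ℕ → Set (List B) := fun q =>
    {w | ∃ y : VS Adj, wd y (q * l.L) = w ∧ ∀ i < q, wd (sh (i * l.L) y) l.L ∈ l.W}
  have hCfin : ∀ q, (C q).Finite := fun q =>
    (finite_wd (q * l.L)).subset fun w ⟨y, hy, _⟩ => by simp [← hy]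
  have hC : ∀ q, (C q).ncard ≤ l.W.card ^ q := by
    intro q
    induction q with
    | zero =>
      have h2 : C 0 ⊆ {[]} := fun w ⟨x, hx, _⟩ => by simp [← hx, wd_zero]
      simpa using Set.ncard_le_ncard h2 (Set.finite_singleton _)
    | succ q ih =>
      have h1 : C (q + 1) ⊆ Set.image2 (fun u v => u ++ v) (C q) (l.W : Set (List B)) := by
        rintro w ⟨y, rfl, hy⟩
        refine ⟨_, ⟨y, rfl, fun i hi => hy i (by omega)⟩, _, hy q (by omega), ?_⟩
        rw [Nat.succ_mul, wd_add]
        push_cast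
        rfl
      calc (C (q + 1)).ncard ≤ _ := Set.ncard_le_ncard h1 ((hCfin q).image2 _ l.W.finite_toSet)
        _ ≤ (C q).ncard * (l.W : Set (List B)).ncard := ncard_image2_le _ (hCfin q) l.W.finite_toSet
        _ ≤ l.W.card ^ q * l.W.card := by
            rw [Set.ncard_coe_finset]
            exact Nat.mul_le_mul_right _ ih
        _ = _ := (pow_succ _ _).symm
  set q := m / l.L + 2 with hq
  have hqm : m + l.L ≤ q * l.L := by
    have h1 := Nat.div_add_mod' m l.L
    have h2 := Nat.mod_lt m l.one_le
    have h3 : q * l.L = m / l.L * l.L + 2 * l.L := by rw [hq, add_mul]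
    omega
  have hsub : tw g l.pts m t ⊆ Set.image2 (fun (p : ℕ) (w : List B) => (w.drop (l.L - p)).take m)
      (Finset.range l.L : Set ℕ) (C q) := by
    rintro w ⟨x, hx, rfl, -⟩
    obtain ⟨p, hpL, hp⟩ := l.exists_phase hx
    refine ⟨p, by simpa using hpL, wd (sh (p - l.L) x) (q * l.L), ⟨_, rfl, fun i _ => ?_⟩, ?_⟩
    · have h1 := hp (i - 1)
      rw [sh_sh]
      convert h1 using 3
      ring
    · obtain ⟨s, hs⟩ := Nat.exists_eq_add_of_le (show (l.L - p) + m ≤ q * l.L by omega)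
      simp only
      rw [hs, wd_add, wd_add, List.append_assoc, sh_sh,
        List.drop_left' (by simp), List.take_left' (by simp)]
      have : ((l.L - p : ℕ) : ℤ) + (p - l.L) = 0 := by omega
      rw [this, sh_zero]
  calc _ ≤ _ := Set.ncard_le_ncard hsub ((Finset.range l.L).finite_toSet.image2 _ (hCfin q))
    _ ≤ _ := ncard_image2_le _ (Finset.range l.L).finite_toSet (hCfin q)
    _ ≤ _ := by
      rw [Set.ncard_coe_finset, Finset.card_range]
      exact Nat.mul_le_mul_left _ (hC q)

/-- The limit of a tower with rates decreasing to `c` has word complexity, measured in time, of rate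
at most every `c'' > c`. -/
theorem tower_count (hstep : ∀ k, IsStep (cs (k + 1)) (l k) (l (k + 1))) {lo c c'' : ℝ}
    (hf : Continuous f) (hlo : 0 < lo) (hflo : ∀ x, lo ≤ f x) (hc : 0 ≤ c) (hcs : ∀ k, c ≤ cs k)
    (hlim : Tendsto cs atTop (𝓝 c)) (hcc : c < c'') :
    ∃ C > 0, ∀ (m : ℕ) (t : ℝ), 0 ≤ t →
      ((tw f (limSet l) m t).ncard : ℝ) ≤ C * Real.exp (c'' * t) := by
  set δ := c'' - c with hδ
  have hδ0 : 0 < δ := by linarith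
  set ε := δ * lo / (2 * (1 + 2 * c'')) with hε
  have hε0 : 0 < ε := by
    have : 0 < c'' := by linarith
    positivity
  obtain ⟨K, hK⟩ := tower_uniform hstep hf hε0
  obtain ⟨K₁, hK₁⟩ := exists_nat_gt (1 / ε)
  rw [div_lt_iff₀ hε0] at hK₁
  obtain ⟨K₂, hK₂⟩ := eventually_atTop.1
    (hlim.eventually (gt_mem_nhds (show c < c + δ / 2 by linarith)))
  set k := max K (max K₁ K₂) with hk
  have hkK : K ≤ k := le_max_left _ _
  have hkK₁ : K₁ ≤ k := (le_max_left _ _).trans (le_max_right _ _)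
  have hkK₂ : K₂ ≤ k := (le_max_right _ _).trans (le_max_right _ _)
  obtain ⟨y₀, hT, hu⟩ := hK k hkK
  have hc2 := hK₂ (k + 1) (by omega)
  have hc1 := hcs (k + 1)
  have hkL := lt_L hstep (k + 1)
  obtain ⟨-, -, -, -, -, -, -, hcard⟩ := hstep k
  have hTpos := (l (k + 1)).T_pos hlo hflo
  have hcount := fun m t => (l (k + 1)).count (g := f) m t
  have hsubk : limSet l ⊆ (l (k + 1)).pts := Set.iInter_subset _ _
  generalize l (k + 1) = l' at *
  generalize cs (k + 1) = c₁ at *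
  have hL0 : (0 : ℝ) < l'.L := by exact_mod_cast l'.one_le
  have hLε : 1 ≤ ε * l'.L := by
    have h1 : (K₁ : ℝ) ≤ l'.L := by exact_mod_cast (by omega : K₁ ≤ l'.L)
    nlinarith
  obtain ⟨M, hM0, hM⟩ := exists_bound_vs hf
  set S := bs f l'.L y₀ with hS
  set C₁ := 4 * l'.L * M + |S| + |ε| * l'.L with hC₁
  have hc10 : 0 ≤ c₁ := hc.trans hc1
  have hW : (l'.W.card : ℝ) ≤ Real.exp (1 + c₁ * l'.T) := by
    refine hcard.trans ?_
    have h1 : 1 ≤ Real.exp (c₁ * l'.T) := Real.one_le_exp (by positivity)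
    have h2 : 2 ≤ Real.exp 1 := by linarith [Real.add_one_le_exp 1]
    rw [Real.exp_add]
    nlinarith
  set C₂ := 2 * (1 + c₁ * l'.T) + c₁ * C₁ with hC₂
  refine ⟨l'.L * Real.exp C₂, by positivity, fun m t ht => ?_⟩
  have hfin := finite_tw f l'.pts m t
  have hle : (tw f (limSet l) m t).ncard ≤ (tw f l'.pts m t).ncard :=
    Set.ncard_le_ncard (fun w ⟨x, hx, h⟩ => ⟨x, hsubk hx, h⟩) hfin
  rcases (tw f l'.pts m t).eq_empty_or_nonempty with he | ⟨w, x, hx, -, hxt⟩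
  · rw [he, Set.ncard_empty] at hle
    have : ((tw f (limSet l) m t).ncard : ℝ) ≤ 0 := by exact_mod_cast hle
    exact this.trans (by positivity)
  have h1 : ((tw f (limSet l) m t).ncard : ℝ) ≤ l'.L * (l'.W.card : ℝ) ^ (m / l'.L + 2) := by
    exact_mod_cast hle.trans (hcount m t)
  have h2 : (l'.W.card : ℝ) ^ (m / l'.L + 2) ≤
      Real.exp ((m / l'.L + 2) * (1 + c₁ * l'.T)) := by
    refine (pow_le_pow_left₀ (by positivity) hW _).trans ?_
    rw [← Real.exp_nat_mul]
    refine Real.exp_le_exp.2 (mul_le_mul_of_nonneg_right ?_ (by positivity))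
    push_cast
    have := Nat.cast_div_le (α := ℝ) (m := m) (n := l'.L)
    linarith
  have hmt : m * lo ≤ t := (le_bs f hflo m x).trans hxt
  have h3 := (abs_le.1 (l'.bs_pts hM hu m hx)).1
  have h4 : (m : ℝ) / l'.L ≤ ε * m := by
    rw [div_le_iff₀ hL0]
    have : (0 : ℝ) ≤ m := by positivity
    nlinarith
  have h5 : m / l'.L * l'.T ≤ t + 2 * (ε * m) + C₁ := by
    have e1 : m / l'.L * l'.T ≤ m / l'.L * (S + 1) :=
      mul_le_mul_of_nonneg_left hT (by positivity)
    have e2 : (m : ℝ) / l'.L * (S + 1) = m * (S / l'.L) + m / l'.L := by ring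
    linarith
  have h6 : ε * m * (1 + 2 * c'') ≤ δ / 2 * t := by
    have e1 : ε * m * (1 + 2 * c'') = δ / 2 * (m * lo) := by
      have : (1 + 2 * c'') ≠ 0 := by linarith
      rw [hε]; field_simp
    rw [e1]
    exact mul_le_mul_of_nonneg_left hmt (by positivity)
  refine h1.trans ?_
  rw [mul_assoc, ← Real.exp_add]
  refine mul_le_mul_of_nonneg_left (h2.trans (Real.exp_le_exp.2 ?_)) hL0.le
  have h7 : c₁ * (m / l'.L * l'.T) ≤ c₁ * (t + 2 * (ε * m) + C₁) :=
    mul_le_mul_of_nonneg_left h5 hc10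
  have h8 : c₁ * (ε * m) ≤ c'' * (ε * m) :=
    mul_le_mul_of_nonneg_right (by linarith) (by positivity)
  have h9 : c₁ * t ≤ (c + δ / 2) * t := mul_le_mul_of_nonneg_right hc2.le ht
  have e : c'' = c + δ := by rw [hδ]; ring
  have h10 : c'' * t = (c + δ / 2) * t + δ / 2 * t := by rw [e]; ring
  have e3 : (m / l'.L + 2) * (1 + c₁ * l'.T) = m / l'.L + c₁ * (m / l'.L * l'.T) +
      2 * (1 + c₁ * l'.T) := by ring
  rw [e3, hC₂, h10]
  linarith

end Tower


/-! ### The strictly ergodic set -/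

section Main

variable {B : Type} [Fintype B] [MetricSpace B] {Adj : B → B → Prop}
variable {Λ : Type*} [MetricSpace Λ] [CompactSpace Λ] {φ : Flow ℝ Λ}

/-- Iterating `Lev.exists_step` along rates decreasing to `c`. -/
lemma exists_tower {f : VS Adj → ℝ} {a : B} (l₀ : Lev f a) {lo c c₀ : ℝ} (hlo : 0 < lo)
    (hf : ∀ x, lo ≤ f x) (hc : 0 ≤ c) (hcc : c < c₀) (h : Real.exp (c₀ * l₀.T) < l₀.W.card) :
    ∃ (l : ℕ → Lev f a) (cs : ℕ → ℝ), (∀ k, Real.exp (cs k * (l k).T) < (l k).W.card) ∧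
      (∀ k, IsStep (cs (k + 1)) (l k) (l (k + 1))) ∧ (∀ k, c ≤ cs k) ∧
      Tendsto cs atTop (𝓝 c) := by
  let cs : ℕ → ℝ := fun k => c + (c₀ - c) * (1 / ((k : ℝ) + 1))
  have hcs : ∀ k, c ≤ cs k := fun k => by
    have : 0 ≤ (c₀ - c) * (1 / ((k : ℝ) + 1)) := mul_nonneg (by linarith) (by positivity)
    simp only [cs]
    linarith
  have hlt : ∀ k, cs (k + 1) < cs k := fun k => by
    have h1 : 1 / (((k + 1 : ℕ) : ℝ) + 1) < 1 / ((k : ℝ) + 1) :=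
      one_div_lt_one_div_of_lt (by positivity) (by push_cast; linarith)
    have h2 : (c₀ - c) * (1 / (((k + 1 : ℕ) : ℝ) + 1)) < (c₀ - c) * (1 / ((k : ℝ) + 1)) :=
      mul_lt_mul_of_pos_left h1 (by linarith)
    simp only [cs]
    linarith
  have hlim : Tendsto cs atTop (𝓝 c) := by
    have := (tendsto_one_div_add_atTop_nhds_zero_nat (𝕜 := ℝ)).const_mul (c₀ - c)
    have := this.const_add c
    simpa [cs] using this
  have hstep : ∀ k (l : {l : Lev f a // Real.exp (cs k * l.T) < l.W.card}),
      ∃ l' : {l : Lev f a // Real.exp (cs (k + 1) * l.T) < l.W.card},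
        IsStep (cs (k + 1)) l.1 l'.1 := by
    intro k l
    obtain ⟨l', h1, h2⟩ := l.1.exists_step hlo hf (hc.trans (hcs (k + 1))) (hlt k) l.2
    exact ⟨⟨l', h1⟩, h2⟩
  choose g hg using hstep
  let s : ∀ k, {l : Lev f a // Real.exp (cs k * l.T) < l.W.card} := fun k =>
    Nat.rec ⟨l₀, by simpa [cs] using h⟩ (fun k l => g k l) k
  exact ⟨fun k => (s k).1, cs, fun k => (s k).2, fun k => hg k (s k), hcs, hlim⟩

variable (P : Susp Adj φ)

lemma Susp.over_inv {Y : Set (VS Adj)} (hY : ∀ n : ℤ, ∀ x ∈ Y, sh n x ∈ Y) (t : ℝ) {z : Λ}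
    (hz : z ∈ P.over Y) : φ t z ∈ P.over Y := by
  obtain ⟨x, hx, s, hs, hsx, rfl⟩ := hz
  have hlo := P.lo_pos
  obtain ⟨n, hn⟩ := exists_nat_gt (|t| / P.lo)
  rw [div_lt_iff₀ hlo] at hn
  set x' := sh (-(n : ℤ)) x with hx'
  have hxx : sh n x' = x := by rw [hx', sh_sh, add_neg_cancel, sh_zero]
  have hbn := le_bs P.r P.lo_le n x'
  set τ := t + s + bs P.r n x' with hτ
  have hτ0 : 0 ≤ τ := by
    have := neg_abs_le t
    linarith
  have e1 : φ t (φ s (P.E x)) = φ τ (P.E x') := by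
    rw [P.flow_eq n x' τ, hxx, hτ, add_sub_cancel_right, φ.map_add]
  obtain ⟨N, hN⟩ := exists_nat_gt (τ / P.lo)
  rw [div_lt_iff₀ hlo] at hN
  obtain ⟨i, -, hi1, hi2⟩ := exists_floor (fun i => bs P.r i x') (bs_zero _ _) hτ0
    (hN.trans_le (le_bs P.r P.lo_le N x'))
  rw [bs_succ] at hi2
  refine ⟨sh i x', hY _ _ (hY _ _ hx), τ - bs P.r i x', by linarith, by linarith, ?_⟩
  rw [e1, P.flow_eq i x' τ]

lemma Susp.isClosed_over {Y : Set (VS Adj)} (hY : IsClosed Y) : IsClosed (P.over Y) := by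
  have hK : IsCompact {p : VS Adj × Icc (0 : ℝ) P.hi | p.1 ∈ Y ∧ p.2.1 ≤ P.r p.1} := by
    refine IsClosed.isCompact ((hY.preimage continuous_fst).inter ?_)
    exact isClosed_le (continuous_subtype_val.comp continuous_snd) (P.contr.comp continuous_fst)
  have hc : Continuous fun p : VS Adj × Icc (0 : ℝ) P.hi => φ p.2.1 (P.E p.1) :=
    φ.continuous (continuous_subtype_val.comp continuous_snd) (P.contE.comp continuous_fst)
  convert (hK.image hc).isClosed using 1
  ext z
  constructor
  · rintro ⟨x, hx, s, hs, hsx, rfl⟩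
    exact ⟨(x, ⟨s, hs, hsx.trans (P.le_hi x)⟩), ⟨hx, hsx⟩, rfl⟩
  · rintro ⟨⟨x, s⟩, ⟨hx, hsx⟩, rfl⟩
    exact ⟨x, hx, s.1, s.2.1, hsx, rfl⟩

lemma Susp.E_sh_mem {Γ : Set Λ} (hΓ : ∀ t : ℝ, ∀ z ∈ Γ, φ t z ∈ Γ) {x : VS Adj} (hx : P.E x ∈ Γ)
    (n : ℤ) : P.E (sh n x) ∈ Γ := by
  obtain ⟨k, rfl | rfl⟩ := n.eq_nat_or_neg
  · rw [← P.step_n]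
    exact hΓ _ _ hx
  · have h := P.step_n k (sh (-(k : ℤ)) x)
    rw [sh_sh, add_neg_cancel, sh_zero] at h
    have h2 := hΓ (-(bs P.r k (sh (-(k : ℤ)) x))) _ hx
    rwa [← h, ← φ.map_add, neg_add_cancel, φ.map_zero_apply] at h2

/-- A nonempty closed invariant set contains a minimal one. -/
lemma exists_minimal_set {G : Set Λ} (hG : IsClosed G) (hne : G.Nonempty)
    (hinv : ∀ t : ℝ, ∀ z ∈ G, φ t z ∈ G) :
    ∃ Γ ⊆ G, IsClosed Γ ∧ Γ.Nonempty ∧ (∀ t : ℝ, ∀ z ∈ Γ, φ t z ∈ Γ) ∧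
      ∀ K ⊆ Γ, IsClosed K → K.Nonempty → (∀ t : ℝ, ∀ z ∈ K, φ t z ∈ K) → K = Γ := by
  let 𝒮 : Set (Set Λ) := {K | K ⊆ G ∧ IsClosed K ∧ K.Nonempty ∧ ∀ t : ℝ, ∀ z ∈ K, φ t z ∈ K}
  obtain ⟨Γ, hΓ⟩ := zorn_superset 𝒮 (by
    intro C hC hchain
    rcases C.eq_empty_or_nonempty with rfl | hCne
    · exact ⟨G, ⟨subset_rfl, hG, hne, hinv⟩, by simp⟩
    · obtain ⟨K₀, hK₀⟩ := hCne
      have : Nonempty C := ⟨⟨K₀, hK₀⟩⟩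
      refine ⟨⋂₀ C, ⟨(sInter_subset_of_mem hK₀).trans (hC hK₀).1,
        isClosed_sInter fun K hK => (hC hK).2.1, ?_, fun t z hz K hK =>
          (hC hK).2.2.2 t z (hz K hK)⟩, fun K hK => sInter_subset_of_mem hK⟩
      exact IsCompact.nonempty_sInter_of_directed_nonempty_isCompact_isClosed
        (IsChain.directedOn hchain.symm)
        (fun K hK => (hC hK).2.2.1) (fun K hK => (hC hK).2.1.isCompact)
        (fun K hK => (hC hK).2.1))
  refine ⟨Γ, hΓ.prop.1, hΓ.prop.2.1, hΓ.prop.2.2.1, hΓ.prop.2.2.2, fun K hK h1 h2 h3 => ?_⟩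
  exact hK.antisymm (hΓ.le_of_le ⟨hK.trans hΓ.prop.1, h1, h2, h3⟩ hK)

variable [MeasurableSpace Λ] [BorelSpace Λ]

/-- Lower bound: the orbit over a point of the limit set carries, at each level, a separated set
indexed by the words of that level. -/
lemma Susp.le_entropy {a : B} {l : ℕ → Lev P.r a} {cs : ℕ → ℝ} {c : ℝ} (hc : 0 ≤ c)
    (hbig : ∀ k, Real.exp (cs k * (l k).T) < (l k).W.card)
    (hstep : ∀ k, IsStep (cs (k + 1)) (l k) (l (k + 1))) (hcs : ∀ k, c ≤ cs k)
    {Γ : Set Λ} (hUE : UEOn φ Γ) (hinv : ∀ t : ℝ, ∀ z ∈ Γ, φ t z ∈ Γ)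
    {x : VS Adj} (hx : x ∈ limSet l) (hxΓ : P.E x ∈ Γ) {μ : Measure Λ} [IsProbabilityMeasure μ]
    (hμ : FlowInvariant φ μ) (hμΓ : μ Γᶜ = 0) :
    (c : EReal) ≤ measEntropy (φ.toFun 1) μ := by
  classical
  have hlo := P.lo_pos
  obtain ⟨ε, hε, hsep⟩ := P.separates
  refine le_measEntropy hUE hμ hμΓ hε fun η hη N => ?_
  obtain ⟨k, hk⟩ := exists_nat_gt ((N + c / η) / P.lo)
  rw [div_lt_iff₀ hlo] at hk
  have hocc : ∀ w : {w // w ∈ (l k).W}, ∃ n : ℤ, wd (sh n x) (l k).L = w := fun w =>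
    (hstep k).occurs (Set.mem_iInter.1 hx (k + 1)) w.2
  choose n hn using hocc
  have hTk : k * P.lo ≤ (l k).T := by
    obtain ⟨w, hw⟩ := (l k).ne
    have h1 := (l k).time (sh (n ⟨w, hw⟩) x) (by rw [hn]; exact hw)
    have h2 := le_bs P.r P.lo_le (l k).L (sh (n ⟨w, hw⟩) x)
    have h3 : (k : ℝ) ≤ (l k).L := by exact_mod_cast (lt_L hstep k).le
    nlinarith
  have hsep' : ∀ w w' : {w // w ∈ (l k).W}, w ≠ w' → ∃ j : ℕ, j ≤ ⌈(l k).T⌉₊ ∧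
      ε < dist ((φ.toFun 1)^[j] (P.E (sh (n w) x))) ((φ.toFun 1)^[j] (P.E (sh (n w') x))) := by
    intro w w' hww
    by_contra hcon
    push Not at hcon
    have h1 := hsep (sh (n w) x) (sh (n w') x) (l k).L ⌈(l k).T⌉₊
      (((l k).time _ (by rw [hn]; exact w.2)).trans (Nat.le_ceil _)) hcon
    rw [hn, hn] at h1
    exact hww (Subtype.ext h1)
  have hinj : Function.Injective fun w : {w // w ∈ (l k).W} => P.E (sh (n w) x) := by
    intro w w' hww
    by_contra hne
    obtain ⟨j, -, hj⟩ := hsep' w w' hne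
    simp only at hww
    rw [hww, dist_self] at hj
    linarith
  have hcard : (Finset.univ.image fun w : {w // w ∈ (l k).W} => P.E (sh (n w) x)).card =
      (l k).W.card := by
    rw [Finset.card_image_of_injective _ hinj, Finset.card_univ, Fintype.card_coe]
  have hTn : (l k).T ≤ ⌈(l k).T⌉₊ := Nat.le_ceil _
  have hT0 := (l k).T_pos hlo P.lo_le
  have hTn' := Nat.ceil_lt_add_one hT0.le
  have hcη : 0 ≤ c / η := by positivity
  refine ⟨⌈(l k).T⌉₊, ?_, Finset.univ.image fun w => P.E (sh (n w) x), ?_, ?_, ?_, ?_⟩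
  · have : (N : ℝ) ≤ ⌈(l k).T⌉₊ := by linarith
    exact_mod_cast this
  · rw [← Finset.card_pos, hcard]
    exact Finset.card_pos.2 (l k).ne
  · intro z hz
    obtain ⟨w, -, rfl⟩ := Finset.mem_image.1 (Finset.mem_coe.1 hz)
    exact P.E_sh_mem hinv hxΓ _
  · intro z hz z' hz' hzz
    obtain ⟨w, -, rfl⟩ := Finset.mem_image.1 (Finset.mem_coe.1 hz)
    obtain ⟨w', -, rfl⟩ := Finset.mem_image.1 (Finset.mem_coe.1 hz')
    exact hsep' w w' fun h => hzz (by rw [h])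
  · rw [hcard]
    have hpos : (0 : ℝ) < (l k).W.card := (Real.exp_pos _).trans (hbig k)
    have h1 := (Real.lt_log_iff_exp_lt hpos).2 (hbig k)
    have h2 : c * (l k).T ≤ cs k * (l k).T := mul_le_mul_of_nonneg_right (hcs k) hT0.le
    have h3 : c ≤ ⌈(l k).T⌉₊ * η := by
      rw [← div_le_iff₀ hη]
      have : (0 : ℝ) ≤ N := by positivity
      linarith
    nlinarith

/-- The strictly ergodic set of entropy `c`, for suspensions of vertex shifts. -/
theorem Susp.exists_set (P : Susp Adj φ) {c : ℝ} (hc : 0 ≤ c) (h : (c : EReal) < flowTopEntropy φ) :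
    ∃ Γ : Set Λ, IsCompact Γ ∧ FlowInvSet φ Γ ∧
      FlowStrictlyErgodicOn φ Γ ∧ flowTopEntropyOn φ Γ = (c : EReal) ∧
      ∀ μ : MeasureTheory.Measure Λ, MeasureTheory.IsProbabilityMeasure μ →
        FlowInvariant φ μ → μ Γᶜ = 0 →
          FlowErgodic φ μ ∧ flowMeasEntropy φ μ = (c : EReal) := by
  obtain ⟨c₀, h1, h2⟩ := EReal.lt_iff_exists_real_btwn.1 h
  have hcc : c < c₀ := EReal.coe_lt_coe_iff.1 h1
  obtain ⟨a, l₀, hl₀⟩ := P.exists_lev (hc.trans hcc.le) h2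
  obtain ⟨l, cs, hbig, hstep, hcs, hlim⟩ := exists_tower l₀ P.lo_pos P.lo_le hc hcc hl₀
  have hYinv : ∀ n : ℤ, ∀ x ∈ limSet l, sh n x ∈ limSet l := fun n x hx => limSet_sh n hx
  have hYne : (P.over (limSet l)).Nonempty := by
    obtain ⟨x, hx⟩ := limSet_nonempty hstep
    exact ⟨_, x, hx, 0, le_rfl, (P.pos x).le, rfl⟩
  obtain ⟨Γ, hΓG, hΓcl, hΓne, hΓinv, hΓmin⟩ := exists_minimal_set (P.isClosed_over isClosed_limSet)
    hYne (fun t z hz => P.over_inv hYinv t hz)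
  have hUE : UEOn φ Γ := by
    intro g
    obtain ⟨J, hJ⟩ := P.ueOn (ub_limSet hstep) g
    refine ⟨J, fun ε hε => ?_⟩
    obtain ⟨T₀, hT₀, hT⟩ := hJ ε hε
    exact ⟨T₀, hT₀, fun T hT' z hz => hT T hT' z (hΓG hz)⟩
  obtain ⟨x, hx, hxΓ⟩ : ∃ x ∈ limSet l, P.E x ∈ Γ := by
    obtain ⟨z, hz⟩ := hΓne
    obtain ⟨x, hx, s, -, -, rfl⟩ := hΓG hz
    have := hΓinv (-s) _ hz
    rw [← φ.map_add, neg_add_cancel, φ.map_zero_apply] at this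
    exact ⟨x, hx, this⟩
  have hupper : topEntropyOn (φ.toFun 1) Γ ≤ (c : EReal) := by
    refine EReal.le_of_forall_lt_iff_le.1 fun c'' hc'' => ?_
    have hcc'' : c < c'' := EReal.coe_lt_coe_iff.1 hc''
    obtain ⟨C, hC, hcount⟩ :=
      tower_count hstep P.contr P.lo_pos P.lo_le hc hcs hlim hcc''
    exact P.entropy_le hYinv (hc.trans hcc''.le) hC hcount hΓG
  have hcont : Continuous (φ.toFun 1) := φ.continuous continuous_const continuous_id
  have hent : ∀ μ : Measure Λ, IsProbabilityMeasure μ → FlowInvariant φ μ → μ Γᶜ = 0 →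
      measEntropy (φ.toFun 1) μ = (c : EReal) ∧ topEntropyOn (φ.toFun 1) Γ = (c : EReal) := by
    intro μ _ hμ hμΓ
    have h3 := P.le_entropy hc hbig hstep hcs hUE hΓinv hx hxΓ hμ hμΓ
    have h4 := measEntropy_le_topEntropyOn hcont (hμ 1) hμΓ
    exact ⟨(h4.trans hupper).antisymm h3, hupper.antisymm (h3.trans h4)⟩
  obtain ⟨μ, hμp, hμ, hμΓ⟩ := ue_exists hUE hΓcl hΓinv hΓne
  refine ⟨Γ, hΓcl.isCompact, fun t => ?_, ⟨fun K hK hKne hKcl hKinv => ?_, μ, ⟨hμp, hμ, hμΓ⟩, ?_⟩,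
    (hent μ hμp hμ hμΓ).2, fun ν hνp hν hνΓ => ⟨ue_ergodic hUE hν hνΓ, (hent ν hνp hν hνΓ).1⟩⟩
  · refine Subset.antisymm ?_ fun z hz => ⟨φ (-t) z, hΓinv _ _ hz, ?_⟩
    · rintro _ ⟨z, hz, rfl⟩
      exact hΓinv t z hz
    · rw [← φ.map_add, add_neg_cancel, φ.map_zero_apply]
  · refine hΓmin K hK hKcl hKne fun t z hz => ?_
    have := mem_image_of_mem (φ.toFun t) hz
    rwa [hKinv t] at this
  · rintro ν ⟨hνp, hν, hνΓ⟩
    exact ue_unique hUE hν hνΓ hμ hμΓ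

end Main

/-! ### Passing from an arbitrary shift of finite type to its vertex shift -/

section Transfer

variable {A : Type*} [MetricSpace A] {Λ : Type*} [MetricSpace Λ] [CompactSpace Λ]

/-- A suspension of a shift of finite type is a suspension of the conjugate vertex shift. -/
lemma exists_susp {B : Type} [Fintype B] [MetricSpace B] {Adj : B → B → Prop}
    {S : Set (ℤ → A)} (hS : fullShift A '' S = S) (hconj : ShiftConj S (vertexShift Adj))
    {ρ : (ℤ → A) → ℝ} (hρc : ContinuousOn ρ S) (hρp : ∀ x ∈ S, 0 < ρ x) {φ : Flow ℝ Λ}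
    (hsusp : IsSuspensionOn (fullShift A) S ρ φ (Set.univ : Set Λ)) :
    Nonempty (Susp Adj φ) := by
  obtain ⟨h, hh⟩ := hconj
  obtain ⟨e, he, -, hstep, hsurj, huniq⟩ := hsusp
  let r : VS Adj → ℝ := fun x => ρ (h.symm x).1
  have hr : Continuous r :=
    (continuousOn_iff_continuous_domRestrict.1 hρc).comp h.symm.continuous
  have hE : Continuous fun x : VS Adj => e (h.symm x).1 :=
    (continuousOn_iff_continuous_domRestrict.1 he).comp h.symm.continuous
  obtain ⟨hi, -, hhi⟩ := exists_bound_vs hr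
  obtain ⟨lo, hlo, hlo'⟩ : ∃ lo > 0, ∀ x, lo ≤ r x := by
    rcases isEmpty_or_nonempty (VS Adj) with hemp | hne
    · exact ⟨1, one_pos, fun x => hemp.elim x⟩
    · obtain ⟨x, -, hx⟩ := isCompact_univ.exists_isMinOn univ_nonempty hr.continuousOn
      exact ⟨r x, hρp _ (h.symm x).2, fun y => hx (mem_univ y)⟩
  refine ⟨⟨fun x => e (h.symm x).1, r, lo, hi, hE, hr, hlo, hlo',
    fun x => (abs_le.1 (hhi x)).2, fun x => ?_, fun z => ?_, fun x y s u h1 h2 h3 h4 h5 => ?_⟩⟩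
  · have h1 := hstep _ (h.symm x).2
    have hmem : fullShift A (h.symm x).1 ∈ S  :=
      hS.subset (mem_image_of_mem _ (h.symm x).2)
    have h2 := hh (h.symm x) ⟨_, hmem⟩ rfl
    rw [h.apply_symm_apply] at h2
    have h3 : h ⟨_, hmem⟩ = sh 1 x := Subtype.ext h2
    have h4 : h.symm (sh 1 x) = ⟨_, hmem⟩ := by rw [← h3, h.symm_apply_apply]
    rw [h4]
    exact h1
  · obtain ⟨x, hx, s, hs, hsx, hz⟩ := hsurj z (mem_univ z)
    refine ⟨h ⟨x, hx⟩, s, hs, ?_, ?_⟩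
    · simpa only [r, h.symm_apply_apply] using hsx
    · rw [h.symm_apply_apply]
      exact hz
  · obtain ⟨h6, h7⟩ := huniq _ (h.symm x).2 _ (h.symm y).2 s u h1 h2 h3 h4 h5
    exact ⟨h.symm.injective (Subtype.ext h6), h7⟩

end Transfer

end EFP

/-- Any suspension flow of a subshift of finite type has entropy
flexibility; moreover every intermediate entropy value is attained on a strictly
ergodic compact invariant subset, whose unique invariant measure has the same
entropy. -/
theorem suspension_of_SFT_entropy_flexibility
    {A : Type*} [Fintype A] [MetricSpace A]
    (S : Set (ℤ → A)) (hSFT : IsSFT S)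
    (ρ : (ℤ → A) → ℝ) (hρc : ContinuousOn ρ S) (hρp : ∀ x ∈ S, 0 < ρ x)
    {Λ : Type*} [MetricSpace Λ] [CompactSpace Λ] [MeasurableSpace Λ] [BorelSpace Λ]
    (φ : Flow ℝ Λ)
    (hsusp : IsSuspensionOn (fullShift A) S ρ φ (Set.univ : Set Λ)) :
    (∀ c : ℝ, 0 ≤ c → (c : EReal) < flowTopEntropy φ →
      ∃ Γ : Set Λ, IsCompact Γ ∧ FlowInvSet φ Γ ∧
        FlowStrictlyErgodicOn φ Γ ∧ flowTopEntropyOn φ Γ = (c : EReal) ∧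
        ∀ μ : MeasureTheory.Measure Λ, MeasureTheory.IsProbabilityMeasure μ →
          FlowInvariant φ μ → μ Γᶜ = 0 →
            FlowErgodic φ μ ∧ flowMeasEntropy φ μ = (c : EReal)) ∧
    FlowEntropyFlexible φ := by
  obtain ⟨⟨_, hS⟩, B, iB, mB, Adj, hconj⟩ := hSFT
  obtain ⟨P⟩ := EFP.exists_susp hS hconj hρc hρp hsusp
  have key := fun (c : ℝ) (hc : 0 ≤ c) (h : (c : EReal) < flowTopEntropy φ) => P.exists_set hc h
  refine ⟨key, fun c hc h => ?_⟩
  obtain ⟨Γ, hΓ, hinv, ⟨-, μ, ⟨hμp, hμ, hμΓ⟩, -⟩, htop, hall⟩ := key c hc h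
  obtain ⟨herg, hent⟩ := hall μ hμp hμ hμΓ
  exact ⟨μ, Γ, hμp, herg, hΓ, hinv, htop, hent⟩
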